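/- arXiv:0902.0275 — 9 statements merged into one kernel-verified Lean document; each statement's English description precedes it below -/
import Mathlib

section
/- Let T > 0 and let u : ℝ × (0,T) → ℝ be a smooth solution of the third-order nonlinear dispersion equation u_t = (u u_x)_{xx} whose support in x is contained in a fixed compact interval for every t ∈ (0,T). Then for every t ∈ (0,T) the two energy identities hold: (d/dt) ∫_ℝ u(x,t)² dx = − ∫_ℝ (u_x(x,t))³ dx and (d/dt) ∫_ℝ (u_x(x,t))² dx = −5 ∫_ℝ u_x(x,t) (u_{xx}(x,t))² dx. -/
open Set Filter MeasureTheory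

open Function Topology

/-!
Differentiating under the integral sign gives `d/dt ∫ u² = 2 ∫ u u_t`, and, after exchanging `∂_t`
with `∂_x` and integrating by parts, `d/dt ∫ u_x² = -2 ∫ u_xx u_t`. Inserting the equation leaves
two integrals in `x` only. Both reduce to `∫ f g g' = -½ ∫ f' g²`, which is integration by parts
applied to `f` and `g²`: take `f = u` and `g = u_x`, respectively `g = u_xx`.
-/

section PartialDerivatives

variable {𝕜 E X Y : Type*} [NontriviallyNormedField 𝕜]
  [NormedAddCommGroup E] [NormedSpace 𝕜 E] [NormedAddCommGroup X] [NormedSpace 𝕜 X]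
  [NormedAddCommGroup Y] [NormedSpace 𝕜 Y] {m n : WithTop ℕ∞}

theorem contDiff_fst_of_contDiffOn_uncurry {u : X → Y → E} {I : Set Y} {t : Y}
    (hu : ContDiffOn 𝕜 n (uncurry u) (univ ×ˢ I)) (ht : t ∈ I) :
    ContDiff 𝕜 n (fun x => u x t) :=
  contDiffOn_univ.1 <| hu.comp (f := fun x => (x, t)) (by fun_prop) fun x hx => ⟨hx, ht⟩

theorem contDiffOn_uncurry_deriv_fst {u : 𝕜 → Y → E} {s : Set (𝕜 × Y)} (hs : IsOpen s)
    (hu : ContDiffOn 𝕜 n (uncurry u) s) (hmn : m + 1 ≤ n) :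
    ContDiffOn 𝕜 m (uncurry fun x t => deriv (fun y => u y t) x) s := by
  intro p hp
  have hu_swap : ContDiffAt 𝕜 n (uncurry fun (q : 𝕜 × Y) y => u y q.2) (p, p.1) :=
    (hu.contDiffAt (hs.mem_nhds hp)).comp (p, p.1)
      (contDiffAt_snd.prodMk (contDiffAt_snd.comp (p, p.1) contDiffAt_fst))
  exact ((hu_swap.fderiv contDiffAt_fst hmn).clm_apply contDiffAt_const).contDiffWithinAt

theorem contDiffOn_uncurry_deriv_snd {u : X → 𝕜 → E} {s : Set (X × 𝕜)} (hs : IsOpen s)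
    (hu : ContDiffOn 𝕜 n (uncurry u) s) (hmn : m + 1 ≤ n) :
    ContDiffOn 𝕜 m (uncurry fun x t => deriv (u x) t) s := by
  intro p hp
  have hu_snd : ContDiffAt 𝕜 n (uncurry fun (q : X × 𝕜) r => u q.1 r) (p, p.2) :=
    (hu.contDiffAt (hs.mem_nhds hp)).comp (p, p.2)
      ((contDiffAt_fst.comp (p, p.2) contDiffAt_fst).prodMk contDiffAt_snd)
  exact ((hu_snd.fderiv contDiffAt_snd hmn).clm_apply contDiffAt_const).contDiffWithinAt

theorem hasDerivAt_comp_prodMk_left {f : 𝕜 × Y → E} {x : 𝕜} {t : Y}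
    (hf : DifferentiableAt 𝕜 f (x, t)) :
    HasDerivAt (fun y => f (y, t)) (fderiv 𝕜 f (x, t) (1, 0)) x :=
  hf.hasFDerivAt.comp_hasDerivAt x ((hasDerivAt_id' x).prodMk (hasDerivAt_const x t))

theorem hasDerivAt_comp_prodMk_right {f : X × 𝕜 → E} {x : X} {t : 𝕜}
    (hf : DifferentiableAt 𝕜 f (x, t)) :
    HasDerivAt (fun s => f (x, s)) (fderiv 𝕜 f (x, t) (0, 1)) t :=
  hf.hasFDerivAt.comp_hasDerivAt t ((hasDerivAt_const t x).prodMk (hasDerivAt_id' t))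

theorem differentiableAt_snd_of_contDiffOn_uncurry {u : X → 𝕜 → E} {I : Set 𝕜} {t : 𝕜}
    (hI : IsOpen I) (hu : ContDiffOn 𝕜 n (uncurry u) (univ ×ˢ I)) (hn : n ≠ 0) (ht : t ∈ I)
    (x : X) : DifferentiableAt 𝕜 (u x) t :=
  (hasDerivAt_comp_prodMk_right <| (hu.contDiffAt <|
    (isOpen_univ.prod hI).mem_nhds ⟨mem_univ x, ht⟩).differentiableAt hn).differentiableAt

theorem deriv_deriv_comm_of_contDiffAt {u : 𝕜 → 𝕜 → E} {x t : 𝕜}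
    (hu : ContDiffAt 𝕜 n (uncurry u) (x, t)) (hn : minSmoothness 𝕜 2 ≤ n) :
    deriv (fun s => deriv (fun y => u y s) x) t = deriv (fun y => deriv (u y) t) x := by
  have hn_two : 2 ≤ n := le_minSmoothness.trans hn
  have hdiff : ∀ᶠ p in 𝓝 (x, t), DifferentiableAt 𝕜 (uncurry u) p :=
    ((hu.of_le hn_two).eventually (by simp)).mono fun p hp => hp.differentiableAt two_ne_zero
  have hfst : (fun s => deriv (fun y => u y s) x) =ᶠ[𝓝 t]
      fun s => fderiv 𝕜 (uncurry u) (x, s) (1, 0) :=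
    ((by fun_prop : ContinuousAt (fun s => (x, s)) t).eventually hdiff).mono
      fun s hs => (hasDerivAt_comp_prodMk_left hs).deriv
  have hsnd : (fun y => deriv (u y) t) =ᶠ[𝓝 x] fun y => fderiv 𝕜 (uncurry u) (y, t) (0, 1) :=
    ((by fun_prop : ContinuousAt (fun y => (y, t)) x).eventually hdiff).mono
      fun y hy => (hasDerivAt_comp_prodMk_right hy).deriv
  have hfderiv : DifferentiableAt 𝕜 (fderiv 𝕜 (uncurry u)) (x, t) :=
    (hu.fderiv_right (m := 1) (one_add_one_eq_two.trans_le hn_two)).differentiableAt one_ne_zero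
  have hfderiv_apply : ∀ v, DifferentiableAt 𝕜 (fun p => fderiv 𝕜 (uncurry u) p v) (x, t) :=
    fun v => hfderiv.clm_apply (differentiableAt_const v)
  calc deriv (fun s => deriv (fun y => u y s) x) t
      = fderiv 𝕜 (fderiv 𝕜 (uncurry u)) (x, t) (0, 1) (1, 0) := by
        rw [hfst.deriv_eq, (hasDerivAt_comp_prodMk_right (hfderiv_apply (1, 0))).deriv]
        simp [fderiv_clm_apply hfderiv]
    _ = fderiv 𝕜 (fderiv 𝕜 (uncurry u)) (x, t) (1, 0) (0, 1) := hu.isSymmSndFDerivAt hn _ _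
    _ = deriv (fun y => deriv (u y) t) x := by
        rw [hsnd.deriv_eq, (hasDerivAt_comp_prodMk_left (hfderiv_apply (0, 1))).deriv]
        simp [fderiv_clm_apply hfderiv]

end PartialDerivatives

theorem hasDerivAt_integral_of_contDiffOn {𝕜 E X : Type*} [RCLike 𝕜] [NormedAddCommGroup E]
    [NormedSpace ℝ E] [NormedSpace 𝕜 E] [NormedAddCommGroup X] [NormedSpace 𝕜 X]
    [MeasurableSpace X] [OpensMeasurableSpace X] {μ : Measure X} [IsFiniteMeasureOnCompacts μ]
    {F : X → 𝕜 → E} {I : Set 𝕜} {K : Set X} {t : 𝕜} (hI : IsOpen I)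
    (hF : ContDiffOn 𝕜 1 (uncurry F) (univ ×ˢ I)) (hK : IsCompact K)
    (hFK : ∀ s ∈ I, ∀ x ∉ K, F x s = 0) (ht : t ∈ I) :
    HasDerivAt (fun s => ∫ x, F x s ∂μ) (∫ x, deriv (F x) t ∂μ) t := by
  have hF' : ContDiffOn 𝕜 0 (uncurry fun x s => deriv (F x) s) (univ ×ˢ I) :=
    contDiffOn_uncurry_deriv_snd (isOpen_univ.prod hI) hF (by simp)
  have hF'K : ∀ s ∈ I, ∀ x ∉ K, deriv (F x) s = 0 := fun s hs x hx => by
    have : F x =ᶠ[𝓝 s] fun _ => 0 :=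
      eventually_of_mem (hI.mem_nhds hs) fun r hr => hFK r hr x hx
    simp [this.deriv_eq]
  have hF_int : ∀ s ∈ I, Integrable (fun x => F x s) μ := fun s hs =>
    (contDiff_fst_of_contDiffOn_uncurry hF hs).continuous.integrable_of_hasCompactSupport
      (.intro hK (hFK s hs))
  have hF'_int : Integrable (fun x => deriv (F x) t) μ :=
    (contDiff_fst_of_contDiffOn_uncurry hF' ht).continuous.integrable_of_hasCompactSupport
      (.intro hK (hF'K t ht))
  obtain ⟨J, hJ, htJ, hJI⟩ := exists_compact_subset hI ht
  obtain ⟨C, hC⟩ := (hK.prod hJ).exists_bound_of_continuousOn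
    (hF'.continuousOn.mono (prod_mono (subset_univ K) hJI))
  have hbound : ∀ x, ∀ s ∈ J, ‖deriv (F x) s‖ ≤ K.indicator (fun _ => C) x := fun x s hs => by
    by_cases hx : x ∈ K
    · simpa [hx] using hC (x, s) ⟨hx, hs⟩
    · simp [hx, hF'K s (hJI hs) x hx]
  have hbound_int : Integrable (K.indicator fun _ => C) μ :=
    (integrable_indicator_iff hK.isClosed.measurableSet).2 (integrableOn_const hK.measure_ne_top)
  have hderiv : ∀ x, ∀ s ∈ J, HasDerivAt (F x) (deriv (F x) s) s := fun x s hs =>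
    (differentiableAt_snd_of_contDiffOn_uncurry hI hF one_ne_zero (hJI hs) x).hasDerivAt
  exact (hasDerivAt_integral_of_dominated_loc_of_deriv_le (F := fun s x => F x s)
    (mem_interior_iff_mem_nhds.1 htJ)
    (eventually_of_mem (hI.mem_nhds ht) fun s hs => (hF_int s hs).aestronglyMeasurable)
    (hF_int t ht) hF'_int.aestronglyMeasurable (.of_forall hbound) hbound_int
    (.of_forall hderiv)).2

theorem hasDerivAt_integral_sq_of_contDiffOn {X : Type*} [NormedAddCommGroup X] [NormedSpace ℝ X]
    [MeasurableSpace X] [OpensMeasurableSpace X] {μ : Measure X} [IsFiniteMeasureOnCompacts μ]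
    {u : X → ℝ → ℝ} {I : Set ℝ} {K : Set X} {t : ℝ} (hI : IsOpen I)
    (hu : ContDiffOn ℝ 1 (uncurry u) (univ ×ˢ I)) (hK : IsCompact K)
    (huK : ∀ s ∈ I, ∀ x ∉ K, u x s = 0) (ht : t ∈ I) :
    HasDerivAt (fun s => ∫ x, u x s ^ 2 ∂μ) (2 * ∫ x, u x t * deriv (u x) t ∂μ) t := by
  have hderiv_sq : ∀ x, deriv (fun s => u x s ^ 2) t = 2 * (u x t * deriv (u x) t) := fun x => by
    have hux := differentiableAt_snd_of_contDiffOn_uncurry hI hu one_ne_zero ht x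
    simp [deriv_fun_pow hux, mul_assoc]
  have h := hasDerivAt_integral_of_contDiffOn (μ := μ) hI (F := fun x s => u x s ^ 2) (hu.pow 2) hK
    (fun s hs x hx => by simp [huK s hs x hx]) ht
  simpa only [hderiv_sq, integral_const_mul] using h

theorem iteratedDeriv_two_mul_deriv_self {𝕜 : Type*} [NontriviallyNormedField 𝕜] {v : 𝕜 → 𝕜}
    (hv : ContDiff 𝕜 3 v) (x : 𝕜) :
    iteratedDeriv 2 (fun y => v y * deriv v y) x =
      v x * iteratedDeriv 3 v x + 3 * (deriv v x * iteratedDeriv 2 v x) := by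
  have hv' : ContDiff 𝕜 2 (deriv v) := ContDiff.deriv' hv
  have hv_two : ContDiff 𝕜 2 v := hv.of_le (by norm_num)
  calc iteratedDeriv 2 (v * deriv v) x
      = ∑ i ∈ Finset.range 3, (Nat.choose 2 i) * iteratedDeriv i v x *
          iteratedDeriv (2 - i) (deriv v) x :=
        iteratedDeriv_mul hv_two.contDiffAt hv'.contDiffAt
    _ = v x * iteratedDeriv 3 v x + 2 * deriv v x * iteratedDeriv 2 v x +
          iteratedDeriv 2 v x * deriv v x := by
        simp [Finset.sum_range_succ, iteratedDeriv_succ']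
    _ = v x * iteratedDeriv 3 v x + 3 * (deriv v x * iteratedDeriv 2 v x) := by ring

theorem integral_mul_deriv_eq_neg_deriv_mul_of_hasCompactSupport {A : Type*} [NormedRing A]
    [NormedAlgebra ℝ A] {f g : ℝ → A} (hf : ContDiff ℝ 1 f) (hg : ContDiff ℝ 1 g)
    (hfc : HasCompactSupport f) :
    ∫ x, f x * deriv g x = -∫ x, deriv f x * g x :=
  integral_mul_deriv_eq_deriv_mul_of_integrable
    (fun x _ => (hf.differentiable one_ne_zero x).hasDerivAt)
    (fun x _ => (hg.differentiable one_ne_zero x).hasDerivAt)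
    ((hf.continuous.mul (hg.continuous_deriv le_rfl)).integrable_of_hasCompactSupport hfc.mul_right)
    (((hf.continuous_deriv le_rfl).mul hg.continuous).integrable_of_hasCompactSupport
      hfc.deriv.mul_right)
    ((hf.continuous.mul hg.continuous).integrable_of_hasCompactSupport hfc.mul_right)

theorem integral_mul_mul_deriv_self {f g : ℝ → ℝ} (hf : ContDiff ℝ 1 f) (hg : ContDiff ℝ 1 g)
    (hfc : HasCompactSupport f) :
    ∫ x, f x * (g x * deriv g x) = -(1 / 2) * ∫ x, deriv f x * g x ^ 2 := by
  have hderiv_sq : ∀ x, deriv (fun y => g y ^ 2) x = 2 * (g x * deriv g x) := fun x => by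
    simp [deriv_fun_pow (hg.differentiable one_ne_zero x), mul_assoc]
  have hparts := integral_mul_deriv_eq_neg_deriv_mul_of_hasCompactSupport hf (hg.pow 2) hfc
  simp only [hderiv_sq, mul_left_comm _ (2 : ℝ), integral_const_mul] at hparts
  linarith

theorem integral_mul_iteratedDeriv_two_mul_deriv_self {v : ℝ → ℝ}
    (hv : ContDiff ℝ 3 v) (hvc : HasCompactSupport v) :
    ∫ x, v x * iteratedDeriv 2 (fun y => v y * deriv v y) x =
      -(1 / 2) * ∫ x, deriv v x ^ 3 := by
  have hv_one : ContDiff ℝ 1 v := hv.of_le (by norm_num)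
  have hv' : ContDiff ℝ 2 (deriv v) := ContDiff.deriv' hv
  have hv'_one : ContDiff ℝ 1 (deriv v) := hv'.of_le (by norm_num)
  have hw : ContDiff ℝ 2 (fun y => v y * deriv v y) := (hv.of_le (by norm_num)).mul hv'
  calc ∫ x, v x * iteratedDeriv 2 (fun y => v y * deriv v y) x
      = -∫ x, deriv v x * deriv (fun y => v y * deriv v y) x := by
        simp only [iteratedDeriv_succ, iteratedDeriv_zero]
        exact integral_mul_deriv_eq_neg_deriv_mul_of_hasCompactSupport hv_one
          (ContDiff.deriv' hw) hvc
    _ = ∫ x, deriv (deriv v) x * (v x * deriv v x) := by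
        rw [integral_mul_deriv_eq_neg_deriv_mul_of_hasCompactSupport hv'_one
          (hw.of_le (by norm_num)) hvc.deriv, neg_neg]
    _ = ∫ x, v x * (deriv v x * deriv (deriv v) x) := by congr with x; ring
    _ = -(1 / 2) * ∫ x, deriv v x * deriv v x ^ 2 := integral_mul_mul_deriv_self hv_one hv'_one hvc
    _ = -(1 / 2) * ∫ x, deriv v x ^ 3 := by simp only [← pow_succ']

theorem integral_iteratedDeriv_two_mul_iteratedDeriv_two_mul_deriv_self {v : ℝ → ℝ}
    (hv : ContDiff ℝ 3 v) (hvc : HasCompactSupport v) :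
    ∫ x, iteratedDeriv 2 v x * iteratedDeriv 2 (fun y => v y * deriv v y) x =
      5 / 2 * ∫ x, deriv v x * iteratedDeriv 2 v x ^ 2 := by
  have hv_one : ContDiff ℝ 1 v := hv.of_le (by norm_num)
  have hv' : Continuous (deriv v) := hv_one.continuous_deriv le_rfl
  have hv'' : ContDiff ℝ 1 (iteratedDeriv 2 v) :=
    (contDiff_nat_succ_iff_contDiff_one_iteratedDeriv.1 hv).2
  have hint_top : Integrable fun x => v x * (iteratedDeriv 2 v x * deriv (iteratedDeriv 2 v) x) :=
    (hv.continuous.mul (hv''.continuous.mul (hv''.continuous_deriv le_rfl)))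
      |>.integrable_of_hasCompactSupport hvc.mul_right
  have hint_low : Integrable fun x => deriv v x * iteratedDeriv 2 v x ^ 2 :=
    (hv'.mul (hv''.continuous.pow 2)).integrable_of_hasCompactSupport hvc.deriv.mul_right
  calc ∫ x, iteratedDeriv 2 v x * iteratedDeriv 2 (fun y => v y * deriv v y) x
      = ∫ x, v x * (iteratedDeriv 2 v x * deriv (iteratedDeriv 2 v) x) +
          3 * (deriv v x * iteratedDeriv 2 v x ^ 2) := by
        congr with x
        rw [iteratedDeriv_two_mul_deriv_self hv, ← iteratedDeriv_succ]
        ring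
    _ = -(1 / 2) * (∫ x, deriv v x * iteratedDeriv 2 v x ^ 2) +
          3 * ∫ x, deriv v x * iteratedDeriv 2 v x ^ 2 := by
        rw [integral_add hint_top (hint_low.const_mul 3), integral_const_mul,
          integral_mul_mul_deriv_self hv_one hv'' hvc]
    _ = 5 / 2 * ∫ x, deriv v x * iteratedDeriv 2 v x ^ 2 := by ring

theorem hasDerivAt_integral_deriv_sq_of_contDiffOn {u : ℝ → ℝ → ℝ} {I K : Set ℝ} {t : ℝ}
    (hI : IsOpen I) (hu : ContDiffOn ℝ 2 (uncurry u) (univ ×ˢ I)) (hK : IsCompact K)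
    (huK : ∀ s ∈ I, ∀ x ∉ K, u x s = 0) (ht : t ∈ I) :
    HasDerivAt (fun s => ∫ x, deriv (fun y => u y s) x ^ 2)
      (-2 * ∫ x, iteratedDeriv 2 (fun y => u y t) x * deriv (u x) t) t := by
  have hopen : IsOpen (univ ×ˢ I : Set (ℝ × ℝ)) := isOpen_univ.prod hI
  have hux : ContDiffOn ℝ 1 (uncurry fun x s => deriv (fun y => u y s) x) (univ ×ˢ I) :=
    contDiffOn_uncurry_deriv_fst hopen hu one_add_one_eq_two.le
  have hut : ContDiffOn ℝ 1 (uncurry fun x s => deriv (u x) s) (univ ×ˢ I) :=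
    contDiffOn_uncurry_deriv_snd hopen hu one_add_one_eq_two.le
  have huxK : ∀ s ∈ I, ∀ x ∉ K, deriv (fun y => u y s) x = 0 := fun s hs x hx =>
    deriv_of_notMem_tsupport fun h =>
      hx (closure_minimal (support_subset_iff'.2 (huK s hs)) hK.isClosed h)
  refine (hasDerivAt_integral_sq_of_contDiffOn (μ := volume) hI hux hK huxK ht).congr_deriv ?_
  calc 2 * ∫ x, deriv (fun y => u y t) x * deriv (fun s => deriv (fun y => u y s) x) t
      = 2 * ∫ x, deriv (fun y => u y t) x * deriv (fun y => deriv (u y) t) x := by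
        congr with x
        rw [deriv_deriv_comm_of_contDiffAt (hu.contDiffAt (hopen.mem_nhds ⟨mem_univ x, ht⟩))
          (by simp)]
    _ = 2 * -∫ x, deriv (deriv fun y => u y t) x * deriv (u x) t := by
        rw [integral_mul_deriv_eq_neg_deriv_mul_of_hasCompactSupport
          (contDiff_fst_of_contDiffOn_uncurry hux ht)
          (contDiff_fst_of_contDiffOn_uncurry hut ht) (.intro hK (huxK t ht))]
    _ = -2 * ∫ x, iteratedDeriv 2 (fun y => u y t) x * deriv (u x) t := by
        simp only [iteratedDeriv_succ, iteratedDeriv_zero]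
        ring

theorem stmt0_general {u : ℝ → ℝ → ℝ} {I K : Set ℝ} (hI : IsOpen I)
    (hu : ContDiffOn ℝ 3 (uncurry u) (univ ×ˢ I)) (hK : IsCompact K)
    (huK : ∀ t ∈ I, ∀ x ∉ K, u x t = 0)
    (hpde : ∀ x, ∀ t ∈ I, deriv (u x) t =
      iteratedDeriv 2 (fun y => u y t * deriv (fun z => u z t) y) x) :
    ∀ t ∈ I,
      HasDerivAt (fun s => ∫ x, u x s ^ 2) (-∫ x, deriv (fun y => u y t) x ^ 3) t ∧
      HasDerivAt (fun s => ∫ x, deriv (fun y => u y s) x ^ 2)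
        (-5 * ∫ x, deriv (fun y => u y t) x * iteratedDeriv 2 (fun y => u y t) x ^ 2) t := by
  intro t ht
  have hut : ContDiff ℝ 3 (fun x => u x t) := contDiff_fst_of_contDiffOn_uncurry hu ht
  have hutc : HasCompactSupport (fun x => u x t) := .intro hK (huK t ht)
  constructor
  · refine (hasDerivAt_integral_sq_of_contDiffOn hI (hu.of_le (by norm_num)) hK huK
      ht).congr_deriv ?_
    simp only [hpde _ t ht, integral_mul_iteratedDeriv_two_mul_deriv_self hut hutc]
    ring
  · refine (hasDerivAt_integral_deriv_sq_of_contDiffOn hI (hu.of_le (by norm_num)) hK huK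
      ht).congr_deriv ?_
    simp only [hpde _ t ht,
      integral_iteratedDeriv_two_mul_iteratedDeriv_two_mul_deriv_self hut hutc]
    ring

/-- energy identities for smooth, compactly supported (in x)
solutions of the NDE `u_t = (u u_x)_{xx}` on `ℝ × (0,T)`. -/
theorem stmt0
    (T : ℝ) (hT : 0 < T)
    (u : ℝ → ℝ → ℝ)
    (hsmooth : ContDiff ℝ (⊤ : ℕ∞) (fun p : ℝ × ℝ => u p.1 p.2))
    (R : ℝ) (hR : 0 < R)
    (hsupp : ∀ t ∈ Ioo 0 T, ∀ x : ℝ, R < |x| → u x t = 0)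
    (hpde : ∀ x : ℝ, ∀ t ∈ Ioo 0 T,
      deriv (fun s => u x s) t =
        iteratedDeriv 2 (fun y => u y t * deriv (fun z => u z t) y) x) :
    ∀ t ∈ Ioo 0 T,
      (HasDerivAt (fun s => ∫ x : ℝ, (u x s) ^ 2)
        (-∫ x : ℝ, (deriv (fun y => u y t) x) ^ 3) t) ∧
      (HasDerivAt (fun s => ∫ x : ℝ, (deriv (fun y => u y s) x) ^ 2)
        (-5 * ∫ x : ℝ, deriv (fun y => u y t) x *
          (iteratedDeriv 2 (fun y => u y t) x) ^ 2) t) := by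
  exact stmt0_general isOpen_Ioo (hsmooth.of_le (by norm_cast)).contDiffOn
    (isCompact_Icc (a := -R) (b := R))
    (fun t ht x hx => hsupp t ht x (by simpa [← abs_le] using hx)) hpde
end

section
/- Let C > 1, L > 0, T > 0, and let u, v : ℝ × [0,T] → ℝ be smooth functions that are L-periodic in x, satisfy 1/C ≤ u(x,t) ≤ C and 1/C ≤ v(x,t) ≤ C for all (x,t), and both solve the NDE u_t = u u_{xxx} on ℝ × [0,T]. If u(x,0) = v(x,0) for all x, then u ≡ v on ℝ × [0,T]. -/
open Set Filter

/-!
Weight the `L²` energy of `w = u - v` by `1 / u`. Since `u_t = u u_xxx` and `v_t = v v_xxx`,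
`∂ₜ (w² / u) = 2 w w_xxx + (2 v_xxx - u_xxx) w² / u`: the weight strips the coefficient `u` off the
top-order term, which then integrates to zero over a period because `∂ₓ³` is skew-adjoint on
periodic functions. The remaining factor `2 v_xxx - u_xxx` is bounded on the compact space-time
cell, so Grönwall's inequality controls the energy by its initial value.
-/

open Function (Periodic uncurry)
open scoped Topology

section IteratedDeriv

variable {𝕜 E F : Type*} [NontriviallyNormedField 𝕜] [NormedAddCommGroup E] [NormedSpace 𝕜 E]
  [NormedAddCommGroup F] [NormedSpace 𝕜 F]

lemma contDiff_deriv_fst {f : 𝕜 → E → F} {m : WithTop ℕ∞} (hf : ContDiff 𝕜 (m + 1) (uncurry f)) :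
    ContDiff 𝕜 m (uncurry fun x y ↦ deriv (fun z ↦ f z y) x) := by
  have hswap : ContDiff 𝕜 (m + 1) (uncurry fun (p : 𝕜 × E) z ↦ f z p.2) :=
    hf.comp (contDiff_snd.prodMk contDiff_fst.snd)
  exact hswap.fderiv_apply contDiff_fst contDiff_const le_rfl

lemma contDiff_iteratedDeriv_fst {f : 𝕜 → E → F} {m : WithTop ℕ∞} (n : ℕ)
    (hf : ContDiff 𝕜 (m + n) (uncurry f)) :
    ContDiff 𝕜 m (uncurry fun x y ↦ iteratedDeriv n (fun z ↦ f z y) x) := by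
  induction n generalizing m with
  | zero => simpa using hf
  | succ n ih =>
    simp only [iteratedDeriv_succ]
    exact contDiff_deriv_fst (ih (by convert hf using 1; push_cast; ring))

lemma periodic_iteratedDeriv {f : 𝕜 → F} {c : 𝕜} (hf : Periodic f c) (n : ℕ) :
    Periodic (iteratedDeriv n f) c := fun x ↦ by
  rw [← congrFun (iteratedDeriv_comp_add_const n f c) x, funext hf]

lemma periodic_deriv {f : 𝕜 → F} {c : 𝕜} (hf : Periodic f c) : Periodic (deriv f) c := by
  simpa only [iteratedDeriv_one] using periodic_iteratedDeriv hf 1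

end IteratedDeriv

section PeriodicIntegral

variable {A : Type*} [NormedRing A] [NormedAlgebra ℝ A] [CompleteSpace A] {f g : ℝ → A} {L : ℝ}

lemma integral_mul_deriv_of_periodic (hf : ContDiff ℝ 1 f) (hg : ContDiff ℝ 1 g)
    (hfL : Periodic f L) (hgL : Periodic g L) (a : ℝ) :
    ∫ x in a..a + L, f x * deriv g x = -∫ x in a..a + L, deriv f x * g x := by
  rw [intervalIntegral.integral_mul_deriv_eq_deriv_mul
    (fun x _ ↦ (hf.differentiable one_ne_zero x).hasDerivAt)
    (fun x _ ↦ (hg.differentiable one_ne_zero x).hasDerivAt)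
    ((hf.continuous_deriv le_rfl).intervalIntegrable _ _)
    ((hg.continuous_deriv le_rfl).intervalIntegrable _ _), hfL a, hgL a, sub_self, zero_sub]

lemma integral_mul_iteratedDeriv_of_periodic (n : ℕ) (hf : ContDiff ℝ n f) (hg : ContDiff ℝ n g)
    (hfL : Periodic f L) (hgL : Periodic g L) (a : ℝ) :
    ∫ x in a..a + L, f x * iteratedDeriv n g x =
      (-1) ^ n * ∫ x in a..a + L, iteratedDeriv n f x * g x := by
  induction n generalizing f with
  | zero => simp
  | succ n ih =>
    have hg' : ContDiff ℝ 1 (iteratedDeriv n g) := by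
      rw [iteratedDeriv_eq_iterate]
      exact ContDiff.iterate_deriv' 1 n (by rwa [add_comm 1 n])
    have hf' : ContDiff ℝ n (deriv f) := hf.deriv'
    calc ∫ x in a..a + L, f x * iteratedDeriv (n + 1) g x
        = -∫ x in a..a + L, deriv f x * iteratedDeriv n g x := by
          rw [iteratedDeriv_succ]
          exact integral_mul_deriv_of_periodic (hf.of_le (by simp)) hg' hfL
            (periodic_iteratedDeriv hgL n) a
      _ = (-1) ^ (n + 1) * ∫ x in a..a + L, iteratedDeriv (n + 1) f x * g x := by
          rw [ih hf' (hg.of_le (by simp)) (periodic_deriv hfL), iteratedDeriv_succ',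
            pow_succ', neg_one_mul, neg_mul]

end PeriodicIntegral

lemma integral_mul_iteratedDeriv_self_of_odd {A : Type*} [NormedCommRing A] [NormedAlgebra ℝ A]
    [CompleteSpace A] {f : ℝ → A} {L : ℝ} {n : ℕ} (hn : Odd n) (hf : ContDiff ℝ n f)
    (hfL : Periodic f L) (a : ℝ) : ∫ x in a..a + L, f x * iteratedDeriv n f x = 0 := by
  have hskew := integral_mul_iteratedDeriv_of_periodic n hf hf hfL hfL a
  simp only [hn.neg_one_pow, neg_one_mul, mul_comm (iteratedDeriv n f _)] at hskew
  have : IsAddTorsionFree A := .of_isTorsionFree ℝ A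
  exact self_eq_neg.1 hskew

section ParametricIntegral

variable {E : Type*} [NormedAddCommGroup E] [NormedSpace ℝ E]

lemma continuousOn_intervalIntegral_of_isCompact {X : Type*} [TopologicalSpace X]
    [FirstCountableTopology X] {F : ℝ → X → E} {a b : ℝ} {s : Set X} (hs : IsCompact s)
    (hF : ContinuousOn (uncurry F) (uIcc a b ×ˢ s)) :
    ContinuousOn (fun t ↦ ∫ x in a..b, F x t) s := by
  obtain ⟨M, hM⟩ := (isCompact_uIcc.prod hs).exists_bound_of_continuousOn hF
  intro t ht
  refine intervalIntegral.continuousWithinAt_of_dominated_interval (bound := fun _ ↦ M) ?_ ?_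
    intervalIntegrable_const ?_
  · filter_upwards [self_mem_nhdsWithin] with r hr
    exact (hF.uncurry_right r hr).intervalIntegrable.def'.aestronglyMeasurable
  · filter_upwards [self_mem_nhdsWithin] with r hr
    exact .of_forall fun x hx ↦ hM (x, r) ⟨uIoc_subset_uIcc hx, hr⟩
  · exact .of_forall fun x hx ↦ hF.uncurry_left x (uIoc_subset_uIcc hx) t ht

lemma hasDerivAt_intervalIntegral_of_isCompact {F F' : ℝ → ℝ → E} {a b t : ℝ} {s : Set ℝ}
    (hs : IsCompact s) (hst : s ∈ 𝓝 t)
    (hF : ∀ r ∈ s, ContinuousOn (fun x ↦ F x r) (uIcc a b))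
    (hF' : ContinuousOn (uncurry F') (uIcc a b ×ˢ s))
    (hderiv : ∀ x ∈ uIcc a b, ∀ r ∈ s, HasDerivAt (F x) (F' x r) r) :
    HasDerivAt (fun r ↦ ∫ x in a..b, F x r) (∫ x in a..b, F' x t) t := by
  obtain ⟨M, hM⟩ := (isCompact_uIcc.prod hs).exists_bound_of_continuousOn hF'
  have ht : t ∈ s := mem_of_mem_nhds hst
  refine (intervalIntegral.hasDerivAt_integral_of_dominated_loc_of_deriv_le
    (F := fun r x ↦ F x r) (F' := fun r x ↦ F' x r) (bound := fun _ ↦ M) hst ?_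
    (hF t ht).intervalIntegrable
    (hF'.uncurry_right t ht).intervalIntegrable.def'.aestronglyMeasurable ?_
    intervalIntegrable_const ?_).2
  · filter_upwards [hst] with r hr
    exact (hF r hr).intervalIntegrable.def'.aestronglyMeasurable
  · exact .of_forall fun x hx r hr ↦ hM (x, r) ⟨uIoc_subset_uIcc hx, hr⟩
  · exact .of_forall fun x hx r hr ↦ hderiv x (uIoc_subset_uIcc hx) r hr

end ParametricIntegral

-- Mathlib's Grönwall inequalities ask for a right derivative at `a` as well.
lemma le_mul_exp_of_hasDerivAt_le {f f' : ℝ → ℝ} {a b K : ℝ} (hf : ContinuousOn f (Icc a b))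
    (hf' : ∀ t ∈ Ioo a b, HasDerivAt f (f' t) t) (hle : ∀ t ∈ Ioo a b, f' t ≤ K * f t) :
    ∀ t ∈ Icc a b, f t ≤ f a * Real.exp (K * (t - a)) := by
  intro t ht
  have hderiv : ∀ s ∈ Ioo a b, HasDerivAt (fun r ↦ Real.exp (-(K * (r - a))) * f r)
      (Real.exp (-(K * (s - a))) * (f' s - K * f s)) s := fun s hs ↦ by
    have hexp := (((hasDerivAt_id s).sub_const a).const_mul K).neg.exp
    exact (hexp.mul (hf' s hs)).congr_deriv (by simp only [Pi.neg_apply, id]; ring)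
  have hanti : AntitoneOn (fun r ↦ Real.exp (-(K * (r - a))) * f r) (Icc a b) := by
    refine antitoneOn_of_hasDerivWithinAt_nonpos (convex_Icc a b) (by fun_prop)
      (f' := fun s ↦ Real.exp (-(K * (s - a))) * (f' s - K * f s)) ?_ ?_ <;>
      rw [interior_Icc] <;> intro s hs
    · exact (hderiv s hs).hasDerivWithinAt
    · exact mul_nonpos_of_nonneg_of_nonpos (Real.exp_pos _).le (sub_nonpos.2 (hle s hs))
  have hcmp := hanti (left_mem_Icc.2 (ht.1.trans ht.2)) ht ht.1
  simp only [sub_self, mul_zero, neg_zero, Real.exp_zero, one_mul, Real.exp_neg] at hcmp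
  rwa [inv_mul_le_iff₀' (Real.exp_pos _)] at hcmp

lemma hasDerivAt_sq_sub_div {𝕜 : Type*} [NontriviallyNormedField 𝕜] {f g : 𝕜 → 𝕜} {p q t : 𝕜}
    (hf : HasDerivAt f (f t * p) t) (hg : HasDerivAt g (g t * q) t) (hft : f t ≠ 0) :
    HasDerivAt (fun s ↦ (f s - g s) ^ 2 / f s)
      (2 * ((f t - g t) * (p - q)) + (2 * q - p) * ((f t - g t) ^ 2 / f t)) t := by
  refine (((hf.fun_sub hg).fun_pow 2).fun_div hf hft).congr_deriv ?_
  field_simp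
  ring

/-- The spatial derivative `u_xxx` of a function `u x t` of space and time. -/
noncomputable def uxxx (u : ℝ → ℝ → ℝ) (x t : ℝ) : ℝ := iteratedDeriv 3 (fun y ↦ u y t) x

/-- A classical solution of `u_t = u u_xxx` on `ℝ × [0, T]` that is `L`-periodic in space. It is
taken to be `C³` on the whole plane, so that `deriv` is the time derivative at `t = 0` and `t = T`
too. -/
structure IsPeriodicSolution (L T : ℝ) (u : ℝ → ℝ → ℝ) : Prop where
  contDiff : ContDiff ℝ 3 (uncurry u)
  periodic : ∀ t ∈ Icc 0 T, Periodic (fun x ↦ u x t) L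
  deriv_eq : ∀ x, ∀ t ∈ Icc 0 T, deriv (u x) t = u x t * uxxx u x t

namespace IsPeriodicSolution

variable {L T : ℝ} {u v : ℝ → ℝ → ℝ}

lemma continuous (hu : IsPeriodicSolution L T u) : Continuous (uncurry u) :=
  hu.contDiff.continuous

lemma continuous_uxxx (hu : IsPeriodicSolution L T u) : Continuous (uncurry (uxxx u)) :=
  (contDiff_iteratedDeriv_fst (m := 0) 3 (by simpa using hu.contDiff)).continuous

lemma contDiff_space (hu : IsPeriodicSolution L T u) (t : ℝ) : ContDiff ℝ 3 fun x ↦ u x t :=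
  hu.contDiff.comp (contDiff_prodMk_left t)

lemma hasDerivAt_time (hu : IsPeriodicSolution L T u) (x : ℝ) {t : ℝ} (ht : t ∈ Icc 0 T) :
    HasDerivAt (u x) (u x t * uxxx u x t) t := by
  have hdiff : ContDiff ℝ 3 (u x) := hu.contDiff.comp (contDiff_prodMk_right x)
  rw [← hu.deriv_eq x t ht]
  exact (hdiff.differentiable three_ne_zero t).hasDerivAt

lemma integral_sub_mul_uxxx_sub (hu : IsPeriodicSolution L T u) (hv : IsPeriodicSolution L T v)
    (a : ℝ) {t : ℝ} (ht : t ∈ Icc 0 T) :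
    ∫ x in a..a + L, (u x t - v x t) * (uxxx u x t - uxxx v x t) = 0 := by
  have huv := (hu.contDiff_space t).sub (hv.contDiff_space t)
  rw [← integral_mul_iteratedDeriv_self_of_odd (n := 3) (by decide) huv
    ((hu.periodic t ht).sub (hv.periodic t ht)) a]
  congr 1 with x
  rw [iteratedDeriv_fun_sub (hu.contDiff_space t).contDiffAt (hv.contDiff_space t).contDiffAt]
  rfl

end IsPeriodicSolution

/-- The density `(u - v)² / u` of the energy that controls the difference of two solutions `u` and
`v`; it is meant for `u > 0`. -/
noncomputable def energyDensity (u v : ℝ → ℝ → ℝ) (x t : ℝ) : ℝ := (u x t - v x t) ^ 2 / u x t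

/-- The energy of the difference of two solutions on the period cell `[a, a + L]`, i.e. twice the
paper's `½ ∫ w² / u` with `w = u - v`. -/
noncomputable def weightedEnergy (L : ℝ) (u v : ℝ → ℝ → ℝ) (a t : ℝ) : ℝ :=
  ∫ x in a..a + L, energyDensity u v x t

section Energy

variable {L T : ℝ} {u v : ℝ → ℝ → ℝ}

lemma energyDensity_nonneg {x t : ℝ} (hpos : 0 < u x t) : 0 ≤ energyDensity u v x t :=
  div_nonneg (sq_nonneg _) hpos.le

lemma energyDensity_pos {x t : ℝ} (hpos : 0 < u x t) (hne : u x t ≠ v x t) :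
    0 < energyDensity u v x t :=
  div_pos (sq_pos_of_ne_zero (sub_ne_zero.2 hne)) hpos

lemma weightedEnergy_eq_zero_of_eq {a t : ℝ} (h : ∀ x, u x t = v x t) :
    weightedEnergy L u v a t = 0 := by
  simp [weightedEnergy, energyDensity, h]

variable (hu : IsPeriodicSolution L T u) (hv : IsPeriodicSolution L T v)
include hu hv

lemma continuous_two_mul_uxxx_sub :
    Continuous (uncurry fun x t ↦ 2 * uxxx v x t - uxxx u x t) :=
  (continuous_const.mul hv.continuous_uxxx).sub hu.continuous_uxxx

variable (hpos : ∀ x, ∀ t ∈ Icc 0 T, 0 < u x t)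
include hpos

lemma continuousOn_energyDensity :
    ContinuousOn (uncurry (energyDensity u v)) (univ ×ˢ Icc 0 T) :=
  ((hu.continuous.sub hv.continuous).pow 2).continuousOn.div hu.continuous.continuousOn
    fun p hp ↦ (hpos p.1 p.2 hp.2).ne'

lemma hasDerivAt_energyDensity (x : ℝ) {t : ℝ} (ht : t ∈ Icc 0 T) :
    HasDerivAt (energyDensity u v x)
      (2 * ((u x t - v x t) * (uxxx u x t - uxxx v x t)) +
        (2 * uxxx v x t - uxxx u x t) * energyDensity u v x t) t :=
  hasDerivAt_sq_sub_div (hu.hasDerivAt_time x ht) (hv.hasDerivAt_time x ht) (hpos x t ht).ne'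

lemma hasDerivAt_weightedEnergy (a : ℝ) {t : ℝ} (ht : t ∈ Ioo 0 T) :
    HasDerivAt (weightedEnergy L u v a)
      (∫ x in a..a + L, (2 * uxxx v x t - uxxx u x t) * energyDensity u v x t) t := by
  have htT : t ∈ Icc 0 T := Ioo_subset_Icc_self ht
  have hdensity := continuousOn_energyDensity hu hv hpos
  have htop : Continuous (uncurry fun x r ↦
      2 * ((u x r - v x r) * (uxxx u x r - uxxx v x r))) :=
    continuous_const.mul ((hu.continuous.sub hv.continuous).mul
      (hu.continuous_uxxx.sub hv.continuous_uxxx))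
  have hrest : ContinuousOn (uncurry fun x r ↦
      (2 * uxxx v x r - uxxx u x r) * energyDensity u v x r) (univ ×ˢ Icc 0 T) :=
    (continuous_two_mul_uxxx_sub hu hv).continuousOn.mul hdensity
  have hderiv := hasDerivAt_intervalIntegral_of_isCompact (a := a) (b := a + L)
    (F' := fun x r ↦ 2 * ((u x r - v x r) * (uxxx u x r - uxxx v x r)) +
      (2 * uxxx v x r - uxxx u x r) * energyDensity u v x r)
    isCompact_Icc (Icc_mem_nhds ht.1 ht.2)
    (fun r hr ↦ (hdensity.uncurry_right r hr).mono (subset_univ _))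
    ((htop.continuousOn.add hrest).mono (prod_mono_left (subset_univ _)))
    (fun x _ r hr ↦ hasDerivAt_energyDensity hu hv hpos x hr)
  refine hderiv.congr_deriv ?_
  rw [intervalIntegral.integral_add ((htop.uncurry_right t).intervalIntegrable _ _)
      ((hrest.uncurry_right t htT).mono (subset_univ _)).intervalIntegrable,
    intervalIntegral.integral_const_mul, hu.integral_sub_mul_uxxx_sub hv a htT, mul_zero, zero_add]

lemma exists_weightedEnergy_le_mul_exp (hL : 0 ≤ L) (a : ℝ) : ∃ K, ∀ t ∈ Icc 0 T,
    weightedEnergy L u v a t ≤ weightedEnergy L u v a 0 * Real.exp (K * t) := by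
  have hcoeff := continuous_two_mul_uxxx_sub hu hv
  have hdensity := continuousOn_energyDensity hu hv hpos
  obtain ⟨K, hK⟩ := (isCompact_Icc.prod isCompact_Icc :
    IsCompact (Icc a (a + L) ×ˢ Icc 0 T)).exists_bound_of_continuousOn hcoeff.continuousOn
  have hcont : ContinuousOn (weightedEnergy L u v a) (Icc 0 T) :=
    continuousOn_intervalIntegral_of_isCompact isCompact_Icc
      (hdensity.mono (prod_mono_left (subset_univ _)))
  have hgrowth : ∀ t ∈ Ioo 0 T,
      ∫ x in a..a + L, (2 * uxxx v x t - uxxx u x t) * energyDensity u v x t ≤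
        K * weightedEnergy L u v a t := fun t ht ↦ by
    have htT : t ∈ Icc 0 T := Ioo_subset_Icc_self ht
    have hslice : ContinuousOn (fun x ↦ energyDensity u v x t) (uIcc a (a + L)) :=
      (hdensity.uncurry_right t htT).mono (subset_univ _)
    rw [weightedEnergy, ← intervalIntegral.integral_const_mul]
    refine intervalIntegral.integral_mono_on (le_add_of_nonneg_right hL)
      ((hcoeff.uncurry_right t).continuousOn.mul hslice).intervalIntegrable
      (hslice.intervalIntegrable.const_mul K) fun x hx ↦ ?_
    exact mul_le_mul_of_nonneg_right ((le_abs_self _).trans (hK (x, t) ⟨hx, htT⟩))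
      (energyDensity_nonneg (hpos x t htT))
  exact ⟨K, fun t ht ↦ by
    simpa only [sub_zero] using le_mul_exp_of_hasDerivAt_le hcont
      (fun t ht ↦ hasDerivAt_weightedEnergy hu hv hpos a ht) hgrowth t ht⟩

lemma weightedEnergy_pos_of_ne (hL : 0 < L) {a t : ℝ} (ht : t ∈ Icc 0 T) (hne : u a t ≠ v a t) :
    0 < weightedEnergy L u v a t := by
  have haL : a < a + L := lt_add_of_pos_right a hL
  exact intervalIntegral.integral_pos haL
    (((continuousOn_energyDensity hu hv hpos).uncurry_right t ht).mono (subset_univ _))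
    (fun x _ ↦ energyDensity_nonneg (hpos x t ht))
    ⟨a, left_mem_Icc.2 haL.le, energyDensity_pos (hpos a t ht) hne⟩

end Energy

theorem stmt1_general {L T : ℝ} (hL : 0 < L) {u v : ℝ → ℝ → ℝ}
    (hu : IsPeriodicSolution L T u) (hv : IsPeriodicSolution L T v)
    (hpos : ∀ x, ∀ t ∈ Icc 0 T, 0 < u x t) (hinit : ∀ x, u x 0 = v x 0) :
    ∀ x, ∀ t ∈ Icc 0 T, u x t = v x t := by
  intro x t ht
  by_contra hne
  obtain ⟨K, hK⟩ := exists_weightedEnergy_le_mul_exp hu hv hpos hL.le x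
  have hle : weightedEnergy L u v x t ≤ 0 := by
    simpa only [weightedEnergy_eq_zero_of_eq hinit, zero_mul] using hK t ht
  exact hle.not_gt (weightedEnergy_pos_of_ne hu hv hpos hL ht hne)

/-- uniqueness for smooth, L-periodic-in-x, bounded-away-from-zero
solutions of `u_t = u u_xxx` on `ℝ × [0,T]`. -/
theorem stmt1
    (C L T : ℝ) (hC : 1 < C) (hL : 0 < L) (hT : 0 < T)
    (u v : ℝ → ℝ → ℝ)
    (hu : ContDiff ℝ (⊤ : ℕ∞) (fun p : ℝ × ℝ => u p.1 p.2))
    (hv : ContDiff ℝ (⊤ : ℕ∞) (fun p : ℝ × ℝ => v p.1 p.2))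
    (huper : ∀ x : ℝ, ∀ t ∈ Icc (0:ℝ) T, u (x + L) t = u x t)
    (hvper : ∀ x : ℝ, ∀ t ∈ Icc (0:ℝ) T, v (x + L) t = v x t)
    (hub : ∀ x : ℝ, ∀ t ∈ Icc (0:ℝ) T, 1 / C ≤ u x t ∧ u x t ≤ C)
    (hvb : ∀ x : ℝ, ∀ t ∈ Icc (0:ℝ) T, 1 / C ≤ v x t ∧ v x t ≤ C)
    (hupde : ∀ x : ℝ, ∀ t ∈ Icc (0:ℝ) T,
      deriv (fun s => u x s) t = u x t * iteratedDeriv 3 (fun y => u y t) x)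
    (hvpde : ∀ x : ℝ, ∀ t ∈ Icc (0:ℝ) T,
      deriv (fun s => v x s) t = v x t * iteratedDeriv 3 (fun y => v y t) x)
    (hinit : ∀ x : ℝ, u x 0 = v x 0) :
    ∀ x : ℝ, ∀ t ∈ Icc (0:ℝ) T, u x t = v x t :=
  stmt1_general hL ⟨contDiff_infty.1 hu 3, fun t ht x ↦ huper x t ht, hupde⟩
    ⟨contDiff_infty.1 hv 3, fun t ht x ↦ hvper x t ht, hvpde⟩
    (fun x t ht ↦ (one_div_pos.2 (one_pos.trans hC)).trans_le (hub x t ht).1) hinit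
end

section
/- There exists exactly one function g : ℝ → ℝ with the following properties: g is real analytic, odd (so in particular g(0) = g″(0) = 0), strictly monotone decreasing, positive for z < 0, satisfies g(z) → +1 as z → −∞ and g(z) → −1 as z → +∞, and solves the similarity ODE (g g′)″(z) = 6 z g′(z) + 6 z² g″(z) + z³ g‴(z) for all z ∈ ℝ. -/
open Set Filter

/-!
Writing the right-hand side of the equation as `(z³ g')''` and integrating twice gives
`(g - z³) g' = g'(0)² z`.

Existence. Normalize `g'(0) = -1` and write `g = z³ - z θ(z)`; then
`(s θ(s))² = s² + 6 ∫₀ˢ x³ θ(x) dx`. For the restriction `y(t) = θ(s t)` to `[0, 1]` this reads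
`y² = 1 + T y` with a positive operator `T` depending analytically on `s`. In terms of `log y` the
map `y ↦ √(1 + T y)` contracts distances by the factor `1/2`, since
`1 + T (eᵈ y) ≤ eᵈ (1 + T y)`, so there is exactly one positive solution, and the implicit function
theorem makes it analytic in `s`. Since `θ > s²` and `g' = -1/θ`, the profile decreases to a finite
negative limit, which the scaling symmetry `g(c z) / c³` moves to `-1`.

Uniqueness. For two solutions of the first-order equation with the same nonzero slope at `0`, the
square of the difference decreases away from `0`, so they agree. Any two solutions with a negative
limit have negative slopes at `0`, which the scaling symmetry makes equal; then the common limit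
forces the scaling factor to be `1`.
-/

open Topology MeasureTheory
open scoped ContDiff unitInterval

section PositiveOperator

variable {X : Type*} [TopologicalSpace X]

/-- The continuous function `x ↦ exp (φ x)`; it parametrizes the positive elements of `C(X, ℝ)`
by logarithms. -/
noncomputable def expComp (φ : C(X, ℝ)) : C(X, ℝ) := ⟨fun x => Real.exp (φ x), by fun_prop⟩

lemma one_add_apply_expComp_pos {T : C(X, ℝ) →L[ℝ] C(X, ℝ)} (hT : Monotone T) (φ : C(X, ℝ))
    (x : X) : 0 < 1 + T (expComp φ) x := by
  have h0 : 0 ≤ expComp φ := fun t => (Real.exp_pos _).le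
  have hTexp : (0 : ℝ) ≤ T (expComp φ) x := by simpa using hT h0 x
  linarith

/-- The map `φ ↦ ½ log (1 + T (exp φ))`, whose fixed points are the logarithms of the positive
solutions of `y ^ 2 = 1 + T y`. -/
noncomputable def halfLogStep {T : C(X, ℝ) →L[ℝ] C(X, ℝ)} (hT : Monotone T) (φ : C(X, ℝ)) :
    C(X, ℝ) where
  toFun x := Real.log (1 + T (expComp φ) x) / 2
  continuous_toFun := by
    have := fun x => (one_add_apply_expComp_pos hT φ x).ne'
    fun_prop (disch := assumption)

lemma halfLogStep_apply_le_add {T : C(X, ℝ) →L[ℝ] C(X, ℝ)} (hT : Monotone T) {φ ψ : C(X, ℝ)}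
    {d : ℝ} (hd : 0 ≤ d) (hle : ∀ x, φ x ≤ ψ x + d) (x : X) :
    halfLogStep hT φ x ≤ halfLogStep hT ψ x + d / 2 := by
  have hexp : expComp φ ≤ Real.exp d • expComp ψ := fun t => by
    simpa [expComp, ← Real.exp_add, add_comm] using hle t
  have hone : 1 ≤ Real.exp d := Real.one_le_exp hd
  have hstep : 1 + T (expComp φ) x ≤ Real.exp d * (1 + T (expComp ψ) x) := by
    have hTexp : T (expComp φ) x ≤ Real.exp d * T (expComp ψ) x := by simpa using hT hexp x
    linarith
  have hlog := Real.log_le_log (one_add_apply_expComp_pos hT φ x) hstep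
  rw [Real.log_mul (Real.exp_ne_zero d) (one_add_apply_expComp_pos hT ψ x).ne', Real.log_exp]
    at hlog
  simp only [halfLogStep, ContinuousMap.coe_mk]
  linarith

lemma isFixedPt_halfLogStep_iff {T : C(X, ℝ) →L[ℝ] C(X, ℝ)} (hT : Monotone T) (φ : C(X, ℝ)) :
    Function.IsFixedPt (halfLogStep hT) φ ↔ expComp φ ^ 2 = 1 + T (expComp φ) := by
  simp only [Function.IsFixedPt, ContinuousMap.ext_iff]
  refine forall_congr' fun x => ?_
  have hsq : (expComp φ ^ 2) x = Real.exp (φ x * 2) := by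
    simp [expComp, Real.exp_mul]
  have hstep : halfLogStep hT φ x = Real.log ((1 + T (expComp φ)) x) / 2 := rfl
  rw [hsq, hstep, div_eq_iff two_ne_zero]
  constructor <;> intro h
  · rw [← h]
    exact Real.exp_log (one_add_apply_expComp_pos hT φ x)
  · rw [← h, Real.log_exp]

variable [CompactSpace X]

lemma contractingWith_halfLogStep {T : C(X, ℝ) →L[ℝ] C(X, ℝ)} (hT : Monotone T) :
    ContractingWith 2⁻¹ (halfLogStep hT) := by
  refine ⟨inv_lt_one_of_one_lt₀ one_lt_two, LipschitzWith.of_dist_le_mul fun φ ψ => ?_⟩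
  refine (ContinuousMap.dist_le (by positivity)).2 fun x => ?_
  have hφψ : ∀ t, |φ t - ψ t| ≤ dist φ ψ := fun t =>
    (Real.dist_eq _ _).symm.trans_le (ContinuousMap.dist_apply_le_dist t)
  have hle := halfLogStep_apply_le_add hT dist_nonneg
    (fun t => sub_le_iff_le_add'.1 (abs_le.1 (hφψ t)).2) x
  have hge := halfLogStep_apply_le_add hT dist_nonneg
    (fun t => show ψ t ≤ φ t + dist φ ψ by linarith [(abs_le.1 (hφψ t)).1]) x
  rw [Real.dist_eq, abs_le, NNReal.coe_inv, NNReal.coe_ofNat]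
  constructor <;> linarith

theorem existsUnique_pos_sq_eq_one_add {T : C(X, ℝ) →L[ℝ] C(X, ℝ)} (hT : Monotone T) :
    ∃! y : C(X, ℝ), (∀ x, 0 < y x) ∧ y ^ 2 = 1 + T y := by
  have hcontr := contractingWith_halfLogStep hT
  refine ⟨expComp (hcontr.fixedPoint _), ⟨fun x => Real.exp_pos _,
    (isFixedPt_halfLogStep_iff hT _).1 hcontr.fixedPoint_isFixedPt⟩, ?_⟩
  rintro y ⟨hpos, heq⟩
  let φ : C(X, ℝ) := ⟨fun x => Real.log (y x), by
    have := fun x => (hpos x).ne'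
    fun_prop (disch := assumption)⟩
  have hφ : expComp φ = y := ContinuousMap.ext fun x => Real.exp_log (hpos x)
  rw [← hφ] at heq ⊢
  rw [hcontr.fixedPoint_unique ((isFixedPt_halfLogStep_iff hT φ).2 heq)]

lemma abs_apply_mul_le_norm_mul {T : C(X, ℝ) →L[ℝ] C(X, ℝ)} (hT : Monotone T) {y : C(X, ℝ)}
    (hy : 0 ≤ y) (k : C(X, ℝ)) (x : X) : |T (y * k) x| ≤ ‖k‖ * T y x := by
  have hlower : -(‖k‖ • y) ≤ y * k := fun t => by
    simpa [mul_comm] using mul_le_mul_of_nonneg_left (k.neg_norm_le_apply t) (hy t)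
  have hupper : y * k ≤ ‖k‖ • y := fun t => by
    simpa [mul_comm] using mul_le_mul_of_nonneg_left (k.apply_le_norm t) (hy t)
  rw [abs_le]
  exact ⟨by simpa using hT hlower x, by simpa using hT hupper x⟩

lemma opNorm_mul_comp_mul_le {T : C(X, ℝ) →L[ℝ] C(X, ℝ)} (hT : Monotone T) {w y : C(X, ℝ)}
    (hw : 0 ≤ w) (hy : 0 ≤ y) :
    ‖ContinuousLinearMap.mul ℝ C(X, ℝ) w ∘L T ∘L ContinuousLinearMap.mul ℝ C(X, ℝ) y‖ ≤
      ‖w * T y‖ := by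
  refine ContinuousLinearMap.opNorm_le_bound _ (norm_nonneg _) fun k => ?_
  refine (ContinuousMap.norm_le _ (by positivity)).2 fun x => ?_
  have hwx : 0 ≤ w x := hw x
  calc ‖w x * T (y * k) x‖ = w x * |T (y * k) x| := by
        rw [Real.norm_eq_abs, abs_mul, abs_of_nonneg hwx]
    _ ≤ w x * (‖k‖ * T y x) := by
        gcongr
        exact abs_apply_mul_le_norm_mul hT hy k x
    _ = (w * T y) x * ‖k‖ := by simp only [ContinuousMap.mul_apply]; ring
    _ ≤ ‖w * T y‖ * ‖k‖ := by gcongr; exact ContinuousMap.apply_le_norm _ x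

lemma isInvertible_mul_unit (u : C(X, ℝ)ˣ) :
    (ContinuousLinearMap.mul ℝ C(X, ℝ) u).IsInvertible :=
  .of_inverse (g := ContinuousLinearMap.mul ℝ C(X, ℝ) ↑u⁻¹) (by ext; simp) (by ext; simp)

-- In the norm weighted by `y` the operator `a⁻¹ T` is a strict contraction.
theorem isInvertible_mul_sub_of_apply_lt {T : C(X, ℝ) →L[ℝ] C(X, ℝ)} (hT : Monotone T)
    {a y : C(X, ℝ)} (hy : ∀ x, 0 < y x) (hlt : ∀ x, T y x < a x * y x) :
    (ContinuousLinearMap.mul ℝ C(X, ℝ) a - T).IsInvertible := by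
  have hTy : 0 ≤ T y := by simpa using hT (show 0 ≤ y from fun x => (hy x).le)
  have hay : ∀ x, 0 < a x * y x := fun x => (hTy x).trans_lt (hlt x)
  obtain ⟨u, hu⟩ := (ContinuousMap.isUnit_iff_forall_ne_zero y).2 fun x => (hy x).ne'
  obtain ⟨v, hv⟩ := (ContinuousMap.isUnit_iff_forall_ne_zero (a * y)).2 fun x => (hay x).ne'
  have hv_inv : ∀ x, (↑v⁻¹ : C(X, ℝ)) x = (a x * y x)⁻¹ := fun x =>
    eq_inv_of_mul_eq_one_right (by simpa [hv] using congr($(v.mul_inv) x))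
  let mulBy := ContinuousLinearMap.mul ℝ C(X, ℝ)
  let K := mulBy ↑v⁻¹ ∘L T ∘L mulBy u
  have hratio : ‖(↑v⁻¹ : C(X, ℝ)) * T y‖ < 1 := by
    refine (ContinuousMap.norm_lt_iff _ one_pos).2 fun x => ?_
    have hquot : 0 ≤ T y x / (a x * y x) := div_nonneg (hTy x) (hay x).le
    rw [ContinuousMap.mul_apply, hv_inv, inv_mul_eq_div, Real.norm_of_nonneg hquot,
      div_lt_one (hay x)]
    exact hlt x
  have hK : ‖K‖ < 1 := by
    have hv_nonneg : ∀ x, 0 ≤ (↑v⁻¹ : C(X, ℝ)) x := fun x => by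
      rw [hv_inv]
      exact (inv_pos.2 (hay x)).le
    simp only [K, hu]
    exact (opNorm_mul_comp_mul_le hT hv_nonneg fun x => (hy x).le).trans_lt hratio
  have hconj : mulBy a - T = mulBy v ∘L (1 - K) ∘L mulBy ↑u⁻¹ := by
    ext f x
    have hau : a * f = v * (↑u⁻¹ * f) := by rw [hv, ← hu, mul_assoc, u.mul_inv_cancel_left]
    simp [K, mulBy, hau, ← mul_assoc]
  obtain ⟨w, hw⟩ := isUnit_one_sub_of_norm_lt_one (R := C(X, ℝ) →L[ℝ] C(X, ℝ)) hK
  rw [hconj, ← hw]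
  exact (isInvertible_mul_unit v).comp (.comp ⟨.ofUnit w, rfl⟩ (isInvertible_mul_unit u⁻¹))

lemma eventually_forall_pos {P : Type*} [TopologicalSpace P] {y : P → C(X, ℝ)} {p₀ : P}
    (hy : ContinuousAt y p₀) (hpos : ∀ x, 0 < y p₀ x) : ∀ᶠ p in 𝓝 p₀, ∀ x, 0 < y p x := by
  have hmaps := hy.eventually <| ContinuousMap.eventually_mapsTo (K := univ) isCompact_univ
    (isOpen_Ioi (a := (0 : ℝ))) fun x _ => hpos x
  exact hmaps.mono fun p hp x => hp (mem_univ x)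

lemma fderiv_sq_sub_one_sub_apply_comp_inr {P : Type*} [NormedAddCommGroup P] [NormedSpace ℝ P]
    {T : P → C(X, ℝ) →L[ℝ] C(X, ℝ)} {p₀ : P} {y₀ : C(X, ℝ)}
    (hF : DifferentiableAt ℝ (fun q : P × C(X, ℝ) => q.2 ^ 2 - 1 - T q.1 q.2) (p₀, y₀)) :
    fderiv ℝ (fun q : P × C(X, ℝ) => q.2 ^ 2 - 1 - T q.1 q.2) (p₀, y₀) ∘L .inr ℝ P C(X, ℝ) =
      ContinuousLinearMap.mul ℝ C(X, ℝ) (2 * y₀) - T p₀ := by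
  have hslice := hF.hasFDerivAt.comp y₀ (hasFDerivAt_prodMk_right p₀ y₀)
  have hdirect := (((hasFDerivAt_id y₀).pow 2).sub_const 1).sub (T p₀).hasFDerivAt
  refine (hslice.unique hdirect).trans ?_
  ext
  simp

theorem contDiffAt_of_pos_sq_eq_one_add {P : Type*} [NormedAddCommGroup P] [NormedSpace ℝ P]
    [CompleteSpace P] {n : ℕ∞ω} {T : P → C(X, ℝ) →L[ℝ] C(X, ℝ)} {y : P → C(X, ℝ)} {p₀ : P}
    (hT : ∀ p, Monotone (T p)) (hn : n ≠ 0) (hTn : ContDiffAt ℝ n T p₀)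
    (hpos : ∀ p x, 0 < y p x) (heq : ∀ p, y p ^ 2 = 1 + T p (y p)) : ContDiffAt ℝ n y p₀ := by
  let F : P × C(X, ℝ) → C(X, ℝ) := fun q => q.2 ^ 2 - 1 - T q.1 q.2
  have hTfst : ContDiffAt ℝ n (fun q : P × C(X, ℝ) => T q.1) (p₀, y p₀) :=
    hTn.comp (p₀, y p₀) contDiffAt_fst
  have hF : ContDiffAt ℝ n F (p₀, y p₀) :=
    ((contDiffAt_snd.pow 2).sub contDiffAt_const).sub (hTfst.clm_apply contDiffAt_snd)
  have hinv : (fderiv ℝ F (p₀, y p₀) ∘L .inr ℝ P C(X, ℝ)).IsInvertible := by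
    rw [fderiv_sq_sub_one_sub_apply_comp_inr (hF.differentiableAt hn)]
    refine isInvertible_mul_sub_of_apply_lt (hT p₀) (hpos p₀) fun x => ?_
    have hx : y p₀ x ^ 2 = 1 + T p₀ (y p₀) x := by simpa using congr($(heq p₀) x)
    change T p₀ (y p₀) x < 2 * y p₀ x * y p₀ x
    nlinarith [sq_nonneg (y p₀ x)]
  have hzero : ∀ p, F (p, y p) = 0 := fun p => by simp [F, heq]
  let ψ := hF.implicitFunction hn hinv
  have hψ : ContDiffAt ℝ n ψ p₀ := hF.contDiffAt_implicitFunction hn hinv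
  have hψpos : ∀ᶠ p in 𝓝 p₀, ∀ x, 0 < ψ p x :=
    eventually_forall_pos hψ.continuousAt fun x => by
      rw [show ψ p₀ = y p₀ from hF.implicitFunction_apply_self hn hinv]
      exact hpos p₀ x
  refine hψ.congr_of_eventuallyEq ?_
  filter_upwards [hψpos, hF.eventually_apply_implicitFunction hn hinv] with p hp hpF
  have hψeq : ψ p ^ 2 = 1 + T p (ψ p) := by
    have hFψ : ψ p ^ 2 - 1 - T p (ψ p) = 0 := hpF.trans (hzero p₀)
    rwa [sub_sub, sub_eq_zero] at hFψ
  exact (existsUnique_pos_sq_eq_one_add (hT p)).unique ⟨hpos p, heq p⟩ ⟨hp, hψeq⟩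

end PositiveOperator

section SimilarityODE

/-- The third-order ordinary differential equation for the profile of a similarity solution
`u(x, t) = g (x / (-t))` of `u_ttt = (u u_x)_xx`. -/
def SimilarityODE (g : ℝ → ℝ) : Prop :=
  ∀ z : ℝ, iteratedDeriv 2 (fun w => g w * deriv g w) z =
    6 * z * deriv g z + 6 * z ^ 2 * iteratedDeriv 2 g z + z ^ 3 * iteratedDeriv 3 g z

/-- The first-order equation `g' = A z / (g - z ^ 3)` obtained by integrating `SimilarityODE` twice,
multiplied out so that it makes sense where `g z = z ^ 3`. -/
def FirstIntegral (A : ℝ) (g : ℝ → ℝ) : Prop :=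
  ∀ z : ℝ, (g z - z ^ 3) * deriv g z = A * z

/-- The action `z ↦ g (c z) / c ^ 3` of the scaling symmetry of `SimilarityODE`. -/
noncomputable def rescale (c : ℝ) (g : ℝ → ℝ) (z : ℝ) : ℝ := g (c * z) / c ^ 3

variable {f g : ℝ → ℝ} {A c ℓ : ℝ}

lemma iteratedDeriv_two_cube_mul {h : ℝ → ℝ} (hh : ContDiff ℝ 2 h) (z : ℝ) :
    iteratedDeriv 2 (fun w => w ^ 3 * h w) z =
      6 * z * h z + 6 * z ^ 2 * deriv h z + z ^ 3 * iteratedDeriv 2 h z := by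
  rw [iteratedDeriv_fun_mul (by fun_prop) hh.contDiffAt]
  simp only [iteratedDeriv_pow, Finset.sum_range_succ, Finset.sum_range_zero, iteratedDeriv_zero,
    iteratedDeriv_one, Nat.choose, Nat.descFactorial, Nat.reduceAdd, Nat.reduceSub, Nat.cast_ofNat]
  push_cast
  ring

lemma contDiff_sub_cube_mul_deriv (hg : ContDiff ℝ 3 g) :
    ContDiff ℝ 2 fun w => (g w - w ^ 3) * deriv g w :=
  ((hg.of_le (by norm_num)).sub (by fun_prop)).mul (ContDiff.deriv' (n := 2) hg)

lemma similarityODE_iff_iteratedDeriv_two_eq_zero (hg : ContDiff ℝ 3 g) :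
    SimilarityODE g ↔ ∀ z, iteratedDeriv 2 (fun w => (g w - w ^ 3) * deriv g w) z = 0 := by
  have hg2 : ContDiff ℝ 2 g := hg.of_le (by norm_num)
  have hdg : ContDiff ℝ 2 (deriv g) := ContDiff.deriv' (n := 2) hg
  refine forall_congr' fun z => ?_
  simp only [sub_mul]
  rw [iteratedDeriv_fun_sub (by fun_prop) (by fun_prop), iteratedDeriv_two_cube_mul hdg z,
    sub_eq_zero]
  simp only [iteratedDeriv_succ', iteratedDeriv_zero]

lemma eq_add_mul_of_iteratedDeriv_two_eq_zero {P : ℝ → ℝ} (hP : ContDiff ℝ 2 P)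
    (hP2 : ∀ z, iteratedDeriv 2 P z = 0) (z : ℝ) : P z = P 0 + deriv P 0 * z := by
  have hdP : ContDiff ℝ 1 (deriv P) := ContDiff.deriv' (n := 1) hP
  have hslope : ∀ w, deriv P w = deriv P 0 := fun w =>
    is_const_of_deriv_eq_zero (hdP.differentiable one_ne_zero)
      (by simpa [iteratedDeriv_succ] using hP2) w 0
  have hconst : ∀ w, HasDerivAt (fun x => P x - deriv P 0 * x) 0 w := fun w => by
    simpa [hslope w] using ((hP.differentiable two_ne_zero) w).hasDerivAt.fun_sub
      ((hasDerivAt_id w).const_mul (deriv P 0))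
  have heq := is_const_of_deriv_eq_zero (fun w => (hconst w).differentiableAt)
    (fun w => (hconst w).deriv) z 0
  simp only [mul_zero, sub_zero] at heq
  linarith

theorem SimilarityODE.firstIntegral (hode : SimilarityODE g) (hg : ContDiff ℝ 3 g)
    (h0 : g 0 = 0) : FirstIntegral (deriv g 0 ^ 2) g := fun z => by
  have hslope : HasDerivAt (fun w => (g w - w ^ 3) * deriv g w) (deriv g 0 ^ 2) 0 := by
    have hdg : HasDerivAt g (deriv g 0) 0 := (hg.differentiable (by simp) 0).hasDerivAt
    have hddg : HasDerivAt (deriv g) (deriv (deriv g) 0) 0 :=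
      ((ContDiff.deriv' (n := 2) hg).differentiable two_ne_zero 0).hasDerivAt
    refine ((hdg.sub (hasDerivAt_pow 3 0)).mul hddg).congr_deriv ?_
    simp [h0, sq]
  have haffine := eq_add_mul_of_iteratedDeriv_two_eq_zero (contDiff_sub_cube_mul_deriv hg)
    ((similarityODE_iff_iteratedDeriv_two_eq_zero hg).1 hode) z
  simpa [hslope.deriv, h0] using haffine

theorem FirstIntegral.similarityODE (hI : FirstIntegral A g) (hg : ContDiff ℝ 3 g) :
    SimilarityODE g := by
  refine (similarityODE_iff_iteratedDeriv_two_eq_zero hg).2 fun z => ?_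
  rw [funext hI]
  simp [iteratedDeriv_succ]

lemma deriv_rescale (hc : c ≠ 0) (g : ℝ → ℝ) (z : ℝ) :
    deriv (rescale c g) z = deriv g (c * z) / c ^ 2 := by
  unfold rescale
  rw [deriv_div_const, deriv_comp_mul_left, smul_eq_mul]
  field_simp

lemma tendsto_rescale_atTop (hc : 0 < c) (hg : Tendsto g atTop (𝓝 ℓ)) :
    Tendsto (rescale c g) atTop (𝓝 (ℓ / c ^ 3)) :=
  (hg.comp (tendsto_id.const_mul_atTop hc)).div_const (c ^ 3)

theorem FirstIntegral.rescale_div_pow (hI : FirstIntegral A g) (hc : c ≠ 0) :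
    FirstIntegral (A / c ^ 4) (rescale c g) := fun z => by
  have hIc := hI (c * z)
  rw [deriv_rescale hc, rescale]
  field_simp
  linear_combination hIc

lemma FirstIntegral.monotone_of_zero (hI : FirstIntegral 0 g) (hg : ContDiff ℝ 1 g) :
    Monotone g := by
  refine monotone_of_deriv_nonneg (hg.differentiable one_ne_zero) fun z => ?_
  by_contra! hneg
  have hcube : g =ᶠ[𝓝 z] fun w => w ^ 3 := by
    filter_upwards [(hg.continuous_deriv le_rfl).continuousAt.eventually_lt_const hneg] with w hw
    exact sub_eq_zero.1 ((mul_eq_zero_iff_right hw.ne).1 ((hI w).trans (zero_mul w)))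
  have hderiv : deriv g z = 3 * z ^ 2 := by simp [hcube.deriv_eq]
  nlinarith [sq_nonneg z]

-- The quotient `(g z - z ^ 3) / z` extends continuously to `0` by `g' 0` and never vanishes, so it
-- keeps the sign of `g' 0`.
lemma FirstIntegral.deriv_zero_mul_pos (hI : FirstIntegral (deriv g 0 ^ 2) g)
    (hg : ContDiff ℝ 1 g) (h0 : g 0 = 0) (hne : deriv g 0 ≠ 0) {z : ℝ} (hz : z ≠ 0) :
    0 < deriv g 0 * (z * (g z - z ^ 3)) := by
  have hdiff : Differentiable ℝ fun w => g w - w ^ 3 :=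
    (hg.differentiable one_ne_zero).sub (by fun_prop)
  let q := dslope (fun w => g w - w ^ 3) 0
  have hq : Continuous q := continuousOn_univ.1 <|
    (continuousOn_dslope univ_mem).2 ⟨hdiff.continuous.continuousOn, hdiff 0⟩
  have hq0 : q 0 = deriv g 0 := by
    have hdg := (hg.differentiable one_ne_zero 0).hasDerivAt.fun_sub (hasDerivAt_pow 3 0)
    simpa [q] using hdg.deriv
  have hmul : ∀ w, w * q w = g w - w ^ 3 := fun w => by
    simpa using sub_smul_dslope_of_zero (f := fun w => g w - w ^ 3) (a := 0) (by simp [h0]) w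
  have hq_ne : ∀ w, q w ≠ 0 := fun w hqw => by
    rcases eq_or_ne w 0 with rfl | hw
    · exact hne (hq0 ▸ hqw)
    · have hIw := hI w
      simp [← hmul, hqw, hne, hw] at hIw
  have hpos : 0 < deriv g 0 * q z := by
    by_contra! hle
    obtain ⟨w, hw⟩ := mem_range_of_exists_le_of_exists_ge (hq.const_mul (deriv g 0)) ⟨z, hle⟩
      ⟨0, by simp [hq0, mul_self_nonneg]⟩
    exact mul_ne_zero hne (hq_ne w) hw
  calc 0 < z ^ 2 * (deriv g 0 * q z) := by positivity
    _ = deriv g 0 * (z * (g z - z ^ 3)) := by rw [← hmul]; ring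

lemma apply_le_apply_zero_of_mul_deriv_nonpos (hf : Differentiable ℝ f)
    (hf' : ∀ z, z * deriv f z ≤ 0) (z : ℝ) : f z ≤ f 0 := by
  have hanti : AntitoneOn f (Ici 0) :=
    antitoneOn_of_deriv_nonpos (convex_Ici 0) hf.continuous.continuousOn hf.differentiableOn
      fun x hx => by
        rw [interior_Ici] at hx
        exact nonpos_of_mul_nonpos_right (hf' x) hx
  have hmono : MonotoneOn f (Iic 0) :=
    monotoneOn_of_deriv_nonneg (convex_Iic 0) hf.continuous.continuousOn hf.differentiableOn
      fun x hx => by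
        rw [interior_Iic] at hx
        exact nonneg_of_mul_nonpos_right (hf' x) hx
  rcases le_total 0 z with hz | hz
  · exact hanti self_mem_Ici hz hz
  · exact hmono hz self_mem_Iic hz

lemma FirstIntegral.mul_sub_mul_deriv_sub_nonpos (hfI : FirstIntegral (deriv f 0 ^ 2) f)
    (hgI : FirstIntegral (deriv g 0 ^ 2) g) (hf : ContDiff ℝ 1 f) (hg : ContDiff ℝ 1 g)
    (hf0 : f 0 = 0) (hg0 : g 0 = 0) (hderiv : deriv f 0 = deriv g 0) (hne : deriv g 0 ≠ 0)
    (z : ℝ) : z * ((f z - g z) * (deriv f z - deriv g z)) ≤ 0 := by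
  rcases eq_or_ne z 0 with rfl | hz
  · simp
  have hfz := hfI.deriv_zero_mul_pos hf hf0 (hderiv ▸ hne) hz
  have hgz := hgI.deriv_zero_mul_pos hg hg0 hne hz
  have hfIz := hfI z
  rw [hderiv] at hfz hfIz
  have hprod : 0 < (f z - z ^ 3) * (g z - z ^ 3) := by
    refine pos_of_mul_pos_right (a := (deriv g 0 * z) ^ 2) ?_ (sq_nonneg _)
    linear_combination mul_pos hfz hgz
  have hcross : (f z - z ^ 3) * (g z - z ^ 3) * (deriv f z - deriv g z) =
      deriv g 0 ^ 2 * z * (g z - f z) := by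
    linear_combination (g z - z ^ 3) * hfIz - (f z - z ^ 3) * hgI z
  refine nonpos_of_mul_nonpos_right (a := (f z - z ^ 3) * (g z - z ^ 3)) ?_ hprod
  calc (f z - z ^ 3) * (g z - z ^ 3) * (z * ((f z - g z) * (deriv f z - deriv g z)))
      = -(deriv g 0 * z * (f z - g z)) ^ 2 := by
        linear_combination z * (f z - g z) * hcross
    _ ≤ 0 := neg_nonpos.2 (sq_nonneg _)

theorem FirstIntegral.eq_of_deriv_zero_eq (hfI : FirstIntegral (deriv f 0 ^ 2) f)
    (hgI : FirstIntegral (deriv g 0 ^ 2) g) (hf : ContDiff ℝ 1 f) (hg : ContDiff ℝ 1 g)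
    (hf0 : f 0 = 0) (hg0 : g 0 = 0) (hderiv : deriv f 0 = deriv g 0) (hne : deriv g 0 ≠ 0) :
    f = g := by
  have hsq : ∀ z, HasDerivAt (fun w => (f w - g w) ^ 2)
      (2 * (f z - g z) * (deriv f z - deriv g z)) z := fun z => by
    simpa using ((hf.differentiable one_ne_zero z).hasDerivAt.fun_sub
      (hg.differentiable one_ne_zero z).hasDerivAt).fun_pow 2
  funext z
  have hle : (f z - g z) ^ 2 ≤ (f 0 - g 0) ^ 2 := by
    refine apply_le_apply_zero_of_mul_deriv_nonpos (fun w => (hsq w).differentiableAt)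
      (fun w => ?_) z
    rw [(hsq w).deriv]
    linarith [hfI.mul_sub_mul_deriv_sub_nonpos hgI hf hg hf0 hg0 hderiv hne w]
  rw [hf0, hg0, sub_self, zero_pow two_ne_zero] at hle
  exact sub_eq_zero.1 (sq_nonpos_iff _ |>.1 hle)

lemma FirstIntegral.deriv_zero_neg_of_tendsto (hI : FirstIntegral (deriv g 0 ^ 2) g)
    (hg : ContDiff ℝ 1 g) (h0 : g 0 = 0) (hℓ : ℓ < 0) (hlim : Tendsto g atTop (𝓝 ℓ)) :
    deriv g 0 < 0 := by
  obtain ⟨z, hgz, hz⟩ := ((hlim.eventually_lt_const hℓ).and (eventually_gt_atTop 0)).exists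
  have hne : deriv g 0 ≠ 0 := fun hzero => by
    rw [hzero, zero_pow two_ne_zero] at hI
    have hmono := hI.monotone_of_zero hg hz.le
    linarith
  have hsub : z * (g z - z ^ 3) < 0 := mul_neg_of_pos_of_neg hz (by linarith [pow_pos hz 3])
  exact neg_of_mul_pos_left (hI.deriv_zero_mul_pos hg h0 hne hz.ne') hsub.le

theorem SimilarityODE.eq_of_tendsto (hfode : SimilarityODE f) (hgode : SimilarityODE g)
    (hf : ContDiff ℝ 3 f) (hg : ContDiff ℝ 3 g) (hf0 : f 0 = 0) (hg0 : g 0 = 0) (hℓ : ℓ < 0)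
    (hflim : Tendsto f atTop (𝓝 ℓ)) (hglim : Tendsto g atTop (𝓝 ℓ)) : f = g := by
  have hf1 : ContDiff ℝ 1 f := hf.of_le (by norm_num)
  have hg1 : ContDiff ℝ 1 g := hg.of_le (by norm_num)
  have hfI := hfode.firstIntegral hf hf0
  have hgI := hgode.firstIntegral hg hg0
  have hf' := hfI.deriv_zero_neg_of_tendsto hf1 hf0 hℓ hflim
  have hg' := hgI.deriv_zero_neg_of_tendsto hg1 hg0 hℓ hglim
  obtain ⟨c, hc, hcsq⟩ : ∃ c > 0, c ^ 2 = deriv g 0 / deriv f 0 :=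
    have hratio := div_pos_of_neg_of_neg hg' hf'
    ⟨√(deriv g 0 / deriv f 0), Real.sqrt_pos.2 hratio, Real.sq_sqrt hratio.le⟩
  have hderiv : deriv (rescale c g) 0 = deriv f 0 := by
    rw [deriv_rescale hc.ne', mul_zero, hcsq, div_div_cancel₀ hg'.ne]
  have hrescale : rescale c g = f := by
    have hcI : FirstIntegral (deriv (rescale c g) 0 ^ 2) (rescale c g) := by
      convert hgI.rescale_div_pow hc.ne' using 1
      rw [deriv_rescale hc.ne', mul_zero]
      ring
    exact hcI.eq_of_deriv_zero_eq hfI (by unfold rescale; fun_prop) hf1 (by simp [rescale, hg0])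
      hf0 hderiv hf'.ne
  have hc3 : c ^ 3 = 1 := by
    have hℓc : ℓ / c ^ 3 = ℓ :=
      tendsto_nhds_unique (tendsto_rescale_atTop hc hglim) (hrescale ▸ hflim)
    simpa [hℓ.ne] using div_eq_iff (pow_ne_zero 3 hc.ne') |>.1 hℓc
  obtain rfl : c = 1 := (pow_eq_one_iff_of_nonneg hc.le three_ne_zero).1 hc3
  rw [← hrescale]
  funext z
  simp [rescale]

end SimilarityODE

section Profile

lemma continuous_dilationMean_toFun (f : C(I, ℝ)) :
    Continuous fun t : I => 6 * (t : ℝ) ^ 2 * ∫ r : I, (r : ℝ) ^ 3 * f (t * r) := by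
  have hmean : Continuous fun t : I => ∫ r : I, (r : ℝ) ^ 3 * f (t * r) := by
    simpa using continuous_parametric_integral_of_continuous (μ := (volume : Measure I))
      (f := fun t r : I => (r : ℝ) ^ 3 * f (t * r)) (by fun_prop) isCompact_univ
  exact Continuous.mul (by fun_prop) hmean

lemma integrable_cube_mul_comp_mul (f : C(I, ℝ)) (t : I) :
    Integrable fun r : I => (r : ℝ) ^ 3 * f (t * r) :=
  Continuous.integrable_of_hasCompactSupport (by fun_prop) (.of_compactSpace _)

lemma norm_cube_mul_apply_le (f : C(I, ℝ)) (t r : I) : ‖(r : ℝ) ^ 3 * f t‖ ≤ ‖f‖ := by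
  have hr : ‖(r : ℝ) ^ 3‖ ≤ 1 := by
    rw [Real.norm_of_nonneg (pow_nonneg r.2.1 3)]
    exact pow_le_one₀ r.2.1 r.2.2
  rw [norm_mul]
  exact (mul_le_of_le_one_left (norm_nonneg _) hr).trans (f.norm_coe_le_norm t)

/-- The weighted dilation average `f ↦ (t ↦ 6 t² ∫₀¹ r³ f(t r) dr)` on `C([0, 1])`; it turns
`(s θ)² = s² + 6 ∫₀ˢ x³ θ` into `θ² = 1 + dilationMean θ`. -/
noncomputable def dilationMean : C(I, ℝ) →L[ℝ] C(I, ℝ) :=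
  LinearMap.mkContinuous
    { toFun f := ⟨_, continuous_dilationMean_toFun f⟩
      map_add' f g := by
        ext t
        simp only [ContinuousMap.coe_mk, ContinuousMap.add_apply, mul_add]
        rw [integral_add (integrable_cube_mul_comp_mul f t) (integrable_cube_mul_comp_mul g t),
          mul_add]
      map_smul' c f := by
        ext t
        simp only [ContinuousMap.coe_mk, ContinuousMap.smul_apply, smul_eq_mul, RingHom.id_apply,
          mul_left_comm _ c, integral_const_mul] }
    6 fun f => by
      refine (ContinuousMap.norm_le _ (by positivity)).2 fun t => ?_
      have hmean : ‖∫ r : I, (r : ℝ) ^ 3 * f (t * r)‖ ≤ ‖f‖ := by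
        simpa using norm_integral_le_of_norm_le_const (μ := (volume : Measure I))
          (ae_of_all _ fun r => norm_cube_mul_apply_le f (t * r) r)
      have hweight : ‖6 * (t : ℝ) ^ 2‖ ≤ 6 := by
        rw [Real.norm_of_nonneg (by positivity)]
        exact mul_le_of_le_one_right (by norm_num) (pow_le_one₀ t.2.1 t.2.2)
      exact (norm_mul_le _ _).trans (mul_le_mul hweight hmean (norm_nonneg _) (by norm_num))

lemma dilationMean_apply (f : C(I, ℝ)) (t : I) :
    dilationMean f t = 6 * (t : ℝ) ^ 2 * ∫ r : I, (r : ℝ) ^ 3 * f (t * r) :=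
  rfl

lemma monotone_sq_smul_dilationMean (s : ℝ) : Monotone (s ^ 2 • dilationMean) := fun f g hfg t => by
  change s ^ 2 * dilationMean f t ≤ s ^ 2 * dilationMean g t
  rw [dilationMean_apply, dilationMean_apply]
  refine mul_le_mul_of_nonneg_left (mul_le_mul_of_nonneg_left ?_ (by positivity)) (sq_nonneg s)
  refine integral_mono (integrable_cube_mul_comp_mul f t) (integrable_cube_mul_comp_mul g t) ?_
  exact fun r => mul_le_mul_of_nonneg_left (hfg (t * r)) (pow_nonneg r.2.1 3)

/-- The restriction `t ↦ θ(s t)` to `[0, 1]` of the function `slopeFactor`, obtained for each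
dilation parameter `s` as the positive solution of a fixed point equation in `C([0, 1])`. -/
noncomputable def slopeFamily (s : ℝ) : C(I, ℝ) :=
  (existsUnique_pos_sq_eq_one_add (monotone_sq_smul_dilationMean s)).choose

lemma slopeFamily_pos (s : ℝ) (t : I) : 0 < slopeFamily s t :=
  (existsUnique_pos_sq_eq_one_add (monotone_sq_smul_dilationMean s)).choose_spec.1.1 t

lemma slopeFamily_sq (s : ℝ) :
    slopeFamily s ^ 2 = 1 + (s ^ 2 • dilationMean) (slopeFamily s) :=
  (existsUnique_pos_sq_eq_one_add (monotone_sq_smul_dilationMean s)).choose_spec.1.2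

lemma slopeFamily_apply_sq (s : ℝ) (t : I) :
    slopeFamily s t ^ 2 = 1 + s ^ 2 * dilationMean (slopeFamily s) t :=
  congr($(slopeFamily_sq s) t)

lemma eq_slopeFamily {s : ℝ} {f : C(I, ℝ)} (hpos : ∀ t, 0 < f t)
    (heq : ∀ t, f t ^ 2 = 1 + s ^ 2 * dilationMean f t) : f = slopeFamily s :=
  (existsUnique_pos_sq_eq_one_add (monotone_sq_smul_dilationMean s)).choose_spec.2 f
    ⟨hpos, ContinuousMap.ext heq⟩

lemma contDiff_pow_smul {V : Type*} [NormedAddCommGroup V] [NormedSpace ℝ V] (k : ℕ) (v : V) :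
    ContDiff ℝ ω fun s : ℝ => s ^ k • v := by
  fun_prop

lemma contDiff_slopeFamily : ContDiff ℝ ω slopeFamily :=
  contDiff_iff_contDiffAt.2 fun _ =>
    contDiffAt_of_pos_sq_eq_one_add monotone_sq_smul_dilationMean (by simp)
      (contDiff_pow_smul 2 dilationMean).contDiffAt slopeFamily_pos slopeFamily_sq

lemma slopeFamily_neg (s : ℝ) : slopeFamily (-s) = slopeFamily s :=
  eq_slopeFamily (slopeFamily_pos _) (by simpa using slopeFamily_apply_sq (-s))

lemma slopeFamily_mul (s : ℝ) (t r : I) : slopeFamily (s * t) r = slopeFamily s (t * r) := by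
  let f : C(I, ℝ) := (slopeFamily s).comp ⟨fun r => t * r, by fun_prop⟩
  suffices f = slopeFamily (s * t) from congr($this.symm r)
  refine eq_slopeFamily (fun r => slopeFamily_pos s (t * r)) fun r => ?_
  simp only [f, dilationMean_apply, ContinuousMap.comp_apply, ContinuousMap.coe_mk, ← mul_assoc]
  rw [slopeFamily_apply_sq, dilationMean_apply, Set.Icc.coe_mul]
  ring

/-- The even analytic function `θ` for which the normalized profile is `s³ - s θ(s)`. -/
noncomputable def slopeFactor (s : ℝ) : ℝ := slopeFamily s 1

lemma slopeFactor_pos (s : ℝ) : 0 < slopeFactor s := slopeFamily_pos s 1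

lemma slopeFactor_neg (s : ℝ) : slopeFactor (-s) = slopeFactor s := by
  rw [slopeFactor, slopeFamily_neg, slopeFactor]

lemma contDiff_slopeFactor : ContDiff ℝ ω slopeFactor :=
  (ContinuousMap.evalCLM ℝ (1 : I) : C(I, ℝ) →L[ℝ] ℝ).contDiff.comp contDiff_slopeFamily

lemma slopeFactor_sq (s : ℝ) :
    slopeFactor s ^ 2 = 1 + 6 * s ^ 2 * ∫ r in (0 : ℝ)..1, r ^ 3 * slopeFactor (s * r) := by
  have hintegral : ∫ r : I, (r : ℝ) ^ 3 * slopeFamily s r =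
      ∫ r in (0 : ℝ)..1, r ^ 3 * slopeFactor (s * r) := by
    have hfamily : ∀ r : I, slopeFamily s r = slopeFactor (s * r) := fun r => by
      rw [slopeFactor, slopeFamily_mul, mul_one]
    simp only [hfamily]
    rw [unitInterval.measurePreserving_coe.integral_comp unitInterval.measurableEmbedding_coe
        (fun r => r ^ 3 * slopeFactor (s * r)),
      integral_Icc_eq_integral_Ioc, intervalIntegral.integral_of_le zero_le_one]
  rw [slopeFactor, slopeFamily_apply_sq, dilationMean_apply]
  simp only [one_mul, Set.Icc.coe_one, hintegral]
  ring

lemma slopeFactor_zero : slopeFactor 0 = 1 := by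
  refine (pow_eq_one_iff_of_nonneg (slopeFactor_pos 0).le two_ne_zero).1 ?_
  rw [slopeFactor_sq]
  simp

lemma sq_mul_slopeFactor (s : ℝ) :
    (s * slopeFactor s) ^ 2 = s ^ 2 + 6 * ∫ x in (0 : ℝ)..s, x ^ 3 * slopeFactor x := by
  have hscale : s * ∫ r in (0 : ℝ)..1, (s * r) ^ 3 * slopeFactor (s * r) =
      ∫ x in (0 : ℝ)..s, x ^ 3 * slopeFactor x := by
    simpa using intervalIntegral.mul_integral_comp_mul_left (a := 0) (b := 1)
      (f := fun x => x ^ 3 * slopeFactor x) (c := s)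
  simp only [mul_pow, mul_assoc, intervalIntegral.integral_const_mul] at hscale
  rw [← hscale, mul_pow, slopeFactor_sq]
  ring

lemma hasDerivAt_mul_slopeFactor (s : ℝ) :
    HasDerivAt (fun x => x * slopeFactor x) ((slopeFactor s)⁻¹ + 3 * s ^ 2) s := by
  have hdiff : Differentiable ℝ slopeFactor := contDiff_slopeFactor.differentiable (by simp)
  have hprod := (hasDerivAt_id s).fun_mul (hdiff s).hasDerivAt
  rcases eq_or_ne s 0 with rfl | hs
  · simpa [slopeFactor_zero] using hprod
  refine hprod.congr_deriv ?_
  have hcont : Continuous fun x => x ^ 3 * slopeFactor x :=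
    (continuous_pow 3).mul contDiff_slopeFactor.continuous
  have hint := (hcont.integral_hasStrictDerivAt 0 s).hasDerivAt
  have hsq := ((hasDerivAt_pow 2 s).fun_add (hint.const_mul 6)).congr_of_eventuallyEq
    (.of_forall sq_mul_slopeFactor)
  have heq := hsq.unique (hprod.fun_pow 2)
  simp only [id_eq, one_mul, Nat.cast_ofNat, Nat.add_one_sub_one, pow_one] at heq ⊢
  have hpos := slopeFactor_pos s
  field_simp
  refine mul_left_cancel₀ (mul_ne_zero two_ne_zero hs) ?_
  linear_combination -heq

/-- The profile normalized by `g' 0 = -1`; all other profiles are rescalings of it. -/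
noncomputable def normalizedProfile (s : ℝ) : ℝ := s ^ 3 - s * slopeFactor s

lemma contDiff_normalizedProfile : ContDiff ℝ ω normalizedProfile :=
  (contDiff_id.pow 3).sub (contDiff_id.mul contDiff_slopeFactor)

lemma normalizedProfile_zero : normalizedProfile 0 = 0 := by simp [normalizedProfile]

lemma normalizedProfile_neg (s : ℝ) : normalizedProfile (-s) = -normalizedProfile s := by
  simp only [normalizedProfile, slopeFactor_neg]
  ring

lemma hasDerivAt_normalizedProfile (s : ℝ) :
    HasDerivAt normalizedProfile (-(slopeFactor s)⁻¹) s := by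
  refine ((hasDerivAt_pow 3 s).fun_sub (hasDerivAt_mul_slopeFactor s)).congr_deriv ?_
  norm_num

lemma firstIntegral_normalizedProfile : FirstIntegral 1 normalizedProfile := fun s => by
  have := (slopeFactor_pos s).ne'
  rw [(hasDerivAt_normalizedProfile s).deriv, normalizedProfile]
  field_simp
  ring

lemma strictAnti_normalizedProfile : StrictAnti normalizedProfile :=
  strictAnti_of_deriv_neg fun s => by
    rw [(hasDerivAt_normalizedProfile s).deriv]
    exact neg_neg_of_pos (inv_pos.2 (slopeFactor_pos s))

lemma normalizedProfile_neg_of_pos {s : ℝ} (hs : 0 < s) : normalizedProfile s < 0 :=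
  normalizedProfile_zero ▸ strictAnti_normalizedProfile hs

lemma sq_lt_slopeFactor {s : ℝ} (hs : 0 < s) : s ^ 2 < slopeFactor s := by
  have hneg := normalizedProfile_neg_of_pos hs
  rw [normalizedProfile] at hneg
  refine lt_of_mul_lt_mul_left (a := s) ?_ hs.le
  linarith

lemma monotoneOn_normalizedProfile_sub_inv :
    MonotoneOn (fun s => normalizedProfile s - s⁻¹) (Ioi 0) := by
  have hderiv : ∀ s ∈ Ioi (0 : ℝ), HasDerivAt (fun s => normalizedProfile s - s⁻¹)
      (-(slopeFactor s)⁻¹ - -(s ^ 2)⁻¹) s := fun s hs =>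
    (hasDerivAt_normalizedProfile s).fun_sub (hasDerivAt_inv (ne_of_gt hs))
  refine monotoneOn_of_hasDerivWithinAt_nonneg (convex_Ioi 0)
    (fun s hs => (hderiv s hs).continuousAt.continuousWithinAt)
    (fun s hs => (hderiv s (interior_subset hs)).hasDerivWithinAt) fun s hs => ?_
  have hs0 : (0 : ℝ) < s := interior_subset hs
  have := inv_anti₀ (pow_pos hs0 2) (sq_lt_slopeFactor hs0).le
  linarith

lemma exists_tendsto_normalizedProfile :
    ∃ L > 0, Tendsto normalizedProfile atTop (𝓝 (-L)) := by
  have hbound : ∀ s ≥ 1, normalizedProfile 1 - 1 ≤ normalizedProfile s := fun s hs => by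
    have hs0 : 0 < s := one_pos.trans_le hs
    have := monotoneOn_normalizedProfile_sub_inv (mem_Ioi.2 one_pos) hs0 hs
    simp only [inv_one] at this
    linarith [inv_pos.2 hs0]
  obtain hbot | ⟨ℓ, hℓ⟩ := tendsto_atTop_of_antitone strictAnti_normalizedProfile.antitone
  · obtain ⟨s, hlt, hs⟩ := ((hbot.eventually_lt_atBot _).and (eventually_ge_atTop 1)).exists
    exact absurd (hbound s hs) hlt.not_ge
  · have hneg := (strictAnti_normalizedProfile.antitone.le_of_tendsto hℓ 1).trans_lt
      (normalizedProfile_neg_of_pos one_pos)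
    exact ⟨-ℓ, neg_pos.2 hneg, by rwa [neg_neg]⟩

end Profile

theorem stmt9_general : ∃ g : ℝ → ℝ,
    ((∀ z : ℝ, AnalyticAt ℝ g z) ∧ (∀ z : ℝ, g (-z) = -g z) ∧ StrictAnti g ∧
      (∀ z < (0 : ℝ), 0 < g z) ∧ Tendsto g atBot (𝓝 1) ∧ Tendsto g atTop (𝓝 (-1)) ∧
      SimilarityODE g) ∧
    ∀ f : ℝ → ℝ, ContDiff ℝ 3 f → f 0 = 0 → Tendsto f atTop (𝓝 (-1)) → SimilarityODE f →
      f = g := by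
  obtain ⟨L, hL, hlim⟩ := exists_tendsto_normalizedProfile
  obtain ⟨c, hc, hcL⟩ : ∃ c > 0, c ^ 3 = L :=
    ⟨L ^ ((3 : ℕ) : ℝ)⁻¹, by positivity, Real.rpow_inv_natCast_pow hL.le three_ne_zero⟩
  let g := rescale c normalizedProfile
  have hcont : ContDiff ℝ ω g :=
    (contDiff_normalizedProfile.comp (contDiff_const.mul contDiff_id)).div_const _
  have hodd : ∀ z, g (-z) = -g z := fun z => by
    simp only [g, rescale, mul_neg, normalizedProfile_neg, neg_div]
  have hzero : g 0 = 0 := by simp [g, rescale, normalizedProfile_zero]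
  have hanti : StrictAnti g := fun x y hxy => by
    have := strictAnti_normalizedProfile (mul_lt_mul_of_pos_left hxy hc)
    exact div_lt_div_of_pos_right this (by positivity)
  have htop : Tendsto g atTop (𝓝 (-1)) := by
    have hgL := tendsto_rescale_atTop hc hlim
    rwa [hcL, neg_div, div_self hL.ne'] at hgL
  have hbot : Tendsto g atBot (𝓝 1) := by
    have := (htop.comp tendsto_neg_atBot_atTop).neg
    simpa [Function.comp_def, hodd] using this
  have hode : SimilarityODE g :=
    (firstIntegral_normalizedProfile.rescale_div_pow hc.ne').similarityODE (hcont.of_le (by simp))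
  exact ⟨g, ⟨fun z => hcont.contDiffAt.analyticAt, hodd, hanti, fun z hz => hzero ▸ hanti hz, hbot,
    htop, hode⟩, fun f hf hf0 hflim hfode => hfode.eq_of_tendsto hode hf (hcont.of_le (by simp)) hf0
      hzero (by norm_num) hflim htop⟩

/-- there is exactly one real-analytic, odd, strictly decreasing
function `g`, positive for `z < 0`, with `g(−∞) = 1`, `g(+∞) = −1`, solving
the similarity ODE `(g g′)″ = 6 z g′ + 6 z² g″ + z³ g‴` of the
third-order-in-time NDE `u_ttt = (u u_x)_{xx}`. -/
theorem stmt9 :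
    ∃! g : ℝ → ℝ,
      (∀ z : ℝ, AnalyticAt ℝ g z) ∧
      (∀ z : ℝ, g (-z) = -g z) ∧
      StrictAnti g ∧
      (∀ z < (0:ℝ), 0 < g z) ∧
      Tendsto g atBot (nhds 1) ∧
      Tendsto g atTop (nhds (-1)) ∧
      (∀ z : ℝ,
        iteratedDeriv 2 (fun w => g w * deriv g w) z =
          6 * z * deriv g z + 6 * z ^ 2 * iteratedDeriv 2 g z
            + z ^ 3 * iteratedDeriv 3 g z) := by
  obtain ⟨g, hg, huniq⟩ := stmt9_general
  exact ⟨g, hg, fun f ⟨han, hodd, _, _, _, hlim, hode⟩ =>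
    huniq f (contDiff_iff_contDiffAt.2 fun z => (han z).contDiffAt) (Function.Odd.map_zero hodd)
      hlim hode⟩
end

section
/- Let g ∈ C³([0,∞)) satisfy the similarity ODE (g g′)″(z) = (10/9) z g′(z) + (4/9) z² g″(z) on (0,∞), with g(0) = 0 and g(z) ≥ 0 for all z ≥ 0. Assume the decay conditions (g g′)′(z)·g′(z) → 0 and (g′(z))³ → 0 as z → ∞, and that the integrals ∫₀^∞ g (g″)² dz and ∫₀^∞ z (g′)² dz converge. Then the identity −(2/3)(g′(0))³ − ∫₀^∞ g(z)(g″(z))² dz = (2/3) ∫₀^∞ z (g′(z))² dz holds; consequently g′(0) ≤ 0. In particular, there is no such nonnegative similarity profile with g′(0) > 0, so the blow-up similarity mechanism of the equation u_{tt} = (u u_x)_{xx} cannot create the non-entropy shock S₊(x) = sign(x). -/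
open Set Filter MeasureTheory

/-!
Multiplying `(g g')'' = (10/9) z g' + (4/9) z² g''` by `g'` and collecting exact derivatives gives
`((g g')' g' - (g')³ / 3 - (2/9) z² (g')²)' = g (g'')² + (2/3) z (g')²`, so the identity is the
fundamental theorem of calculus once the expression on the left is known to vanish at infinity.

Integrability of the right-hand side already forces this. The expression has a limit, so it is
enough to make it small along some filter tending to infinity. Since `g'` is square integrable near
infinity, `g = O(z)`, hence `g (g')²` is integrable there and, by the arithmetic-geometric mean
inequality, so is `g g' g''`. As `1 / z` is not integrable, `z (|g g' g''| + z (g')²)` clusters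
at `0`, and along a filter realising this both `g g' g''` and `z g'` tend to `0`.
-/

open Asymptotics Topology

section Asymptotics

variable {E : Type*} [NormedAddCommGroup E] [NormedSpace ℝ E]

lemma mapClusterPt_zero_smul_of_integrableAtFilter {f : ℝ → E}
    (hf : IntegrableAtFilter f atTop) : MapClusterPt 0 atTop (fun z ↦ z • f z) := by
  rw [Metric.nhds_basis_ball.mapClusterPt_iff_frequently]
  by_contra! ⟨ε, hε, hfar⟩
  have inv_isBigO : (fun z : ℝ ↦ z⁻¹) =O[atTop] f := by
    refine .of_bound ε⁻¹ ?_
    filter_upwards [hfar, eventually_gt_atTop 0] with z hz hz0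
    rw [mem_ball_zero_iff, not_lt, norm_smul, Real.norm_of_nonneg hz0.le] at hz
    rw [Real.norm_of_nonneg (inv_nonneg.2 hz0.le), inv_mul_eq_div, le_div_iff₀ hε,
      inv_mul_le_iff₀ hz0]
    exact hz
  obtain ⟨s, hs, hinv⟩ := inv_isBigO.integrableAtFilter
    measurable_inv.stronglyMeasurable.stronglyMeasurableAtFilter hf
  obtain ⟨a, ha⟩ := mem_atTop_sets.1 hs
  exact not_integrableOn_Ioi_inv (hinv.mono_set fun z hz ↦ ha z (le_of_lt hz))

lemma norm_sub_le_sub_add_integral_sq_norm_deriv {f f' : ℝ → E} {a b : ℝ} (hab : a ≤ b)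
    (hc : ContinuousOn f (Icc a b)) (hd : ∀ z ∈ Ioo a b, HasDerivAt f (f' z) z)
    (hint : IntervalIntegrable (fun z ↦ ‖f' z‖ ^ 2) volume a b) :
    ‖f b - f a‖ ≤ (b - a) + ∫ z in a..b, ‖f' z‖ ^ 2 := by
  calc
    ‖f b - f a‖ ≤ ∫ z in a..b, (1 + ‖f' z‖ ^ 2) := by
      refine norm_sub_le_integral_of_norm_deriv_le_of_le hab hc
        (fun z hz ↦ (hd z hz).differentiableAt.differentiableWithinAt)
        (.of_forall fun z hz ↦ ?_) (intervalIntegrable_const.add hint)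
      rw [(hd z hz).deriv]
      nlinarith [sq_nonneg (‖f' z‖ - 1)]
    _ = (b - a) + ∫ z in a..b, ‖f' z‖ ^ 2 := by
      rw [intervalIntegral.integral_add intervalIntegrable_const hint,
        intervalIntegral.integral_const, smul_eq_mul, mul_one]

lemma isBigO_id_of_integrableAtFilter_sq_norm_deriv {f f' : ℝ → E}
    (hd : ∀ᶠ z in atTop, HasDerivAt f (f' z) z)
    (hf : IntegrableAtFilter (fun z ↦ ‖f' z‖ ^ 2) atTop) : f =O[atTop] id := by
  obtain ⟨s, hs, hint⟩ := hf
  obtain ⟨a, ha⟩ := eventually_atTop.1 ((hd.and hs).and (eventually_ge_atTop 0))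
  have deriv_f : ∀ z ≥ a, HasDerivAt f (f' z) z := fun z hz ↦ (ha z hz).1.1
  have hint : IntegrableOn (fun z ↦ ‖f' z‖ ^ 2) (Ioi a) :=
    hint.mono_set fun z hz ↦ (ha z (le_of_lt hz)).1.2
  set I := ∫ z in Ioi a, ‖f' z‖ ^ 2
  have growth : ∀ z ≥ a, ‖f z - f a‖ ≤ z + I := by
    intro z hz
    have integral_le : ∫ t in a..z, ‖f' t‖ ^ 2 ≤ I := by
      rw [intervalIntegral.integral_of_le hz]
      exact setIntegral_mono_set hint (.of_forall fun _ ↦ sq_nonneg _)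
        Ioc_subset_Ioi_self.eventuallyLE
    calc
      ‖f z - f a‖ ≤ (z - a) + ∫ t in a..z, ‖f' t‖ ^ 2 :=
        norm_sub_le_sub_add_integral_sq_norm_deriv hz
          (fun t ht ↦ (deriv_f t ht.1).continuousAt.continuousWithinAt)
          (fun t ht ↦ deriv_f t ht.1.le)
          ((intervalIntegrable_iff_integrableOn_Ioc_of_le hz).2
            (hint.mono_set Ioc_subset_Ioi_self))
      _ ≤ z + I := add_le_add (sub_le_self z (ha a le_rfl).2) integral_le
  have increment_isBigO : (fun z ↦ f z - f a) =O[atTop] id :=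
    (IsBigO.of_bound' <| (eventually_ge_atTop a).mono fun z hz ↦
      (growth z hz).trans (le_abs_self _)).trans
      ((isBigO_refl id atTop).add (isLittleO_const_id_atTop I).isBigO)
  exact (increment_isBigO.add (isLittleO_const_id_atTop (f a)).isBigO).congr_left
    fun z ↦ sub_add_cancel _ _

end Asymptotics

/-- The boundary term `(g g')' g' - (g')³ / 3 - (2 / 9) z² (g')²` produced by multiplying the
similarity equation by `g'` and integrating by parts, with `(g g')'` expanded. -/
noncomputable def boundaryTerm (g g' g'' : ℝ → ℝ) (z : ℝ) : ℝ :=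
  (g' z ^ 2 + g z * g'' z) * g' z - g' z ^ 3 / 3 - (2 / 9) * (z * g' z) ^ 2

lemma boundaryTerm_zero {g : ℝ → ℝ} (g' g'' : ℝ → ℝ) (h0 : g 0 = 0) :
    boundaryTerm g g' g'' 0 = (2 / 3) * g' 0 ^ 3 := by
  rw [boundaryTerm, h0]
  ring

/-- A solution `g` of the similarity equation `(g g')'' = (10 / 9) z g' + (4 / 9) z² g''` on the
half-line, with first and second derivatives `g'` and `g''`. The flux derivative `(g g')'` is
written in its expanded form `(g')² + g g''`. -/
structure IsSimilarityProfile (g g' g'' : ℝ → ℝ) : Prop where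
  hasDerivWithinAt : ∀ z ∈ Ici 0, HasDerivWithinAt g (g' z) (Ici 0) z
  hasDerivWithinAt_deriv : ∀ z ∈ Ici 0, HasDerivWithinAt g' (g'' z) (Ici 0) z
  continuousOn_deriv2 : ContinuousOn g'' (Ici 0)
  hasDerivAt_deriv_flux : ∀ z ∈ Ioi 0, HasDerivAt (fun w ↦ g' w ^ 2 + g w * g'' w)
    ((10 / 9) * z * g' z + (4 / 9) * z ^ 2 * g'' z) z

namespace IsSimilarityProfile

variable {g g' g'' : ℝ → ℝ}

lemma of_contDiffOn {q : ℝ → ℝ} (hg : ContDiffOn ℝ 3 g (Ici 0))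
    (hg' : g' = derivWithin g (Ici 0)) (hg'' : g'' = derivWithin g' (Ici 0))
    (hq : q = derivWithin (fun w ↦ g w * g' w) (Ici 0))
    (hODE : ∀ z ∈ Ioi (0 : ℝ),
      derivWithin q (Ici 0) z = (10 / 9) * z * g' z + (4 / 9) * z ^ 2 * g'' z) :
    IsSimilarityProfile g g' g'' := by
  have unique : UniqueDiffOn ℝ (Ici (0 : ℝ)) := uniqueDiffOn_Ici 0
  have contDiff_deriv : ContDiffOn ℝ 2 g' (Ici 0) := hg' ▸ hg.derivWithin unique (by norm_num)
  have contDiff_deriv2 : ContDiffOn ℝ 1 g'' (Ici 0) :=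
    hg'' ▸ contDiff_deriv.derivWithin unique (by norm_num)
  have contDiff_deriv_flux : ContDiffOn ℝ 1 q (Ici 0) :=
    hq ▸ ((hg.of_le (by norm_num)).mul contDiff_deriv).derivWithin unique (by norm_num)
  have hasDeriv_g : ∀ z ∈ Ici 0, HasDerivWithinAt g (g' z) (Ici 0) z := fun z hz ↦
    hg' ▸ (hg.differentiableOn (by norm_num) z hz).hasDerivWithinAt
  have hasDeriv_deriv : ∀ z ∈ Ici 0, HasDerivWithinAt g' (g'' z) (Ici 0) z := fun z hz ↦
    hg'' ▸ (contDiff_deriv.differentiableOn (by norm_num) z hz).hasDerivWithinAt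
  have flux_eq : EqOn q (fun w ↦ g' w ^ 2 + g w * g'' w) (Ici 0) := by
    intro z hz
    rw [hq, ((hasDeriv_g z hz).fun_mul (hasDeriv_deriv z hz)).derivWithin (unique z hz)]
    ring
  refine ⟨hasDeriv_g, hasDeriv_deriv, contDiff_deriv2.continuousOn, fun z hz ↦ ?_⟩
  have hasDeriv_flux := (contDiff_deriv_flux.differentiableOn (by norm_num) z
    (Ioi_subset_Ici_self hz)).hasDerivWithinAt.hasDerivAt (Ici_mem_nhds hz)
  rw [hODE z hz] at hasDeriv_flux
  exact hasDeriv_flux.congr_of_eventuallyEq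
    (flux_eq.symm.eventuallyEq_of_mem (Ici_mem_nhds hz))

lemma continuousOn (h : IsSimilarityProfile g g' g'') : ContinuousOn g (Ici 0) :=
  HasDerivWithinAt.continuousOn h.hasDerivWithinAt

lemma continuousOn_deriv (h : IsSimilarityProfile g g' g'') : ContinuousOn g' (Ici 0) :=
  HasDerivWithinAt.continuousOn h.hasDerivWithinAt_deriv

lemma continuousOn_boundaryTerm (h : IsSimilarityProfile g g' g'') :
    ContinuousOn (boundaryTerm g g' g'') (Ici 0) := by
  have := h.continuousOn
  have := h.continuousOn_deriv
  have := h.continuousOn_deriv2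
  unfold boundaryTerm
  fun_prop

lemma hasDerivAt_boundaryTerm (h : IsSimilarityProfile g g' g'') {z : ℝ} (hz : 0 < z) :
    HasDerivAt (boundaryTerm g g' g'') (g z * g'' z ^ 2 + (2 / 3) * (z * g' z ^ 2)) z := by
  have hasDeriv_deriv : HasDerivAt g' (g'' z) z :=
    (h.hasDerivWithinAt_deriv z hz.le).hasDerivAt (Ici_mem_nhds hz)
  have hasDeriv_boundary :=
    (((h.hasDerivAt_deriv_flux z hz).fun_mul hasDeriv_deriv).fun_sub
      ((hasDeriv_deriv.fun_pow 3).div_const 3)).fun_sub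
      ((((hasDerivAt_id' z).fun_mul hasDeriv_deriv).fun_pow 2).const_mul (2 / 9))
  refine hasDeriv_boundary.congr_deriv ?_
  push_cast
  ring

lemma isBigO_id (h : IsSimilarityProfile g g' g'')
    (hint : IntegrableOn (fun z ↦ z * g' z ^ 2) (Ioi 0)) : g =O[atTop] id := by
  have hasDeriv_g : ∀ᶠ z in atTop, HasDerivAt g (g' z) z :=
    (eventually_gt_atTop 0).mono fun z hz ↦
      (h.hasDerivWithinAt z hz.le).hasDerivAt (Ici_mem_nhds hz)
  have deriv_sq_isBigO : (fun z ↦ g' z ^ 2) =O[atTop] fun z ↦ z * g' z ^ 2 := by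
    refine .of_bound' ((eventually_ge_atTop 1).mono fun z hz ↦ ?_)
    rw [norm_mul]
    exact le_mul_of_one_le_left (norm_nonneg _) (hz.trans (le_abs_self z))
  have deriv_sq_integrable : IntegrableAtFilter (fun z ↦ g' z ^ 2) atTop :=
    deriv_sq_isBigO.integrableAtFilter ⟨Ici 0, Ici_mem_atTop 0,
      (h.continuousOn_deriv.pow 2).aestronglyMeasurable measurableSet_Ici⟩
      ⟨Ioi 0, Ioi_mem_atTop 0, hint⟩
  exact isBigO_id_of_integrableAtFilter_sq_norm_deriv hasDeriv_g <| by
    simpa only [Real.norm_eq_abs, sq_abs] using deriv_sq_integrable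

lemma integrableAtFilter_mul_deriv_mul_deriv2 (h : IsSimilarityProfile g g' g'')
    (hint1 : IntegrableOn (fun z ↦ g z * g'' z ^ 2) (Ioi 0))
    (hint2 : IntegrableOn (fun z ↦ z * g' z ^ 2) (Ioi 0)) :
    IntegrableAtFilter (fun z ↦ g z * g' z * g'' z) atTop := by
  have cont_g := h.continuousOn
  have cont_deriv := h.continuousOn_deriv
  have cont_deriv2 := h.continuousOn_deriv2
  have weighted_deriv_integrable : IntegrableAtFilter (fun z ↦ g z * g' z ^ 2) atTop :=
    ((h.isBigO_id hint2).mul (isBigO_refl (fun z ↦ g' z ^ 2) atTop)).integrableAtFilter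
      ⟨Ici 0, Ici_mem_atTop 0,
        (cont_g.mul (cont_deriv.pow 2)).aestronglyMeasurable measurableSet_Ici⟩
      ⟨Ioi 0, Ioi_mem_atTop 0, hint2⟩
  have weighted_deriv2_integrable : IntegrableAtFilter (fun z ↦ g z * g'' z ^ 2) atTop :=
    ⟨Ioi 0, Ioi_mem_atTop 0, hint1⟩
  have am_gm : ∀ z, ‖g z * g' z * g'' z‖ ≤ ‖‖g z * g' z ^ 2‖ + ‖g z * g'' z ^ 2‖‖ := by
    intro z
    rw [Real.norm_of_nonneg (by positivity : 0 ≤ ‖g z * g' z ^ 2‖ + ‖g z * g'' z ^ 2‖)]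
    simp only [norm_mul, norm_pow]
    nlinarith [mul_nonneg (norm_nonneg (g z)) (sq_nonneg (‖g' z‖ - ‖g'' z‖)),
      mul_nonneg (norm_nonneg (g z)) (sq_nonneg (‖g' z‖ + ‖g'' z‖))]
  exact (IsBigO.of_bound' (.of_forall am_gm)).integrableAtFilter
    ⟨Ici 0, Ici_mem_atTop 0,
      ((cont_g.mul cont_deriv).mul cont_deriv2).aestronglyMeasurable measurableSet_Ici⟩
    (weighted_deriv_integrable.norm.add weighted_deriv2_integrable.norm)

lemma mapClusterPt_boundaryTerm (h : IsSimilarityProfile g g' g'')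
    (hint1 : IntegrableOn (fun z ↦ g z * g'' z ^ 2) (Ioi 0))
    (hint2 : IntegrableOn (fun z ↦ z * g' z ^ 2) (Ioi 0)) :
    MapClusterPt 0 atTop (boundaryTerm g g' g'') := by
  have integrable : IntegrableAtFilter (fun z ↦ ‖g z * g' z * g'' z‖ + z * g' z ^ 2) atTop :=
    (h.integrableAtFilter_mul_deriv_mul_deriv2 hint1 hint2).norm.add
      ⟨Ioi 0, Ioi_mem_atTop 0, hint2⟩
  obtain ⟨U, hU, hlim⟩ := mapClusterPt_iff_ultrafilter.1
    (mapClusterPt_zero_smul_of_integrableAtFilter integrable)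
  have one_le : ∀ᶠ z in U, (1 : ℝ) ≤ z := hU (eventually_ge_atTop 1)
  have cubic_tendsto : Tendsto (fun z ↦ g z * g' z * g'' z) U (𝓝 0) := by
    refine squeeze_zero_norm' (one_le.mono fun z hz ↦ ?_) hlim
    rw [smul_eq_mul]
    nlinarith [norm_nonneg (g z * g' z * g'' z), mul_nonneg (sq_nonneg z) (sq_nonneg (g' z))]
  have weighted_sq_tendsto : Tendsto (fun z ↦ (z * g' z) ^ 2) U (𝓝 0) := by
    refine squeeze_zero' (.of_forall fun z ↦ sq_nonneg _) (one_le.mono fun z hz ↦ ?_) hlim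
    rw [smul_eq_mul]
    nlinarith [mul_nonneg (zero_le_one.trans hz) (norm_nonneg (g z * g' z * g'' z))]
  have deriv_sq_tendsto : Tendsto (fun z ↦ g' z ^ 2) U (𝓝 0) := by
    refine squeeze_zero' (.of_forall fun z ↦ sq_nonneg _) (one_le.mono fun z hz ↦ ?_)
      weighted_sq_tendsto
    rw [mul_pow]
    exact le_mul_of_one_le_left (sq_nonneg _) (one_le_pow₀ hz)
  have deriv_tendsto : Tendsto g' U (𝓝 0) := by
    rw [tendsto_zero_iff_abs_tendsto_zero]
    simpa [Function.comp_def, Real.sqrt_sq_eq_abs] using deriv_sq_tendsto.sqrt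
  refine mapClusterPt_iff_ultrafilter.2 ⟨U, hU, ?_⟩
  have expanded_tendsto := (cubic_tendsto.add ((deriv_tendsto.pow 3).const_mul (2 / 3))).sub
    (weighted_sq_tendsto.const_mul (2 / 9))
  convert expanded_tendsto using 2
  · unfold boundaryTerm; ring
  · ring

lemma tendsto_boundaryTerm (h : IsSimilarityProfile g g' g'')
    (hint1 : IntegrableOn (fun z ↦ g z * g'' z ^ 2) (Ioi 0))
    (hint2 : IntegrableOn (fun z ↦ z * g' z ^ 2) (Ioi 0)) :
    Tendsto (boundaryTerm g g' g'') atTop (𝓝 0) := by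
  have converges := tendsto_limUnder_of_hasDerivAt_of_integrableOn_Ioi
    (fun z hz ↦ h.hasDerivAt_boundaryTerm hz) (hint1.add (hint2.const_mul (2 / 3)))
  have : (𝓝 0 ⊓ 𝓝 (limUnder atTop (boundaryTerm g g' g''))).NeBot :=
    (h.mapClusterPt_boundaryTerm hint1 hint2).clusterPt.mono converges
  rwa [← eq_of_nhds_neBot this] at converges

lemma integral_add_integral_eq_neg_boundaryTerm (h : IsSimilarityProfile g g' g'')
    (hint1 : IntegrableOn (fun z ↦ g z * g'' z ^ 2) (Ioi 0))
    (hint2 : IntegrableOn (fun z ↦ z * g' z ^ 2) (Ioi 0)) :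
    (∫ z in Ioi (0 : ℝ), g z * g'' z ^ 2) + (2 / 3) * ∫ z in Ioi (0 : ℝ), z * g' z ^ 2 =
      -boundaryTerm g g' g'' 0 := by
  rw [← integral_const_mul, ← integral_add hint1 (hint2.const_mul (2 / 3)), ← zero_sub]
  exact integral_Ioi_of_hasDerivAt_of_tendsto (h.continuousOn_boundaryTerm 0 self_mem_Ici)
    (fun z hz ↦ h.hasDerivAt_boundaryTerm hz) (hint1.add (hint2.const_mul (2 / 3)))
    (h.tendsto_boundaryTerm hint1 hint2)

end IsSimilarityProfile

theorem stmt10_general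
    (g g' g'' q : ℝ → ℝ)
    (hg : ContDiffOn ℝ 3 g (Ici 0))
    (hg' : g' = derivWithin g (Ici 0))
    (hg'' : g'' = derivWithin g' (Ici 0))
    (hq : q = derivWithin (fun w ↦ g w * g' w) (Ici 0))
    (hODE : ∀ z ∈ Ioi (0 : ℝ),
      derivWithin q (Ici 0) z = (10 / 9) * z * g' z + (4 / 9) * z ^ 2 * g'' z)
    (h0 : g 0 = 0)
    (hint1 : IntegrableOn (fun z ↦ g z * (g'' z) ^ 2) (Ioi 0))
    (hint2 : IntegrableOn (fun z ↦ z * (g' z) ^ 2) (Ioi 0)) :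
    (-(2 / 3) * (g' 0) ^ 3 - ∫ z in Ioi (0 : ℝ), g z * (g'' z) ^ 2 =
      (2 / 3) * ∫ z in Ioi (0 : ℝ), z * (g' z) ^ 2) ∧
    ((∀ z ∈ Ici (0 : ℝ), 0 ≤ g z) → g' 0 ≤ 0) := by
  have identity := (IsSimilarityProfile.of_contDiffOn hg hg' hg'' hq
    hODE).integral_add_integral_eq_neg_boundaryTerm hint1 hint2
  rw [boundaryTerm_zero g' g'' h0] at identity
  refine ⟨by linarith, fun hpos ↦ ?_⟩
  have deriv2_integral_nonneg : 0 ≤ ∫ z in Ioi (0 : ℝ), g z * (g'' z) ^ 2 :=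
    setIntegral_nonneg measurableSet_Ioi fun z hz ↦
      mul_nonneg (hpos z (Ioi_subset_Ici_self hz)) (sq_nonneg _)
  have deriv_integral_nonneg : 0 ≤ ∫ z in Ioi (0 : ℝ), z * (g' z) ^ 2 :=
    setIntegral_nonneg measurableSet_Ioi fun z hz ↦ mul_nonneg (le_of_lt hz) (sq_nonneg _)
  have cube_nonpos : g' 0 ^ 3 ≤ 0 := by linarith
  exact (Odd.pow_nonpos_iff (by decide)).1 cube_nonpos

/-- for a nonnegative C³([0,∞)) similarity profile of
`u_tt = (u u_x)_{xx}` with `g(0) = 0`, suitable decay and integrability, the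
integral identity `−(2/3)(g′(0))³ − ∫₀^∞ g (g″)² = (2/3) ∫₀^∞ z (g′)²` holds;
hence `g′(0) ≤ 0` and no such profile can create the non-entropy shock `S₊`. -/
theorem stmt10
    (g g' g'' q : ℝ → ℝ)
    (hg : ContDiffOn ℝ 3 g (Ici 0))
    (hg' : g' = derivWithin g (Ici 0))
    (hg'' : g'' = derivWithin g' (Ici 0))
    (hq : q = derivWithin (fun w => g w * g' w) (Ici 0))
    (hODE : ∀ z ∈ Ioi (0:ℝ),
      derivWithin q (Ici 0) z = (10/9) * z * g' z + (4/9) * z ^ 2 * g'' z)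
    (h0 : g 0 = 0)
    (hpos : ∀ z ∈ Ici (0:ℝ), 0 ≤ g z)
    (hdecay1 : Tendsto (fun z => q z * g' z) atTop (nhds 0))
    (hdecay2 : Tendsto (fun z => (g' z) ^ 3) atTop (nhds 0))
    (hint1 : IntegrableOn (fun z => g z * (g'' z) ^ 2) (Ioi 0))
    (hint2 : IntegrableOn (fun z => z * (g' z) ^ 2) (Ioi 0)) :
    (-(2/3) * (g' 0) ^ 3 - ∫ z in Ioi (0:ℝ), g z * (g'' z) ^ 2 =
      (2/3) * ∫ z in Ioi (0:ℝ), z * (g' z) ^ 2) ∧ g' 0 ≤ 0 := by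
  exact (stmt10_general g g' g'' q hg hg' hg'' hq hODE h0 hint1 hint2).imp_right (· hpos)
end

section
/- Define f_c : ℝ → ℝ by f_c(y) = 2 cos²(y/2) = 1 + cos y for |y| ≤ π and f_c(y) = 0 for |y| > π, and set u_c(x,t) := f_c(x + 3t). Then u_c is a weak solution of the Rosenau–Hyman K(2,2) equation u_t = (u u_x)_{xx} + 4 u u_x on ℝ × ℝ: for every test function φ ∈ C_c^∞(ℝ × ℝ), ∬ u_c ∂_t φ dx dt = (1/2) ∬ u_c² ∂_x³ φ dx dt + 2 ∬ u_c² ∂_x φ dx dt. -/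
open Set Filter MeasureTheory

/-!
Write `f` for the profile and `w = f²`. Since `1 + cos` vanishes to second order at `±π`, `w` is of
class `C²` on the whole line, with the derivatives of `(1 + cos)²` cut off outside `[-π, π]`; hence
the once integrated profile equation `w'' / 2 + 2 w = 3 f` holds everywhere, and no interface terms
appear. Against a test function `φ`, the function `f (x + 3 t)` is constant along the direction
`(-3, 1)`, so `∂ₜφ` may be traded for `3 ∂ₓφ`; and integrating by parts twice in `x` moves two of
the three derivatives of `φ` onto `w`. What remains is the profile equation tested against `∂ₓφ`.
-/

namespace RosenauHyman

section IteratedDerivatives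

variable {𝕜 F : Type*} [NontriviallyNormedField 𝕜] [NormedAddCommGroup F] [NormedSpace 𝕜 F]
  {s : Set 𝕜} {g : 𝕜 → F}

theorem hasDerivAt_iteratedDeriv {n : ℕ} (hg : ContDiff 𝕜 (n + 1) g) (x : 𝕜) :
    HasDerivAt (iteratedDeriv n g) (iteratedDeriv (n + 1) g x) x := by
  rw [iteratedDeriv_succ]
  exact (hg.differentiable_iteratedDeriv n (by norm_cast; lia) x).hasDerivAt

theorem hasDerivAt_indicator_zero {x : 𝕜} (hg : HasDerivAt g 0 x) (hx : g x = 0) :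
    HasDerivAt (s.indicator g) 0 x := by
  rw [hasDerivAt_iff_isLittleO] at hg ⊢
  refine Asymptotics.IsBigO.trans_isLittleO (Asymptotics.isBigO_of_le _ fun y => ?_) hg
  simpa [hx, indicator_apply_eq_zero.2 fun _ => hx] using norm_indicator_le_norm_self g y

theorem hasDerivAt_indicator {g' : 𝕜 → F} {x : 𝕜} (hg : HasDerivAt g (g' x) x)
    (h : x ∈ frontier s → g x = 0 ∧ g' x = 0) :
    HasDerivAt (s.indicator g) (s.indicator g' x) x := by
  by_cases hfr : x ∈ frontier s
  · obtain ⟨hgx, hgx'⟩ := h hfr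
    rw [indicator_apply_eq_zero.2 fun _ => hgx']
    exact hasDerivAt_indicator_zero (hgx' ▸ hg) hgx
  by_cases hxs : x ∈ s
  · have hint : s ∈ nhds x := by
      by_contra hn
      exact hfr ⟨subset_closure hxs, fun hi => hn (mem_interior_iff_mem_nhds.1 hi)⟩
    rw [indicator_of_mem hxs]
    exact hg.congr_of_eventuallyEq (eventuallyEq_of_mem hint fun y hy => indicator_of_mem hy g)
  · have hint : (closure s)ᶜ ∈ nhds x :=
      isClosed_closure.isOpen_compl.mem_nhds fun hc => hfr ⟨hc, fun hi => hxs (interior_subset hi)⟩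
    rw [indicator_of_notMem hxs]
    exact (hasDerivAt_const x 0).congr_of_eventuallyEq
      (eventuallyEq_of_mem hint fun y hy => indicator_of_notMem (fun h => hy (subset_closure h)) g)

theorem iteratedDeriv_indicator {n : ℕ} (hg : ContDiff 𝕜 n g)
    (h : ∀ k ≤ n, ∀ x ∈ frontier s, iteratedDeriv k g x = 0) :
    iteratedDeriv n (s.indicator g) = s.indicator (iteratedDeriv n g) := by
  induction n with
  | zero => simp
  | succ n ih =>
    rw [iteratedDeriv_succ, ih (hg.of_le (by norm_cast; lia)) fun k hk => h k (by lia)]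
    funext x
    exact (hasDerivAt_indicator (hasDerivAt_iteratedDeriv hg x)
      fun hx => ⟨h n (by lia) x hx, h (n + 1) le_rfl x hx⟩).deriv

theorem contDiff_indicator {n : ℕ} (hg : ContDiff 𝕜 n g)
    (h : ∀ k ≤ n, ∀ x ∈ frontier s, iteratedDeriv k g x = 0) :
    ContDiff 𝕜 n (s.indicator g) := by
  have hderiv : ∀ k ≤ n, iteratedDeriv k (s.indicator g) = s.indicator (iteratedDeriv k g) :=
    fun k hk => iteratedDeriv_indicator (hg.of_le (by exact_mod_cast hk))
      fun j hj => h j (hj.trans hk)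
  rw [contDiff_nat_iff_iteratedDeriv]
  refine ⟨fun k hk => ?_, fun k hk => ?_⟩
  · rw [hderiv k hk]
    exact (hg.continuous_iteratedDeriv k (by exact_mod_cast hk)).indicator fun x hx => h k hk x hx
  · rw [hderiv k hk.le]
    have hgk : ContDiff 𝕜 (k + 1) g := hg.of_le (by exact_mod_cast hk)
    exact fun x => (hasDerivAt_indicator (hasDerivAt_iteratedDeriv hgk x)
      fun hx => ⟨h k hk.le x hx, h (k + 1) hk x hx⟩).differentiableAt

end IteratedDerivatives

section PartialDerivatives

variable {𝕜 F : Type*} [NontriviallyNormedField 𝕜] [NormedAddCommGroup F] [NormedSpace 𝕜 F]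
  {φ : 𝕜 → 𝕜 → F} {x t : 𝕜}

theorem deriv_left_eq_fderiv_uncurry (h : DifferentiableAt 𝕜 (Function.uncurry φ) (x, t)) :
    deriv (fun y => φ y t) x = fderiv 𝕜 (Function.uncurry φ) (x, t) (1, 0) :=
  (h.hasFDerivAt.comp_hasDerivAt (f := fun y => (y, t)) x
    ((hasDerivAt_id' x).prodMk (hasDerivAt_const x t))).deriv

theorem deriv_right_eq_fderiv_uncurry (h : DifferentiableAt 𝕜 (Function.uncurry φ) (x, t)) :
    deriv (fun s => φ x s) t = fderiv 𝕜 (Function.uncurry φ) (x, t) (0, 1) :=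
  (h.hasFDerivAt.comp_hasDerivAt t ((hasDerivAt_const t x).prodMk (hasDerivAt_id' t))).deriv

end PartialDerivatives

theorem hasCompactSupport_slice {X Y Z : Type*} [TopologicalSpace X] [T2Space X]
    [TopologicalSpace Y] [T2Space Y] [Zero Z] {φ : X → Y → Z}
    (h : HasCompactSupport (Function.uncurry φ)) (t : Y) : HasCompactSupport fun x => φ x t := by
  have hemb : Topology.IsClosedEmbedding fun x : X => (x, t) :=
    Function.LeftInverse.isClosedEmbedding (f := Prod.fst) (fun _ => rfl) continuous_fst
      (by fun_prop)
  exact h.comp_isClosedEmbedding hemb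

section IntegrationByParts

theorem integral_mul_iteratedDeriv {A : Type*} [NormedRing A] [NormedAlgebra ℝ A] {n : ℕ}
    {f g : ℝ → A} (hf : ContDiff ℝ n f) (hg : ContDiff ℝ n g) (hgc : HasCompactSupport g) :
    ∫ x, f x * iteratedDeriv n g x = (-1 : ℝ) ^ n • ∫ x, iteratedDeriv n f x * g x := by
  induction n generalizing g with
  | zero => simp
  | succ n ih =>
    have hg' : ContDiff ℝ n (deriv g) := hg.deriv'
    have hcf : Continuous (iteratedDeriv n f) :=
      hf.continuous_iteratedDeriv n (by norm_cast; lia)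
    have hcf' : Continuous (iteratedDeriv (n + 1) f) := hf.continuous_iteratedDeriv' (n + 1)
    have hparts : ∫ x, iteratedDeriv n f x * deriv g x
        = -∫ x, iteratedDeriv (n + 1) f x * g x := by
      exact integral_mul_deriv_eq_deriv_mul_of_integrable
        (fun x _ => hasDerivAt_iteratedDeriv hf x)
        (fun x _ => (hg.differentiable (by simp) x).hasDerivAt)
        ((hcf.mul hg'.continuous).integrable_of_hasCompactSupport hgc.deriv.mul_left)
        ((hcf'.mul hg.continuous).integrable_of_hasCompactSupport hgc.mul_left)
        ((hcf.mul hg.continuous).integrable_of_hasCompactSupport hgc.mul_left)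
    rw [iteratedDeriv_succ', ih (hf.of_le (by norm_cast; lia)) hg' hgc.deriv, hparts, pow_succ]
    simp

variable {E : Type*} [NormedAddCommGroup E] [NormedSpace ℝ E] [MeasurableSpace E] [BorelSpace E]
  {μ : Measure E} {u Φ : E → ℝ}

theorem integrable_mul_fderiv [IsFiniteMeasureOnCompacts μ] (hu : Continuous u)
    (hΦ : ContDiff ℝ 1 Φ) (hΦc : HasCompactSupport Φ) (v : E) :
    Integrable (fun p => u p * fderiv ℝ Φ p v) μ := by
  have hcont : Continuous fun p => fderiv ℝ Φ p v :=
    (hΦ.continuous_fderiv one_ne_zero).clm_apply continuous_const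
  exact (hu.mul hcont).integrable_of_hasCompactSupport (hΦc.fderiv_apply ℝ v).mul_left

theorem integral_mul_fderiv_eq_zero_of_invariant [FiniteDimensional ℝ E] [μ.IsAddHaarMeasure]
    (hu : Continuous u) {v : E} (huv : ∀ p (s : ℝ), u (p + s • v) = u p)
    (hΦ : ContDiff ℝ 1 Φ) (hΦc : HasCompactSupport Φ) :
    ∫ p, u p * fderiv ℝ Φ p v ∂μ = 0 := by
  have hline : ∀ p, HasLineDerivAt ℝ u 0 p v := fun p => by
    simpa only [HasLineDerivAt, huv] using hasDerivAt_const 0 (u p)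
  have hparts := integral_bilinear_hasLineDerivAt_right_eq_neg_left_of_integrable
    (μ := μ) (B := ContinuousLinearMap.mul ℝ ℝ) (by simp) (integrable_mul_fderiv hu hΦ hΦc v)
    ((hu.mul hΦ.continuous).integrable_of_hasCompactSupport hΦc.mul_left)
    (fun p _ => hline p)
    (fun p _ => (hΦ.differentiable one_ne_zero p).hasFDerivAt.hasLineDerivAt v)
  simpa using hparts

end IntegrationByParts

section TravellingWave

variable {f w : ℝ → ℝ} {φ : ℝ → ℝ → ℝ} {a b c : ℝ}

theorem integrable_travellingWave_mul_fderiv (hf : Continuous f) (c : ℝ)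
    (hφ : ContDiff ℝ 1 (Function.uncurry φ)) (hφc : HasCompactSupport (Function.uncurry φ))
    (v : ℝ × ℝ) :
    Integrable fun p : ℝ × ℝ => f (p.1 + c * p.2) * fderiv ℝ (Function.uncurry φ) p v :=
  integrable_mul_fderiv (hf.comp (by fun_prop)) hφ hφc v

theorem integral_travellingWave_mul_deriv_left (hf : Continuous f) (c : ℝ)
    (hφ : ContDiff ℝ 1 (Function.uncurry φ)) (hφc : HasCompactSupport (Function.uncurry φ)) :
    ∫ t, ∫ x, f (x + c * t) * deriv (fun y => φ y t) x =
      ∫ p : ℝ × ℝ, f (p.1 + c * p.2) * fderiv ℝ (Function.uncurry φ) p (1, 0) := by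
  simp only [deriv_left_eq_fderiv_uncurry (hφ.differentiable one_ne_zero _)]
  exact (integral_prod_symm _ (integrable_travellingWave_mul_fderiv hf c hφ hφc _)).symm

theorem integral_travellingWave_mul_deriv_right (hf : Continuous f) (c : ℝ)
    (hφ : ContDiff ℝ 1 (Function.uncurry φ)) (hφc : HasCompactSupport (Function.uncurry φ)) :
    ∫ t, ∫ x, f (x + c * t) * deriv (fun s => φ x s) t =
      c * ∫ t, ∫ x, f (x + c * t) * deriv (fun y => φ y t) x := by
  have hint := integrable_travellingWave_mul_fderiv hf c hφ hφc
  have hzero : ∫ p : ℝ × ℝ, f (p.1 + c * p.2) * fderiv ℝ (Function.uncurry φ) p (-c, 1) = 0 :=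
    integral_mul_fderiv_eq_zero_of_invariant (u := fun p : ℝ × ℝ => f (p.1 + c * p.2))
      (hf.comp (by fun_prop)) (fun p s => congrArg f (by simp; ring)) hφ hφc
  have hdir : ((-c, 1) : ℝ × ℝ) = (0, 1) - c • (1, 0) := by simp
  simp only [hdir, map_sub, map_smul, smul_eq_mul, mul_sub, mul_left_comm _ c] at hzero
  rw [integral_sub (hint _) ((hint _).const_mul c), integral_const_mul, sub_eq_zero] at hzero
  rw [integral_travellingWave_mul_deriv_left hf c hφ hφc, ← hzero]
  simp only [deriv_right_eq_fderiv_uncurry (hφ.differentiable one_ne_zero _)]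
  exact (integral_prod_symm _ (hint _)).symm

theorem integral_travellingWave_mul_iteratedDeriv_three (hw : ContDiff ℝ 2 w) (c : ℝ)
    (hφ : ContDiff ℝ 3 (Function.uncurry φ)) (hφc : HasCompactSupport (Function.uncurry φ))
    (t : ℝ) :
    ∫ x, w (x + c * t) * iteratedDeriv 3 (fun y => φ y t) x =
      ∫ x, iteratedDeriv 2 w (x + c * t) * deriv (fun y => φ y t) x := by
  have hslice : ContDiff ℝ 3 fun y => φ y t := hφ.comp (contDiff_prodMk_left t)
  have hparts := integral_mul_iteratedDeriv (n := 2) (f := fun x => w (x + c * t))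
    (hw.comp (by fun_prop)) (hslice.deriv' (n := 2)) (hasCompactSupport_slice hφc t).deriv
  simpa only [iteratedDeriv_succ' (n := 2), iteratedDeriv_comp_add_const, even_two.neg_one_pow,
    one_smul] using hparts

theorem integral_travellingWave_of_profile_equation (hf : Continuous f) (hw : ContDiff ℝ 2 w)
    (hfw : ∀ y, a * iteratedDeriv 2 w y + b * w y = c * f y)
    (hφ : ContDiff ℝ 3 (Function.uncurry φ)) (hφc : HasCompactSupport (Function.uncurry φ)) :
    ∫ t, ∫ x, f (x + c * t) * deriv (fun s => φ x s) t =
      a * (∫ t, ∫ x, w (x + c * t) * iteratedDeriv 3 (fun y => φ y t) x)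
        + b * ∫ t, ∫ x, w (x + c * t) * deriv (fun y => φ y t) x := by
  have hφ₁ : ContDiff ℝ 1 (Function.uncurry φ) := hφ.of_le (by norm_num)
  have hw'' : Continuous (iteratedDeriv 2 w) := hw.continuous_iteratedDeriv' 2
  have hint := fun {h : ℝ → ℝ} (hh : Continuous h) =>
    integrable_travellingWave_mul_fderiv hh c hφ₁ hφc (1, 0)
  simp only [integral_travellingWave_mul_iteratedDeriv_three hw c hφ hφc]
  rw [integral_travellingWave_mul_deriv_right hf c hφ₁ hφc,
    integral_travellingWave_mul_deriv_left hf c hφ₁ hφc,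
    integral_travellingWave_mul_deriv_left hw'' c hφ₁ hφc,
    integral_travellingWave_mul_deriv_left hw.continuous c hφ₁ hφc, ← integral_const_mul,
    ← integral_const_mul, ← integral_const_mul,
    ← integral_add ((hint hw'').const_mul a) ((hint hw.continuous).const_mul b)]
  simp only [← mul_assoc, ← add_mul, hfw]

end TravellingWave

section Compacton

open Real

/-- The profile `f_c` of the compacton: one arch of `1 + cos`, extended by zero. -/
noncomputable def compactonProfile : ℝ → ℝ := (Icc (-π) π).indicator fun y => 1 + cos y

theorem compactonProfile_eq_ite (y : ℝ) :
    compactonProfile y = if |y| ≤ π then 1 + cos y else 0 := by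
  simp only [compactonProfile, indicator_apply, mem_Icc, abs_le]

theorem compactonProfile_sq :
    (fun y => compactonProfile y ^ 2) = (Icc (-π) π).indicator fun y => (1 + cos y) ^ 2 := by
  funext y
  by_cases hy : y ∈ Icc (-π) π <;> simp [compactonProfile, hy]

theorem cos_eq_neg_one_of_mem_frontier {y : ℝ} (hy : y ∈ frontier (Icc (-π) π)) :
    cos y = -1 := by
  rw [frontier_Icc (by linarith [pi_pos])] at hy
  rcases hy with rfl | rfl <;> simp

theorem continuous_compactonProfile : Continuous compactonProfile :=
  Continuous.indicator
    (fun y hy => by simp [cos_eq_neg_one_of_mem_frontier hy]) (by fun_prop)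

theorem deriv_one_add_cos_sq :
    deriv (fun y => (1 + cos y) ^ 2) = fun y => -2 * ((1 + cos y) * sin y) := by
  funext y
  refine (((hasDerivAt_cos y).const_add 1).pow 2).deriv.trans ?_
  simp only [Nat.cast_ofNat, Nat.add_one_sub_one, pow_one]
  ring

theorem iteratedDeriv_two_one_add_cos_sq :
    iteratedDeriv 2 (fun y => (1 + cos y) ^ 2) = fun y => 2 * (1 + cos y) * (1 - 2 * cos y) := by
  rw [iteratedDeriv_succ, iteratedDeriv_one, deriv_one_add_cos_sq]
  funext y
  refine ((((hasDerivAt_cos y).const_add 1).mul (hasDerivAt_sin y)).const_mul (-2)).deriv.trans ?_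
  linear_combination 2 * sin_sq_add_cos_sq y

theorem iteratedDeriv_one_add_cos_sq_eq_zero {k : ℕ} (hk : k ≤ 2) {y : ℝ}
    (hy : y ∈ frontier (Icc (-π) π)) : iteratedDeriv k (fun y => (1 + cos y) ^ 2) y = 0 := by
  have hcos := cos_eq_neg_one_of_mem_frontier hy
  interval_cases k
  · simp [hcos]
  · simp [hcos]
  · simp [iteratedDeriv_two_one_add_cos_sq, hcos]

theorem contDiff_compactonProfile_sq : ContDiff ℝ 2 fun y => compactonProfile y ^ 2 := by
  rw [compactonProfile_sq]
  exact contDiff_indicator (n := 2) (by fun_prop) fun k hk y hy =>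
    iteratedDeriv_one_add_cos_sq_eq_zero hk hy

theorem compactonProfile_equation (y : ℝ) :
    1 / 2 * iteratedDeriv 2 (fun y => compactonProfile y ^ 2) y + 2 * compactonProfile y ^ 2 =
      3 * compactonProfile y := by
  rw [compactonProfile_sq, iteratedDeriv_indicator (by fun_prop) fun k hk y hy =>
    iteratedDeriv_one_add_cos_sq_eq_zero hk hy, iteratedDeriv_two_one_add_cos_sq]
  by_cases hy : y ∈ Icc (-π) π
  · simp only [compactonProfile, indicator_of_mem hy]
    ring
  · simp only [compactonProfile, indicator_of_notMem hy]
    ring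

end Compacton

end RosenauHyman

open RosenauHyman

theorem stmt11_general
    (fc : ℝ → ℝ)
    (hfc : ∀ y : ℝ, fc y = if |y| ≤ Real.pi then 1 + Real.cos y else 0)
    (φ : ℝ → ℝ → ℝ)
    (hφ : ContDiff ℝ 3 (fun p : ℝ × ℝ => φ p.1 p.2))
    (hφc : HasCompactSupport (fun p : ℝ × ℝ => φ p.1 p.2)) :
    (∫ t : ℝ, ∫ x : ℝ, fc (x + 3 * t) * deriv (fun s => φ x s) t) =
      (1/2) * (∫ t : ℝ, ∫ x : ℝ,
          (fc (x + 3 * t)) ^ 2 * iteratedDeriv 3 (fun y => φ y t) x)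
        + 2 * (∫ t : ℝ, ∫ x : ℝ,
          (fc (x + 3 * t)) ^ 2 * deriv (fun y => φ y t) x) := by
  obtain rfl : fc = compactonProfile :=
    funext fun y => (hfc y).trans (compactonProfile_eq_ite y).symm
  exact integral_travellingWave_of_profile_equation continuous_compactonProfile
    contDiff_compactonProfile_sq compactonProfile_equation hφ hφc

/-- the Rosenau–Hyman compacton `u_c(x,t) = f_c(x+3t)`, with
`f_c(y) = 1 + cos y` on `|y| ≤ π` and `0` outside, is a weak solution of the
K(2,2) equation `u_t = (u u_x)_{xx} + 4 u u_x`. -/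
theorem stmt11
    (fc : ℝ → ℝ)
    (hfc : ∀ y : ℝ, fc y = if |y| ≤ Real.pi then 1 + Real.cos y else 0)
    (φ : ℝ → ℝ → ℝ)
    (hφ : ContDiff ℝ (⊤ : ℕ∞) (fun p : ℝ × ℝ => φ p.1 p.2))
    (hφc : HasCompactSupport (fun p : ℝ × ℝ => φ p.1 p.2)) :
    (∫ t : ℝ, ∫ x : ℝ, fc (x + 3 * t) * deriv (fun s => φ x s) t) =
      (1/2) * (∫ t : ℝ, ∫ x : ℝ,
          (fc (x + 3 * t)) ^ 2 * iteratedDeriv 3 (fun y => φ y t) x)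
        + 2 * (∫ t : ℝ, ∫ x : ℝ,
          (fc (x + 3 * t)) ^ 2 * deriv (fun y => φ y t) x) :=
  stmt11_general fc hfc φ (hφ.of_le (by norm_cast)) hφc
end

section
/- Define h_c : ℝ → ℝ by h_c(y) = cos y for |y| ≤ π/2 and h_c(y) = 0 for |y| > π/2, and set u(x,t) := h_c(x + 2t). Then at every point (x,t) with |x + 2t| < π/2 the function u is smooth and satisfies the cubic compacton equation u_t = (u² u_x)_{xx} + 9 u² u_x classically (and trivially also wherever |x + 2t| > π/2, since u ≡ 0 there). -/
open Set Filter

/-!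
Translations and dilations are harmless for derivatives, so `u(x, t) = f (x + c t)` solves the
equation at `(x, t)` exactly when its profile solves the ordinary differential equation
`c f' = (f² f')'' + 9 f² f'` at `x + c t`. This condition depends only on the germ of `f`, and away
from `±π/2` the compacton has the germ of `cos` or of `0`. For `f = A cos` the flux `f² f'` is
`-(A³/4) (sin y + sin 3y)`, and `∂² + 9` annihilates `sin 3y` and multiplies `sin y` by `8`:
what remains is `-2A³ sin y = 2A² f'`, so the speed is `2A²`.
-/

open scoped Topology

/-- The cubic compacton equation `u_t = (u² u_x)_{xx} + 9 u² u_x` at the point `(x, t)`. Derivatives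
that do not exist have the value `0`, so this is the classical equation only where `u` is smooth. -/
def IsCompactonSolutionAt (u : ℝ → ℝ → ℝ) (x t : ℝ) : Prop :=
  deriv (fun s => u x s) t =
    iteratedDeriv 2 (fun y => (u y t) ^ 2 * deriv (fun z => u z t) y) x
      + 9 * (u x t) ^ 2 * deriv (fun y => u y t) x

/-- The profile equation `c f' = (f² f')'' + 9 f² f'` at the point `y`, satisfied by the profiles of
waves of the cubic compacton equation that travel to the left with speed `c`. As in
`IsCompactonSolutionAt`, derivatives that do not exist have the value `0`. -/
def IsCompactonProfileAt (c : ℝ) (f : ℝ → ℝ) (y : ℝ) : Prop :=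
  c * deriv f y = iteratedDeriv 2 (fun z => f z ^ 2 * deriv f z) y + 9 * f y ^ 2 * deriv f y

/-- The wave `f (x + c t)` with profile `f`, travelling to the left with speed `c`. -/
def travellingWave (c : ℝ) (f : ℝ → ℝ) (x t : ℝ) : ℝ :=
  f (x + c * t)

/-- The profile `h_c` of the explicit compacton: one arch of the cosine, extended by zero. -/
noncomputable def compactonProfile (y : ℝ) : ℝ :=
  if |y| ≤ Real.pi / 2 then Real.cos y else 0

section TravellingWave

variable (c : ℝ) (f : ℝ → ℝ) (x t : ℝ)

theorem deriv_travellingWave_time :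
    deriv (fun s => travellingWave c f x s) t = c * deriv f (x + c * t) := by
  simpa only [travellingWave, deriv_comp_const_add, smul_eq_mul] using
    deriv_comp_mul_left c (fun z => f (x + z)) t

theorem deriv_travellingWave_space :
    deriv (fun z => travellingWave c f z t) x = deriv f (x + c * t) :=
  deriv_comp_add_const f (c * t) x

variable {c f x t}

theorem isCompactonSolutionAt_travellingWave_iff :
    IsCompactonSolutionAt (travellingWave c f) x t ↔ IsCompactonProfileAt c f (x + c * t) := by
  have flux_deriv :
      iteratedDeriv 2 (fun z => f (z + c * t) ^ 2 * deriv f (z + c * t)) x =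
        iteratedDeriv 2 (fun z => f z ^ 2 * deriv f z) (x + c * t) :=
    congrFun (iteratedDeriv_comp_add_const 2 (fun z => f z ^ 2 * deriv f z) (c * t)) x
  simp only [IsCompactonSolutionAt, deriv_travellingWave_time, deriv_travellingWave_space]
  simp only [travellingWave, flux_deriv, IsCompactonProfileAt]

theorem contDiffAt_travellingWave {n : WithTop ℕ∞} (hf : ContDiffAt ℝ n f (x + c * t)) :
    ContDiffAt ℝ n (fun p : ℝ × ℝ => travellingWave c f p.1 p.2) (x, t) :=
  hf.comp (x, t) (f := fun p : ℝ × ℝ => p.1 + c * p.2) (by fun_prop)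

theorem IsCompactonProfileAt.congr_of_eventuallyEq {g : ℝ → ℝ} {y : ℝ}
    (hf : IsCompactonProfileAt c f y) (hgf : g =ᶠ[𝓝 y] f) : IsCompactonProfileAt c g y := by
  have flux_eq : (fun z => g z ^ 2 * deriv g z) =ᶠ[𝓝 y] fun z => f z ^ 2 * deriv f z :=
    (hgf.pow_const 2).mul hgf.deriv
  rwa [IsCompactonProfileAt, flux_eq.iteratedDeriv_eq 2, hgf.deriv_eq, hgf.eq_of_nhds]

end TravellingWave

theorem isCompactonProfileAt_const (c a y : ℝ) : IsCompactonProfileAt c (fun _ => a) y := by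
  simp [IsCompactonProfileAt]

theorem iteratedDeriv_two_sin_const_mul (k y : ℝ) :
    iteratedDeriv 2 (fun z => Real.sin (k * z)) y = -k ^ 2 * Real.sin (k * y) := by
  have sin_deriv : iteratedDeriv 2 Real.sin = -Real.sin := by
    simpa using Real.iteratedDeriv_even_sin 1
  rw [iteratedDeriv_comp_const_mul Real.contDiff_sin, sin_deriv]
  simp

theorem cos_sq_mul_sin (y : ℝ) :
    Real.cos y ^ 2 * Real.sin y = (Real.sin y + Real.sin (3 * y)) / 4 := by
  rw [Real.sin_three_mul, Real.cos_sq']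
  ring

theorem iteratedDeriv_two_cos_sq_mul_sin (y : ℝ) :
    iteratedDeriv 2 (fun z => Real.cos z ^ 2 * Real.sin z) y =
      2 * Real.sin y - 9 * (Real.cos y ^ 2 * Real.sin y) := by
  calc iteratedDeriv 2 (fun z => Real.cos z ^ 2 * Real.sin z) y
      = iteratedDeriv 2 (fun z => 4⁻¹ * (Real.sin (1 * z) + Real.sin (3 * z))) y := by
        simp only [cos_sq_mul_sin, one_mul, div_eq_inv_mul]
    _ = 4⁻¹ * (-1 ^ 2 * Real.sin (1 * y) + -3 ^ 2 * Real.sin (3 * y)) := by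
        rw [iteratedDeriv_const_mul_field, iteratedDeriv_fun_add (by fun_prop) (by fun_prop),
          iteratedDeriv_two_sin_const_mul, iteratedDeriv_two_sin_const_mul]
    _ = 2 * Real.sin y - 9 * (Real.cos y ^ 2 * Real.sin y) := by
        rw [cos_sq_mul_sin, one_mul]
        ring

theorem isCompactonProfileAt_const_mul_cos (A y : ℝ) :
    IsCompactonProfileAt (2 * A ^ 2) (fun z => A * Real.cos z) y := by
  have profile_deriv (z : ℝ) : deriv (fun w => A * Real.cos w) z = -(A * Real.sin z) := by
    simp
  have flux_eq : (fun z => (A * Real.cos z) ^ 2 * deriv (fun w => A * Real.cos w) z) =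
      fun z => -A ^ 3 * (Real.cos z ^ 2 * Real.sin z) := by
    funext z
    rw [profile_deriv]
    ring
  rw [IsCompactonProfileAt, flux_eq, profile_deriv, iteratedDeriv_const_mul_field,
    iteratedDeriv_two_cos_sq_mul_sin]
  ring

section Compacton

variable {y : ℝ}

theorem compactonProfile_eventuallyEq_cos (hy : |y| < Real.pi / 2) :
    compactonProfile =ᶠ[𝓝 y] Real.cos := by
  filter_upwards [continuous_abs.continuousAt.eventually_lt_const hy] with z hz
  exact if_pos hz.le

theorem compactonProfile_eventuallyEq_zero (hy : Real.pi / 2 < |y|) :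
    compactonProfile =ᶠ[𝓝 y] fun _ => 0 := by
  filter_upwards [continuous_abs.continuousAt.eventually_const_lt hy] with z hz
  exact if_neg hz.not_ge

theorem contDiffAt_compactonProfile {n : WithTop ℕ∞} (hy : |y| < Real.pi / 2) :
    ContDiffAt ℝ n compactonProfile y :=
  Real.contDiff_cos.contDiffAt.congr_of_eventuallyEq (compactonProfile_eventuallyEq_cos hy)

theorem isCompactonProfileAt_compactonProfile (hy : |y| ≠ Real.pi / 2) :
    IsCompactonProfileAt 2 compactonProfile y := by
  rcases hy.lt_or_gt with interior | exterior
  · have cos_profile : IsCompactonProfileAt 2 Real.cos y := by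
      simpa using isCompactonProfileAt_const_mul_cos 1 y
    exact cos_profile.congr_of_eventuallyEq (compactonProfile_eventuallyEq_cos interior)
  · exact (isCompactonProfileAt_const 2 0 y).congr_of_eventuallyEq
      (compactonProfile_eventuallyEq_zero exterior)

end Compacton

/-- the travelling compacton `u(x,t) = h_c(x+2t)`, with profile
`cos` on `|y| ≤ π/2` extended by zero, is smooth and satisfies the cubic
compacton equation `u_t = (u² u_x)_{xx} + 9 u² u_x` classically wherever
`|x+2t| < π/2`, and trivially wherever `|x+2t| > π/2`. -/
theorem stmt13
    (hc : ℝ → ℝ)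
    (hhc : ∀ y : ℝ, hc y = if |y| ≤ Real.pi / 2 then Real.cos y else 0)
    (u : ℝ → ℝ → ℝ)
    (hu : ∀ x t : ℝ, u x t = hc (x + 2 * t)) :
    (∀ x t : ℝ, |x + 2 * t| < Real.pi / 2 →
      ContDiffAt ℝ (⊤ : ℕ∞) (fun p : ℝ × ℝ => u p.1 p.2) (x, t) ∧
      deriv (fun s => u x s) t =
        iteratedDeriv 2 (fun y => (u y t) ^ 2 * deriv (fun z => u z t) y) x
          + 9 * (u x t) ^ 2 * deriv (fun y => u y t) x) ∧
    (∀ x t : ℝ, Real.pi / 2 < |x + 2 * t| →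
      deriv (fun s => u x s) t =
        iteratedDeriv 2 (fun y => (u y t) ^ 2 * deriv (fun z => u z t) y) x
          + 9 * (u x t) ^ 2 * deriv (fun y => u y t) x) := by
  obtain rfl : hc = compactonProfile := funext hhc
  obtain rfl : u = travellingWave 2 compactonProfile := funext₂ hu
  have solves (x t : ℝ) (hx : |x + 2 * t| ≠ Real.pi / 2) :
      IsCompactonSolutionAt (travellingWave 2 compactonProfile) x t :=
    isCompactonSolutionAt_travellingWave_iff.2 (isCompactonProfileAt_compactonProfile hx)
  exact ⟨fun x t hx =>
      ⟨contDiffAt_travellingWave (contDiffAt_compactonProfile hx), solves x t hx.ne⟩,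
    fun x t hx => solves x t hx.ne'⟩
end

section
/- Define f_c(y) = 2 cos²(y/2) for |y| ≤ π and f_c(y) = 0 for |y| > π. There exists δ₀ > 0 such that for every δ ∈ (0, δ₀) the ordinary differential equation 3 f = (f f′)′ + 2 f² + C_δ, with constant of integration C_δ = 3δ − 2δ², admits a strictly positive real-analytic solution f_δ : ℝ → (0,∞) with f_δ(y) → δ as y → ±∞; moreover f_δ → f_c uniformly on ℝ as δ → 0⁺. Consequently the Rosenau–Hyman compacton u_c(x,t) = f_c(x + 3t) is the uniform limit of smooth positive travelling-wave solutions of the K(2,2) equation. -/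
open Set Filter

/-
Reparametrize by `dy = f dw`. Then `f d/dy` becomes `d/dw`, and the travelling-wave ODE turns
into `f'' = 3 f² - 2 f³ - C_δ f` in the variable `w`. It is solved by `f = δ + θ'` whenever `θ`
solves the Adler equation `θ' = a + b cos θ` with `a = 1 - 2 δ` and `b² = 1 - δ`; moreover
`y = δ w + θ(w)`. The heteroclinic solution `θ` is elementary, and `f = 1 - δ + √(1 - δ) cos θ`
is within `2 δ` of `1 + cos θ`, the compacton evaluated at `θ`.

For the uniform limit, `y` and `θ` differ by `δ |w|`, while `θ'(w) ≤ 1 / |w|`. For `|w| ≤ 1 / √δ`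
the compacton, being 1-Lipschitz, takes nearby values at `y` and `θ`; for larger `|w|` it is
`O(√δ)` at `y`, and so is `f`.
-/

section Compacton

/-- The Rosenau–Hyman compacton profile `f_c`. -/
noncomputable def compacton (y : ℝ) : ℝ :=
  if |y| ≤ Real.pi then 2 * Real.cos (y / 2) ^ 2 else 0

theorem compacton_eq_one_add_cos_min (y : ℝ) :
    compacton y = 1 + Real.cos (min |y| Real.pi) := by
  unfold compacton
  split_ifs with h
  · rw [min_eq_left h, Real.cos_abs, Real.cos_sq]
    ring_nf
  · rw [min_eq_right (not_le.1 h).le, Real.cos_pi]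
    ring

theorem compacton_of_abs_le_pi {y : ℝ} (hy : |y| ≤ Real.pi) : compacton y = 1 + Real.cos y := by
  rw [compacton_eq_one_add_cos_min, min_eq_left hy, Real.cos_abs]

theorem compacton_nonneg (y : ℝ) : 0 ≤ compacton y := by
  rw [compacton_eq_one_add_cos_min]
  linarith [Real.neg_one_le_cos (min |y| Real.pi)]

theorem compacton_le_compacton_of_abs_le {x y : ℝ} (h : |x| ≤ |y|) :
    compacton y ≤ compacton x := by
  rw [compacton_eq_one_add_cos_min, compacton_eq_one_add_cos_min]
  gcongr 1 + ?_
  exact Real.cos_le_cos_of_nonneg_of_le_pi (le_min (abs_nonneg x) Real.pi_pos.le)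
    (min_le_right _ _) (min_le_min_right _ h)

theorem abs_compacton_sub_compacton_le (x y : ℝ) : |compacton x - compacton y| ≤ |x - y| := by
  rw [compacton_eq_one_add_cos_min, compacton_eq_one_add_cos_min, add_sub_add_left_eq_sub]
  calc |Real.cos (min |x| Real.pi) - Real.cos (min |y| Real.pi)|
      ≤ |min |x| Real.pi - min |y| Real.pi| := Real.abs_cos_sub_cos_le _ _
    _ ≤ max |(|x| - |y|)| |Real.pi - Real.pi| := abs_min_sub_min_le_max _ _ _ _
    _ = |(|x| - |y|)| := by rw [sub_self, abs_zero, max_eq_left (abs_nonneg _)]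
    _ ≤ |x - y| := abs_abs_sub_abs_le _ _

end Compacton

section Tanh

theorem hasDerivAt_tanh (x : ℝ) : HasDerivAt Real.tanh (1 - Real.tanh x ^ 2) x := by
  have hcosh : Real.cosh x ≠ 0 := (Real.cosh_pos x).ne'
  rw [funext Real.tanh_eq_sinh_div_cosh]
  convert! (Real.hasDerivAt_sinh x).div (Real.hasDerivAt_cosh x) hcosh using 1
  field_simp

theorem contDiff_tanh {n : WithTop ℕ∞} : ContDiff ℝ n Real.tanh := by
  rw [funext Real.tanh_eq_sinh_div_cosh]
  exact Real.contDiff_sinh.div Real.contDiff_cosh fun x => (Real.cosh_pos x).ne'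

theorem tanh_nonneg {x : ℝ} (hx : 0 ≤ x) : 0 ≤ Real.tanh x := by
  rw [Real.tanh_eq_sinh_div_cosh]
  exact div_nonneg (Real.sinh_nonneg_iff.2 hx) (Real.cosh_pos x).le

theorem mul_one_sub_tanh_sq_le_tanh {x : ℝ} (hx : 0 ≤ x) :
    x * (1 - Real.tanh x ^ 2) ≤ Real.tanh x := by
  have hcosh := Real.cosh_pos x
  have sech_sq : 1 - Real.tanh x ^ 2 = 1 / Real.cosh x ^ 2 := by
    rw [Real.tanh_eq_sinh_div_cosh]
    field_simp
    exact Real.cosh_sq_sub_sinh_sq x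
  have x_le : x ≤ Real.sinh x * Real.cosh x :=
    (Real.self_le_sinh_iff.2 hx).trans
      (le_mul_of_one_le_right (Real.sinh_nonneg_iff.2 hx) (Real.one_le_cosh x))
  rw [sech_sq, Real.tanh_eq_sinh_div_cosh, mul_one_div, div_le_div_iff₀ (by positivity) hcosh]
  nlinarith

end Tanh

section AdlerEquation

variable {a b : ℝ}

/-- The factor `κ` in the solution `tan (θ / 2) = κ tanh (μ w)` of the Adler equation
`θ' = a + b cos θ`. -/
noncomputable def adlerSlope (a b : ℝ) : ℝ := √((b + a) / (b - a))

/-- The rate `μ` in the solution `tan (θ / 2) = κ tanh (μ w)` of the Adler equation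
`θ' = a + b cos θ`. -/
noncomputable def adlerRate (a b : ℝ) : ℝ := √(b ^ 2 - a ^ 2) / 2

/-- The solution of the Adler equation `θ' = a + b cos θ`, `|a| < b`, with `θ(0) = 0`: it joins two
consecutive equilibria. -/
noncomputable def adlerKink (a b w : ℝ) : ℝ :=
  2 * Real.arctan (adlerSlope a b * Real.tanh (adlerRate a b * w))

theorem adlerSlope_pos (hab : |a| < b) : 0 < adlerSlope a b := by
  obtain ⟨h₁, h₂⟩ := abs_lt.1 hab
  exact Real.sqrt_pos.2 (div_pos (by linarith) (by linarith))

theorem adlerRate_pos (hab : |a| < b) : 0 < adlerRate a b := by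
  have : a ^ 2 < b ^ 2 := sq_lt_sq.2 (hab.trans_le (le_abs_self b))
  exact half_pos (Real.sqrt_pos.2 (sub_pos.2 this))

theorem adlerSlope_sq_mul (hab : |a| < b) : adlerSlope a b ^ 2 * (b - a) = b + a := by
  obtain ⟨h₁, h₂⟩ := abs_lt.1 hab
  have hsub : 0 < b - a := by linarith
  rw [adlerSlope, Real.sq_sqrt (div_nonneg (by linarith) hsub.le), div_mul_cancel₀ _ hsub.ne']

theorem two_mul_adlerSlope_mul_adlerRate (hab : |a| < b) :
    2 * adlerSlope a b * adlerRate a b = b + a := by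
  obtain ⟨h₁, h₂⟩ := abs_lt.1 hab
  have hadd : 0 < b + a := by linarith
  have hsub : b - a ≠ 0 := by linarith
  calc 2 * adlerSlope a b * adlerRate a b
      = √((b + a) / (b - a)) * √(b ^ 2 - a ^ 2) := by unfold adlerSlope adlerRate; ring
    _ = √((b + a) ^ 2) := by
      rw [← Real.sqrt_mul (div_nonneg hadd.le (by linarith))]
      congr 1
      field_simp
      ring
    _ = b + a := Real.sqrt_sq hadd.le

theorem abs_adlerKink_lt_pi (a b w : ℝ) : |adlerKink a b w| < Real.pi := by
  obtain ⟨h₁, h₂⟩ :=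
    Real.arctan_mem_Ioo (adlerSlope a b * Real.tanh (adlerRate a b * w))
  rw [adlerKink, abs_lt]
  constructor <;> linarith

theorem contDiff_adlerKink {n : WithTop ℕ∞} : ContDiff ℝ n (adlerKink a b) :=
  contDiff_const.mul <| Real.contDiff_arctan.comp <|
    contDiff_const.mul <| contDiff_tanh.comp (contDiff_const.mul contDiff_id)

theorem adlerKink_neg (a b w : ℝ) : adlerKink a b (-w) = -adlerKink a b w := by
  simp only [adlerKink, mul_neg, Real.tanh_neg, Real.arctan_neg]

theorem mul_adlerKink_nonneg (a b w : ℝ) : 0 ≤ w * adlerKink a b w := by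
  wlog hw : 0 ≤ w generalizing w
  · simpa only [adlerKink_neg, neg_mul_neg] using this (-w) (by linarith)
  have hslope : 0 ≤ adlerSlope a b := Real.sqrt_nonneg _
  have hrate : 0 ≤ adlerRate a b := div_nonneg (Real.sqrt_nonneg _) zero_le_two
  have harctan := Real.arctan_nonneg.2 (mul_nonneg hslope (tanh_nonneg (mul_nonneg hrate hw)))
  exact mul_nonneg hw (mul_nonneg zero_le_two harctan)

theorem add_mul_cos_adlerKink (hab : |a| < b) (w : ℝ) :
    a + b * Real.cos (adlerKink a b w) =
      2 * adlerSlope a b * adlerRate a b * (1 - Real.tanh (adlerRate a b * w) ^ 2) /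
        (1 + (adlerSlope a b * Real.tanh (adlerRate a b * w)) ^ 2) := by
  rw [two_mul_adlerSlope_mul_adlerRate hab, adlerKink, Real.cos_two_mul, Real.cos_sq_arctan]
  field_simp
  linear_combination (-Real.tanh (adlerRate a b * w) ^ 2) * adlerSlope_sq_mul hab

theorem hasDerivAt_adlerKink (hab : |a| < b) (w : ℝ) :
    HasDerivAt (adlerKink a b) (a + b * Real.cos (adlerKink a b w)) w := by
  have htanh := (hasDerivAt_tanh (adlerRate a b * w)).comp w
    ((hasDerivAt_id w).const_mul (adlerRate a b))
  convert! (htanh.const_mul (adlerSlope a b)).arctan.const_mul 2 using 1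
  rw [add_mul_cos_adlerKink hab]
  simp only [Function.comp_apply]
  ring

theorem add_mul_cos_adlerKink_pos (hab : |a| < b) (w : ℝ) :
    0 < a + b * Real.cos (adlerKink a b w) := by
  rw [add_mul_cos_adlerKink hab]
  have hslope := adlerSlope_pos hab
  have hrate := adlerRate_pos hab
  have hsech := sub_pos.2 (Real.tanh_sq_lt_one (adlerRate a b * w))
  positivity

theorem abs_mul_add_mul_cos_adlerKink_le_one (hab : |a| < b) (w : ℝ) :
    |w| * (a + b * Real.cos (adlerKink a b w)) ≤ 1 := by
  wlog hw : 0 ≤ w generalizing w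
  · simpa only [adlerKink_neg, abs_neg, Real.cos_neg] using this (-w) (by linarith)
  rw [add_mul_cos_adlerKink hab, abs_of_nonneg hw]
  set κ := adlerSlope a b
  set x := adlerRate a b * w with hx
  have hκ : 0 < κ := adlerSlope_pos hab
  have hsech : x * (1 - Real.tanh x ^ 2) ≤ Real.tanh x :=
    mul_one_sub_tanh_sq_le_tanh (mul_nonneg (adlerRate_pos hab).le hw)
  rw [mul_div_assoc', div_le_one (by positivity)]
  calc w * (2 * κ * adlerRate a b * (1 - Real.tanh x ^ 2))
      = 2 * κ * (x * (1 - Real.tanh x ^ 2)) := by rw [hx]; ring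
    _ ≤ 2 * κ * Real.tanh x := by gcongr
    _ ≤ 1 + (κ * Real.tanh x) ^ 2 := by nlinarith [sq_nonneg (1 - κ * Real.tanh x)]

theorem tendsto_add_mul_cos_adlerKink (hab : |a| < b) {l : Filter ℝ}
    (hl : Tendsto (fun w : ℝ => |w|) l atTop) :
    Tendsto (fun w => a + b * Real.cos (adlerKink a b w)) l (nhds 0) := by
  refine squeeze_zero' (.of_forall fun w => (add_mul_cos_adlerKink_pos hab w).le) ?_
    (tendsto_inv_atTop_zero.comp hl)
  filter_upwards [hl.eventually_gt_atTop 0] with w hw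
  rw [Function.comp_apply, ← one_div, le_div_iff₀' hw]
  exact abs_mul_add_mul_cos_adlerKink_le_one hab w

theorem hasDerivAt_adler_velocity {θ : ℝ → ℝ} {w : ℝ}
    (hθ : HasDerivAt θ (a + b * Real.cos (θ w)) w) :
    HasDerivAt (fun v => a + b * Real.cos (θ v))
      (-b * Real.sin (θ w) * (a + b * Real.cos (θ w))) w := by
  convert! (hθ.cos.const_mul b).const_add a using 1
  ring

/-- The velocity `p = θ'` satisfies the Gardner equation `p'' = (b² - a²) p + 3 a p² - 2 p³`. -/
theorem hasDerivAt_adler_acceleration {θ : ℝ → ℝ} {w : ℝ}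
    (hθ : HasDerivAt θ (a + b * Real.cos (θ w)) w) :
    HasDerivAt (fun v => -b * Real.sin (θ v) * (a + b * Real.cos (θ v)))
      ((b ^ 2 - a ^ 2) * (a + b * Real.cos (θ w)) + 3 * a * (a + b * Real.cos (θ w)) ^ 2 -
        2 * (a + b * Real.cos (θ w)) ^ 3) w := by
  convert! (hθ.sin.const_mul (-b)).mul (hasDerivAt_adler_velocity hθ) using 1
  linear_combination (-b ^ 2 * (a + b * Real.cos (θ w))) * Real.sin_sq_add_cos_sq (θ w)

end AdlerEquation

section Reparametrization

variable {e : ℝ ≃o ℝ}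

theorem hasDerivAt_comp_orderIso_symm {h : ℝ → ℝ} {e' h' y : ℝ}
    (he : HasDerivAt e e' (e.symm y)) (he₀ : e' ≠ 0) (hh : HasDerivAt h h' (e.symm y)) :
    HasDerivAt (h ∘ e.symm) (h' / e') y :=
  hh.comp y <| .of_local_left_inverse e.symm.continuous.continuousAt he he₀
    (.of_forall e.apply_symm_apply)

theorem contDiff_comp_orderIso_symm {n : WithTop ℕ∞} {e' h : ℝ → ℝ}
    (he : ∀ w, HasDerivAt e (e' w) w) (he₀ : ∀ w, e' w ≠ 0) (hen : ContDiff ℝ n e)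
    (hh : ContDiff ℝ n h) : ContDiff ℝ n (h ∘ e.symm) :=
  hh.comp <| e.toHomeomorph.contDiff_symm_deriv he₀ he hen

theorem deriv_mul_deriv_comp_orderIso_symm {g g' : ℝ → ℝ} {g'' y : ℝ}
    (he : ∀ w, HasDerivAt e (g w) w) (hg₀ : ∀ w, g w ≠ 0) (hg : ∀ w, HasDerivAt g (g' w) w)
    (hg' : HasDerivAt g' g'' (e.symm y)) :
    deriv (fun z => (g ∘ e.symm) z * deriv (g ∘ e.symm) z) y = g'' / g (e.symm y) := by
  have flux : (fun z => (g ∘ e.symm) z * deriv (g ∘ e.symm) z) = g' ∘ e.symm := by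
    funext z
    rw [(hasDerivAt_comp_orderIso_symm (he _) (hg₀ _) (hg (e.symm z))).deriv]
    exact mul_div_cancel₀ _ (hg₀ _)
  rw [flux, (hasDerivAt_comp_orderIso_symm (he _) (hg₀ _) hg').deriv]

end Reparametrization

section Wave

variable {δ : ℝ}

/-- The solution `θ` of the Adler equation from which the wave of asymptotic height `δ` is built. -/
noncomputable def waveAngle (δ : ℝ) : ℝ → ℝ := adlerKink (1 - 2 * δ) √(1 - δ)

/-- The travelling-wave coordinate `y` as a function of the parameter `w`. -/
noncomputable def waveCoordinate (δ w : ℝ) : ℝ := δ * w + waveAngle δ w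

/-- The profile `f_δ` as a function of the parameter `w`: it equals `dy/dw = δ + θ'`, with `θ'`
written out by the Adler equation. -/
noncomputable def parametricProfile (δ w : ℝ) : ℝ :=
  δ + (1 - 2 * δ + √(1 - δ) * Real.cos (waveAngle δ w))

/-- The profile `f_δ` as a function of the travelling-wave coordinate `y`; for `0 < δ < 3 / 4` the
function `invFun` used here is a genuine inverse. -/
noncomputable def waveProfile (δ y : ℝ) : ℝ :=
  parametricProfile δ (Function.invFun (waveCoordinate δ) y)

theorem abs_one_sub_two_mul_lt_sqrt (hδ : δ ∈ Ioo 0 (3 / 4)) : |1 - 2 * δ| < √(1 - δ) := by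
  obtain ⟨hδ₀, hδ₁⟩ := hδ
  refine Real.lt_sqrt_of_sq_lt ?_
  rw [sq_abs]
  nlinarith

theorem abs_waveAngle_lt_pi (δ w : ℝ) : |waveAngle δ w| < Real.pi :=
  abs_adlerKink_lt_pi _ _ w

theorem contDiff_waveCoordinate {n : WithTop ℕ∞} : ContDiff ℝ n (waveCoordinate δ) :=
  (contDiff_const.mul contDiff_id).add contDiff_adlerKink

theorem contDiff_parametricProfile {n : WithTop ℕ∞} : ContDiff ℝ n (parametricProfile δ) :=
  contDiff_const.add <| contDiff_const.add <| contDiff_const.mul contDiff_adlerKink.cos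

theorem lt_parametricProfile (hδ : δ ∈ Ioo 0 (3 / 4)) (w : ℝ) : δ < parametricProfile δ w :=
  lt_add_of_pos_right δ (add_mul_cos_adlerKink_pos (abs_one_sub_two_mul_lt_sqrt hδ) w)

theorem parametricProfile_pos (hδ : δ ∈ Ioo 0 (3 / 4)) (w : ℝ) : 0 < parametricProfile δ w :=
  hδ.1.trans (lt_parametricProfile hδ w)

theorem tendsto_parametricProfile (hδ : δ ∈ Ioo 0 (3 / 4)) {l : Filter ℝ}
    (hl : Tendsto (fun w : ℝ => |w|) l atTop) :
    Tendsto (parametricProfile δ) l (nhds δ) := by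
  simpa only [add_zero] using!
    (tendsto_add_mul_cos_adlerKink (abs_one_sub_two_mul_lt_sqrt hδ) hl).const_add δ

theorem hasDerivAt_waveCoordinate (hδ : δ ∈ Ioo 0 (3 / 4)) (w : ℝ) :
    HasDerivAt (waveCoordinate δ) (parametricProfile δ w) w :=
  (hasDerivAt_const_mul δ).add (hasDerivAt_adlerKink (abs_one_sub_two_mul_lt_sqrt hδ) w)

theorem strictMono_waveCoordinate (hδ : δ ∈ Ioo 0 (3 / 4)) : StrictMono (waveCoordinate δ) :=
  strictMono_of_hasDerivAt_pos (hasDerivAt_waveCoordinate hδ) (parametricProfile_pos hδ)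

theorem surjective_waveCoordinate (hδ : 0 < δ) : Function.Surjective (waveCoordinate δ) := by
  have hangle (w : ℝ) := abs_lt.1 (abs_waveAngle_lt_pi δ w)
  refine contDiff_waveCoordinate (n := 0).continuous.surjective ?_ ?_
  · exact tendsto_atTop_add_right_of_le _ (-Real.pi) (tendsto_id.const_mul_atTop hδ)
      fun w => (hangle w).1.le
  · exact tendsto_atBot_add_right_of_ge _ Real.pi (tendsto_id.const_mul_atBot hδ)
      fun w => (hangle w).2.le

/-- The change of variable `w ↦ y`, with inverse the `invFun` that defines `waveProfile`. -/
noncomputable def waveCoordinateIso (hδ : δ ∈ Ioo 0 (3 / 4)) : ℝ ≃o ℝ :=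
  (strictMono_waveCoordinate hδ).orderIsoOfRightInverse _ (Function.invFun (waveCoordinate δ))
    (Function.rightInverse_invFun (surjective_waveCoordinate hδ.1))

theorem waveProfile_eq_comp (hδ : δ ∈ Ioo 0 (3 / 4)) :
    waveProfile δ = parametricProfile δ ∘ (waveCoordinateIso hδ).symm := rfl

theorem waveProfile_pos (hδ : δ ∈ Ioo 0 (3 / 4)) (y : ℝ) : 0 < waveProfile δ y :=
  parametricProfile_pos hδ _

theorem analyticAt_waveProfile (hδ : δ ∈ Ioo 0 (3 / 4)) (y : ℝ) :
    AnalyticAt ℝ (waveProfile δ) y := by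
  rw [waveProfile_eq_comp hδ]
  exact (contDiff_comp_orderIso_symm (hasDerivAt_waveCoordinate hδ)
    (fun w => (parametricProfile_pos hδ w).ne') contDiff_waveCoordinate
    contDiff_parametricProfile).contDiffAt.analyticAt

theorem tendsto_waveProfile_atTop (hδ : δ ∈ Ioo 0 (3 / 4)) :
    Tendsto (waveProfile δ) atTop (nhds δ) :=
  (tendsto_parametricProfile hδ tendsto_abs_atTop_atTop).comp
    (waveCoordinateIso hδ).symm.tendsto_atTop

theorem tendsto_waveProfile_atBot (hδ : δ ∈ Ioo 0 (3 / 4)) :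
    Tendsto (waveProfile δ) atBot (nhds δ) :=
  (tendsto_parametricProfile hδ tendsto_abs_atBot_atTop).comp
    (waveCoordinateIso hδ).symm.tendsto_atBot

theorem waveProfile_ode (hδ : δ ∈ Ioo 0 (3 / 4)) (y : ℝ) :
    3 * waveProfile δ y = deriv (fun z => waveProfile δ z * deriv (waveProfile δ) z) y +
      2 * waveProfile δ y ^ 2 + (3 * δ - 2 * δ ^ 2) := by
  have hangle := hasDerivAt_adlerKink (abs_one_sub_two_mul_lt_sqrt hδ)
  have hpos := parametricProfile_pos hδ
  have hsqrt : √(1 - δ) ^ 2 = 1 - δ := Real.sq_sqrt (by linarith [hδ.2])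
  rw [waveProfile_eq_comp hδ, deriv_mul_deriv_comp_orderIso_symm (hasDerivAt_waveCoordinate hδ)
    (fun w => (hpos w).ne') (fun w => (hasDerivAt_adler_velocity (hangle w)).const_add δ)
    (hasDerivAt_adler_acceleration (hangle _)), hsqrt, Function.comp_apply]
  set w := (waveCoordinateIso hδ).symm y
  have hvelocity : 1 - 2 * δ + √(1 - δ) * Real.cos (adlerKink (1 - 2 * δ) √(1 - δ) w) =
      parametricProfile δ w - δ := (add_sub_cancel_left _ _).symm
  rw [hvelocity]
  have := (hpos w).ne'
  field_simp
  ring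

theorem abs_parametricProfile_sub_compacton_waveAngle_le (hδ : δ ∈ Icc 0 1) (w : ℝ) :
    |parametricProfile δ w - compacton (waveAngle δ w)| ≤ 2 * δ := by
  obtain ⟨hδ₀, hδ₁⟩ := hδ
  have hsqrt_le : √(1 - δ) ≤ 1 := Real.sqrt_le_one.2 (by linarith)
  have hle_sqrt : 1 - δ ≤ √(1 - δ) := Real.le_sqrt_of_sq_le (by nlinarith)
  rw [compacton_of_abs_le_pi (abs_waveAngle_lt_pi δ w).le]
  calc |parametricProfile δ w - (1 + Real.cos (waveAngle δ w))|
      = |δ + (1 - √(1 - δ)) * Real.cos (waveAngle δ w)| := by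
        rw [← abs_neg, parametricProfile]
        ring_nf
    _ ≤ |δ| + |1 - √(1 - δ)| * |Real.cos (waveAngle δ w)| := by
        rw [← abs_mul]
        exact abs_add_le _ _
    _ ≤ δ + δ * 1 := by
        rw [abs_of_nonneg hδ₀, abs_of_nonneg (sub_nonneg.2 hsqrt_le)]
        gcongr
        · linarith
        · exact Real.abs_cos_le_one _
    _ = 2 * δ := by ring

theorem abs_compacton_waveAngle_sub_compacton_waveCoordinate_le (hδ : 0 ≤ δ) (w : ℝ) :
    |compacton (waveAngle δ w) - compacton (waveCoordinate δ w)| ≤ δ * |w| :=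
  calc |compacton (waveAngle δ w) - compacton (waveCoordinate δ w)|
      ≤ |waveAngle δ w - waveCoordinate δ w| := abs_compacton_sub_compacton_le _ _
    _ = δ * |w| := by
      rw [waveCoordinate, sub_add_cancel_right, abs_neg, abs_mul, abs_of_nonneg hδ]

theorem abs_waveAngle_le_abs_waveCoordinate (hδ : 0 ≤ δ) (w : ℝ) :
    |waveAngle δ w| ≤ |waveCoordinate δ w| := by
  have hsign : 0 ≤ δ * (w * waveAngle δ w) := mul_nonneg hδ (mul_adlerKink_nonneg _ _ w)
  rw [← sq_le_sq, waveCoordinate]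
  nlinarith [sq_nonneg (δ * w)]

theorem abs_mul_parametricProfile_sub_le_one (hδ : δ ∈ Ioo 0 (3 / 4)) (w : ℝ) :
    |w| * (parametricProfile δ w - δ) ≤ 1 := by
  rw [parametricProfile, add_sub_cancel_left]
  exact abs_mul_add_mul_cos_adlerKink_le_one (abs_one_sub_two_mul_lt_sqrt hδ) w

theorem abs_parametricProfile_sub_compacton_le (hδ : δ ∈ Ioo 0 (3 / 4)) (w : ℝ) :
    |parametricProfile δ w - compacton (waveCoordinate δ w)| ≤ 4 * √δ := by
  have hδ₀ : 0 ≤ δ := hδ.1.le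
  have hδ₁ : δ ≤ 1 := by linarith [hδ.2]
  have hsq : √δ * √δ = δ := Real.mul_self_sqrt hδ₀
  have hle : δ ≤ √δ := Real.le_sqrt_of_sq_le (by nlinarith)
  have hprofile := abs_parametricProfile_sub_compacton_waveAngle_le ⟨hδ₀, hδ₁⟩ w
  rcases le_total (√δ * |w|) 1 with hw | hw
  · have hcompacton := calc
      |compacton (waveAngle δ w) - compacton (waveCoordinate δ w)|
        ≤ δ * |w| := abs_compacton_waveAngle_sub_compacton_waveCoordinate_le hδ₀ w
      _ = √δ * (√δ * |w|) := by rw [← mul_assoc, hsq]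
      _ ≤ √δ := mul_le_of_le_one_right (Real.sqrt_nonneg δ) hw
    linarith [abs_sub_le (parametricProfile δ w) (compacton (waveAngle δ w))
      (compacton (waveCoordinate δ w))]
  · have hprofile_le := calc
      parametricProfile δ w - δ
        ≤ √δ * |w| * (parametricProfile δ w - δ) :=
          le_mul_of_one_le_left (sub_pos.2 (lt_parametricProfile hδ w)).le hw
      _ = √δ * (|w| * (parametricProfile δ w - δ)) := mul_assoc _ _ _
      _ ≤ √δ := mul_le_of_le_one_right (Real.sqrt_nonneg δ)
          (abs_mul_parametricProfile_sub_le_one hδ w)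
    have hcompacton_le : compacton (waveCoordinate δ w) ≤ compacton (waveAngle δ w) :=
      compacton_le_compacton_of_abs_le (abs_waveAngle_le_abs_waveCoordinate hδ₀ w)
    have hcompacton_nonneg := compacton_nonneg (waveCoordinate δ w)
    have hprofile_pos := parametricProfile_pos hδ w
    obtain ⟨hlower, -⟩ := abs_le.1 hprofile
    exact abs_le.2 ⟨by linarith, by linarith⟩

theorem abs_waveProfile_sub_compacton_le (hδ : δ ∈ Ioo 0 (3 / 4)) (y : ℝ) :
    |waveProfile δ y - compacton y| ≤ 4 * √δ := by
  have hy : waveCoordinate δ ((waveCoordinateIso hδ).symm y) = y :=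
    (waveCoordinateIso hδ).apply_symm_apply y
  simpa only [waveProfile_eq_comp hδ, Function.comp_apply, hy] using
    abs_parametricProfile_sub_compacton_le hδ ((waveCoordinateIso hδ).symm y)

theorem tendstoUniformly_waveProfile :
    TendstoUniformly waveProfile compacton (nhdsWithin 0 (Ioi 0)) := by
  have hbound : Tendsto (fun δ : ℝ => 4 * √δ) (nhdsWithin 0 (Ioi 0)) (nhds 0) := by
    have hcont : Continuous fun δ : ℝ => 4 * √δ := by fun_prop
    simpa only [Real.sqrt_zero, mul_zero] using (hcont.tendsto 0).mono_left nhdsWithin_le_nhds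
  rw [Metric.tendstoUniformly_iff]
  intro ε hε
  filter_upwards [hbound.eventually_lt_const hε, Ioo_mem_nhdsGT (show (0 : ℝ) < 3 / 4 by norm_num)]
    with δ hδε hδ y
  rw [dist_comm, Real.dist_eq]
  exact (abs_waveProfile_sub_compacton_le hδ y).trans_lt hδε

end Wave

/-- for all small `δ > 0`, the integrated travelling-wave ODE
`3f = (f f′)′ + 2f² + C_δ`, `C_δ = 3δ − 2δ²`, of the K(2,2) equation has a
strictly positive real-analytic solution `f_δ` with `f_δ(±∞) = δ`, and
`f_δ → f_c` uniformly on ℝ as `δ → 0⁺`: the Rosenau–Hyman compacton profile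
is the uniform limit of smooth positive travelling-wave profiles. -/
theorem stmt14
    (fc : ℝ → ℝ)
    (hfc : ∀ y : ℝ, fc y = if |y| ≤ Real.pi then 2 * Real.cos (y / 2) ^ 2 else 0) :
    ∃ δ₀ > (0:ℝ), ∃ F : ℝ → ℝ → ℝ,
      (∀ δ ∈ Ioo (0:ℝ) δ₀,
        (∀ y : ℝ, 0 < F δ y) ∧
        (∀ y : ℝ, AnalyticAt ℝ (F δ) y) ∧
        (∀ y : ℝ, 3 * F δ y =
          deriv (fun w => F δ w * deriv (F δ) w) y + 2 * (F δ y) ^ 2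
            + (3 * δ - 2 * δ ^ 2)) ∧
        Tendsto (F δ) atTop (nhds δ) ∧ Tendsto (F δ) atBot (nhds δ)) ∧
      TendstoUniformly F fc (nhdsWithin 0 (Ioi 0)) := by
  obtain rfl : fc = compacton := funext hfc
  refine ⟨3 / 4, by norm_num, waveProfile, fun δ hδ => ?_, tendstoUniformly_waveProfile⟩
  exact ⟨waveProfile_pos hδ, analyticAt_waveProfile hδ, waveProfile_ode hδ,
    tendsto_waveProfile_atTop hδ, tendsto_waveProfile_atBot hδ⟩
end

section
/- Fix an integer m ≥ 0 and a real λ ≠ 0, and define f_λ(y) := (e^{−y/λ^{2m+2}} − 1)/(e^{−y/λ^{2m+2}} + 1). Then: (i) f_λ is real analytic and satisfies λ^{2m+2} f_λ′(y) = −(1/2)(1 − f_λ(y)²) for all y ∈ ℝ; (ii) the travelling wave u(x,t) := f_λ(x − λt) is a classical solution of the (2m+2)-th-order-in-time NDE ∂_t^{2m+2} u = ∂_x^{2m}(u u_x) on ℝ × ℝ; (iii) for every y ≠ 0, f_λ(y) → −sign(y) as λ → 0⁺, i.e. the smooth travelling waves converge pointwise (away from the jump) to the stationary shock S₋(y) =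 −sign(y). -/
open Set Filter

/-! For a wave `u(x, t) = f(x - λt)` the equation `∂_t^{n+2} u = ∂_x^n (u u_x)` becomes
`(-λ)^{n+2} f^{(n+2)} = (f f')^{(n)}`, so it suffices that `(-λ)^{n+2} f'' = f f'`. For even `n`
this is the derivative of the Riccati equation `λ^{n+2} f' = -(1 - f²)/2`, whose solution `f_λ` is
`z ↦ 2 σ(z) - 1`, with `σ` the logistic sigmoid, evaluated at `z = -y / λ^{n+2}`. The ODE and the
limit `λ → 0⁺` then follow from `σ' = σ(1 - σ)` and from the limits of `σ` at `±∞`. -/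

open Topology

section TravelingWave

variable {𝕜 : Type*} [NontriviallyNormedField 𝕜]

theorem iteratedDeriv_comp_const_sub_mul {E : Type*} [NormedAddCommGroup E] [NormedSpace 𝕜 E]
    {n : ℕ} {f : 𝕜 → E} (hf : ContDiff 𝕜 n f) (a c : 𝕜) :
    iteratedDeriv n (fun s => f (a - c * s)) =
      fun s => (-c) ^ n • iteratedDeriv n f (a - c * s) := by
  have hshift : ContDiff 𝕜 n fun z => f (a + z) := hf.comp (contDiff_const.add contDiff_id)
  simpa only [neg_mul, ← sub_eq_add_neg, iteratedDeriv_comp_const_add] using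
    iteratedDeriv_comp_const_smul hshift (-c)

theorem mul_deriv_deriv_of_riccati {f : 𝕜 → 𝕜} {a b c : 𝕜} (hf : Differentiable 𝕜 f)
    (hriccati : ∀ y, c * deriv f y = a * f y ^ 2 + b) (y : 𝕜) :
    c * deriv (deriv f) y = 2 * a * f y * deriv f y := by
  have hderiv : HasDerivAt (fun z => a * f z ^ 2 + b) (a * (2 * f y * deriv f y)) y := by
    simpa using (((hf y).hasDerivAt.fun_pow 2).const_mul a).add_const b
  calc c * deriv (deriv f) y = deriv (fun z => c * deriv f z) y := (deriv_const_mul_field c).symm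
    _ = a * (2 * f y * deriv f y) := by rw [funext hriccati, hderiv.deriv]
    _ = 2 * a * f y * deriv f y := by ring

/-- `u` satisfies the nonlinear dispersion equation `∂_t^{n+2} u = ∂_x^n (u u_x)` at every point;
the space variable is the first argument of `u`, the time variable the second. Regularity of `u` is
not part of the notion. -/
def SolvesNonlinearDispersion (n : ℕ) (u : 𝕜 → 𝕜 → 𝕜) : Prop :=
  ∀ x t, iteratedDeriv (n + 2) (fun s => u x s) t =
    iteratedDeriv n (fun y => u y t * deriv (fun z => u z t) y) x

theorem solvesNonlinearDispersion_travelingWave {n : ℕ} {f : 𝕜 → 𝕜} {c : 𝕜}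
    (hf : ContDiff 𝕜 (n + 2 : ℕ) f)
    (hode : ∀ y, (-c) ^ (n + 2) * deriv (deriv f) y = f y * deriv f y) :
    SolvesNonlinearDispersion n fun x t => f (x - c * t) := by
  intro x t
  calc iteratedDeriv (n + 2) (fun s => f (x - c * s)) t
      = (-c) ^ (n + 2) * iteratedDeriv (n + 2) f (x - c * t) := by
        simp only [iteratedDeriv_comp_const_sub_mul hf, smul_eq_mul]
    _ = iteratedDeriv n (fun y => (-c) ^ (n + 2) * deriv (deriv f) y) (x - c * t) := by
        rw [iteratedDeriv_const_mul_field, iteratedDeriv_succ', iteratedDeriv_succ']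
    _ = iteratedDeriv n (fun y => f y * deriv f y) (x - c * t) := by rw [funext hode]
    _ = iteratedDeriv n (fun y => f (y - c * t) * deriv (fun z => f (z - c * t)) y) x := by
        simp only [deriv_comp_sub_const]
        rw [iteratedDeriv_comp_sub_const n fun y => f y * deriv f y]

end TravelingWave

/-- The smoothed stationary shock of width `c`; the profile `f_λ` of the travelling wave with
speed `λ` is `shockProfile (λ ^ (2 * m + 2))`. It is written with the logistic sigmoid, whose
calculus Mathlib provides; `shockProfile_eq_exp` recovers the formula with exponentials. -/
noncomputable def shockProfile (c y : ℝ) : ℝ := 2 * Real.sigmoid (-y / c) - 1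

section ShockProfile

variable (c y : ℝ)

theorem shockProfile_eq_exp :
    shockProfile c y = (Real.exp (-y / c) - 1) / (Real.exp (-y / c) + 1) := by
  rw [shockProfile, Real.sigmoid_def, Real.exp_neg]
  field_simp
  ring

theorem analyticAt_shockProfile : AnalyticAt ℝ (shockProfile c) y :=
  (analyticAt_const.mul (analyticAt_id.neg.div_const.sigmoid')).sub analyticAt_const

variable {c} in
theorem mul_deriv_shockProfile (hc : c ≠ 0) :
    c * deriv (shockProfile c) y = -(1 / 2) * (1 - shockProfile c y ^ 2) := by
  have hderiv : HasDerivAt (shockProfile c) (2 * (Real.sigmoid (-y / c) *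
      (1 - Real.sigmoid (-y / c)) * (-1 / c))) y :=
    (((Real.hasDerivAt_sigmoid _).comp y ((hasDerivAt_neg y).div_const c)).const_mul 2).sub_const 1
  rw [hderiv.deriv, shockProfile]
  field_simp
  ring

theorem tendsto_shockProfile_nhdsGT_zero :
    Tendsto (fun c => shockProfile c y) (𝓝[>] 0) (𝓝 (-Real.sign y)) := by
  suffices hsigmoid : Tendsto (fun c => Real.sigmoid (-y / c)) (𝓝[>] 0)
      (𝓝 ((1 - Real.sign y) / 2)) by
    have hlimit : 2 * ((1 - Real.sign y) / 2) - 1 = -Real.sign y := by ring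
    exact hlimit ▸ (hsigmoid.const_mul 2).sub_const 1
  simp only [div_eq_mul_inv (-y)]
  rcases lt_trichotomy y 0 with hneg | rfl | hpos
  · have harg : Tendsto (fun c : ℝ => -y * c⁻¹) (𝓝[>] 0) atTop :=
      tendsto_inv_nhdsGT_zero.const_mul_atTop (neg_pos.mpr hneg)
    simpa [Function.comp_def, Real.sign_of_neg hneg, one_add_one_eq_two] using
      Real.tendsto_sigmoid_atTop.comp harg
  · simp
  · have harg : Tendsto (fun c : ℝ => -y * c⁻¹) (𝓝[>] 0) atBot :=
      tendsto_inv_nhdsGT_zero.const_mul_atTop_of_neg (neg_neg_of_pos hpos)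
    simpa [Function.comp_def, Real.sign_of_pos hpos] using Real.tendsto_sigmoid_atBot.comp harg

end ShockProfile

theorem tendsto_pow_nhdsGT_zero {R : Type*} [Semiring R] [PartialOrder R] [IsStrictOrderedRing R]
    [TopologicalSpace R] [ContinuousMul R] {n : ℕ} (hn : n ≠ 0) :
    Tendsto (fun x : R => x ^ n) (𝓝[>] 0) (𝓝[>] 0) := by
  have hzero : Tendsto (fun x : R => x ^ n) (𝓝 0) (𝓝 0) := by
    simpa only [zero_pow hn] using (continuous_pow n).tendsto (0 : R)
  exact tendsto_nhdsWithin_iff.2 ⟨hzero.mono_left nhdsWithin_le_nhds,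
    eventually_mem_nhdsWithin.mono fun _ hx => pow_pos hx n⟩

/-- the explicit analytic travelling waves
`f_λ(y) = (e^{−y/λ^{2m+2}} − 1)/(e^{−y/λ^{2m+2}} + 1)` satisfy
`λ^{2m+2} f_λ′ = −(1/2)(1 − f_λ²)`, give classical solutions
`u(x,t) = f_λ(x − λt)` of `∂_t^{2m+2} u = ∂_x^{2m}(u u_x)`, and converge
pointwise (away from 0) to the stationary shock `S₋(y) = −sign y` as
`λ → 0⁺`. -/
theorem stmt15
    (m : ℕ) (lam : ℝ) (hlam : lam ≠ 0)
    (F : ℝ → ℝ → ℝ)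
    (hF : ∀ l y : ℝ, F l y =
      (Real.exp (-y / l ^ (2 * m + 2)) - 1) / (Real.exp (-y / l ^ (2 * m + 2)) + 1)) :
    (∀ y : ℝ, AnalyticAt ℝ (F lam) y) ∧
    (∀ y : ℝ, lam ^ (2 * m + 2) * deriv (F lam) y = -(1/2) * (1 - (F lam y) ^ 2)) ∧
    (∀ x t : ℝ,
      iteratedDeriv (2 * m + 2) (fun s => F lam (x - lam * s)) t =
        iteratedDeriv (2 * m)
          (fun y => F lam (y - lam * t) * deriv (fun z => F lam (z - lam * t)) y) x) ∧
    (∀ y : ℝ, y ≠ 0 →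
      Tendsto (fun l => F l y) (nhdsWithin 0 (Ioi 0)) (nhds (-Real.sign y))) := by
  have hprofile : F = fun l => shockProfile (l ^ (2 * m + 2)) := by
    funext l y
    rw [hF, shockProfile_eq_exp]
  subst hprofile
  have hanalytic := analyticAt_shockProfile (lam ^ (2 * m + 2))
  have hode : ∀ y, lam ^ (2 * m + 2) * deriv (shockProfile (lam ^ (2 * m + 2))) y =
      -(1 / 2) * (1 - shockProfile (lam ^ (2 * m + 2)) y ^ 2) :=
    fun y => mul_deriv_shockProfile y (pow_ne_zero _ hlam)
  refine ⟨hanalytic, hode, ?_, fun y _ => ?_⟩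
  · refine solvesNonlinearDispersion_travelingWave
      (contDiff_iff_contDiffAt.2 fun y => (hanalytic y).contDiffAt) fun y => ?_
    have hriccati := mul_deriv_deriv_of_riccati (a := 1 / 2) (b := -(1 / 2))
      (fun y => (hanalytic y).differentiableAt) (fun y => (hode y).trans (by ring)) y
    have heven : Even (2 * m + 2) := (even_two_mul m).add even_two
    rw [heven.neg_pow, hriccati]
    ring
  · exact (tendsto_shockProfile_nhdsGT_zero y).comp (tendsto_pow_nhdsGT_zero (by lia))
end

section
/- Let α := 415/2574 and a := 6!/13!. Then for every constant C ∈ ℝ the polynomial g(z) := C z + a z⁷ satisfies the seventh-order similarity equation (g g′)^{(6)}(z) = ((1+α)/7) z g′(z) − α g(z) for all z ∈ ℝ. -/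
open Set Filter

/-!
For `g = C z + a zⁿ⁺¹` the product `g g′` has only the powers `z`, `zⁿ⁺¹` and `z²ⁿ⁺¹`. When
`2 ≤ n`, taking `n` derivatives kills the first and lowers the other two to `z` and `zⁿ⁺¹`, so `g`
solves the similarity equation of order `n + 1` as soon as two coefficients agree: the one of
`zⁿ⁺¹` fixes `a = n! / (2n+1)!` and then the one of `z` fixes `α`.
-/

section

variable {𝕜 : Type*} [NontriviallyNormedField 𝕜] {n : ℕ}

lemma deriv_linear_add_pow (C a z : 𝕜) :
    deriv (fun w => C * w + a * w ^ (n + 1)) z = C + (n + 1) * a * z ^ n := by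
  have h : HasDerivAt (fun w => C * w + a * w ^ (n + 1))
      (C * 1 + a * ((n + 1 : ℕ) * z ^ n)) z :=
    ((hasDerivAt_id z).const_mul C).add ((hasDerivAt_pow (n + 1) z).const_mul a)
  rw [h.deriv]
  push_cast
  ring

lemma iteratedDeriv_const_mul_pow (k m : ℕ) (c z : 𝕜) :
    iteratedDeriv k (fun w => c * w ^ m) z = c * (m.descFactorial k * z ^ (m - k)) := by
  rw [iteratedDeriv_const_mul_field, iteratedDeriv_pow]

lemma iteratedDeriv_linear_add_pow_add_pow (hn : 2 ≤ n) (p q r z : 𝕜) :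
    iteratedDeriv n (fun w => p * w + q * w ^ (n + 1) + r * w ^ (2 * n + 1)) z =
      (n + 1).factorial * q * z + (2 * n + 1).descFactorial n * r * z ^ (n + 1) := by
  have linear_term : iteratedDeriv n (fun w => p * w) z = 0 := by
    simpa [Nat.descFactorial_of_lt hn] using iteratedDeriv_const_mul_pow n 1 p z
  have factorial_eq : (n + 1).descFactorial n = (n + 1).factorial := by
    simpa using Nat.factorial_mul_descFactorial n.le_succ
  rw [iteratedDeriv_fun_add (by fun_prop) (by fun_prop),
    iteratedDeriv_fun_add (by fun_prop) (by fun_prop), linear_term,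
    iteratedDeriv_const_mul_pow, iteratedDeriv_const_mul_pow, factorial_eq,
    show n + 1 - n = 1 by lia, show 2 * n + 1 - n = n + 1 by lia]
  ring

lemma iteratedDeriv_mul_deriv_linear_add_pow (hn : 2 ≤ n) (C a : 𝕜) {g : 𝕜 → 𝕜}
    (hg : ∀ z, g z = C * z + a * z ^ (n + 1)) (z : 𝕜) :
    iteratedDeriv n (fun w => g w * deriv g w) z =
      (n + 2).factorial * (C * a) * z +
        (2 * n + 1).descFactorial (n + 1) * a ^ 2 * z ^ (n + 1) := by
  obtain rfl : g = fun w => C * w + a * w ^ (n + 1) := funext hg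
  have product_expansion : (fun w => (C * w + a * w ^ (n + 1)) *
      deriv (fun w => C * w + a * w ^ (n + 1)) w) =
      fun w => C ^ 2 * w + (n + 2) * (C * a) * w ^ (n + 1) +
        (n + 1) * a ^ 2 * w ^ (2 * n + 1) := by
    funext w
    rw [deriv_linear_add_pow]
    ring
  rw [product_expansion, iteratedDeriv_linear_add_pow_add_pow hn, Nat.factorial_succ (n + 1),
    Nat.descFactorial_succ, show 2 * n + 1 - n = n + 1 by lia]
  push_cast
  ring

end

theorem stmt17_general {𝕜 : Type*} [NontriviallyNormedField 𝕜] [CharZero 𝕜] {n : ℕ}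
    (hn : 2 ≤ n) (C α a : 𝕜)
    (hα : α = (1 - (n + 1) * (n + 2).factorial * a) / n)
    (ha : a = (n.factorial : 𝕜) / ((2 * n + 1).factorial : 𝕜))
    (g : 𝕜 → 𝕜) (hg : ∀ z, g z = C * z + a * z ^ (n + 1)) (z : 𝕜) :
    iteratedDeriv n (fun w => g w * deriv g w) z =
      ((1 + α) / (n + 1)) * z * deriv g z - α * g z := by
  have n_ne_zero : (n : 𝕜) ≠ 0 := by
    exact_mod_cast (zero_lt_two.trans_le hn).ne'
  have n_add_one_ne_zero : (n + 1 : 𝕜) ≠ 0 := n.cast_add_one_ne_zero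
  have linear_coeff : (n + 2).factorial * a = (1 + α) / (n + 1) - α := by
    rw [hα]
    field_simp
    ring
  have top_coeff : (2 * n + 1).descFactorial (n + 1) * a = 1 := by
    have h := Nat.factorial_mul_descFactorial (show n + 1 ≤ 2 * n + 1 by lia)
    rw [show 2 * n + 1 - (n + 1) = n by lia] at h
    rw [ha, mul_div_assoc', div_eq_one_iff_eq (Nat.cast_ne_zero.mpr (Nat.factorial_ne_zero _)),
      mul_comm]
    exact_mod_cast h
  have deriv_g : deriv g z = C + (n + 1) * a * z ^ n := by
    rw [funext hg, deriv_linear_add_pow]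
  calc iteratedDeriv n (fun w => g w * deriv g w) z
    _ = ((n + 2).factorial * a) * (C * z) +
          ((2 * n + 1).descFactorial (n + 1) * a) * (a * z ^ (n + 1)) := by
      rw [iteratedDeriv_mul_deriv_linear_add_pow hn C a hg]
      ring
    _ = ((1 + α) / (n + 1) - α) * (C * z) + a * z ^ (n + 1) := by
      rw [linear_coeff, top_coeff, one_mul]
    _ = ((1 + α) / (n + 1)) * z * deriv g z - α * g z := by
      rw [deriv_g, hg]
      field_simp
      ring

/-- with `α = 415/2574` and `a = 6!/13!`, every polynomial
`g(z) = C z + a z⁷` solves the seventh-order similarity equation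
`(g g′)^{(6)} = ((1+α)/7) z g′ − α g` on all of ℝ. -/
theorem stmt17 (C α a : ℝ)
    (hα : α = 415 / 2574)
    (ha : a = (Nat.factorial 6 : ℝ) / (Nat.factorial 13 : ℝ))
    (g : ℝ → ℝ) (hgdef : ∀ z : ℝ, g z = C * z + a * z ^ 7) :
    ∀ z : ℝ, iteratedDeriv 6 (fun w => g w * deriv g w) z =
      ((1 + α) / 7) * z * deriv g z - α * g z := by
  simpa only [show ((6 : ℕ) + 1 : ℝ) = 7 by norm_num] using stmt17_general (n := 6)
    (by norm_num) C α a (by norm_num [hα, ha, Nat.factorial]) ha g hgdef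
end
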